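/- arXiv:math/0203167 — 3 statements merged into one kernel-verified Lean document; each statement's English description precedes it below -/
import Mathlib

section
/- For every n ≥ 2 and every nonzero integer k, Wada's representation of type (1) with parameter k is faithful: the group homomorphism φ_k : B_n → Aut(F_n) determined by sending each generator σ_i to the automorphism σ̂_i^{(k)} that maps x_i to x_i^k x_{i+1} x_i^{−k}, maps x_{i+1} to x_i, and fixes all other free generators, is injective. -/
/-- The defining relations of the braid group on `m + 1` strands (`m` generators
`σ_1, …, σ_m`, indexed here by `Fin m`): the commutation relations
`σ_i σ_j = σ_j σ_i` for `|i - j| > 1` and the braid relations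
`σ_i σ_{i+1} σ_i = σ_{i+1} σ_i σ_{i+1}`. -/
def braidRels (m : ℕ) : Set (FreeGroup (Fin m)) :=
  {r | (∃ i j : Fin m, (i : ℕ) + 1 < (j : ℕ) ∧
        r = FreeGroup.of i * FreeGroup.of j * (FreeGroup.of i)⁻¹ * (FreeGroup.of j)⁻¹) ∨
       (∃ i j : Fin m, (i : ℕ) + 1 = (j : ℕ) ∧
        r = FreeGroup.of i * FreeGroup.of j * FreeGroup.of i *
            (FreeGroup.of j * FreeGroup.of i * FreeGroup.of j)⁻¹)}

/-- The index in `Fin n` of the generator `x_i` of `F_n` acted on by `σ_i`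
(the strand index `i`, `0`-based). -/
def xL (n : ℕ) (i : Fin (n - 1)) : Fin n := ⟨i, by have := i.isLt; omega⟩

/-- The index in `Fin n` of the generator `x_{i+1}` of `F_n` acted on by `σ_i`. -/
def xR (n : ℕ) (i : Fin (n - 1)) : Fin n := ⟨(i : ℕ) + 1, by have := i.isLt; omega⟩

/-!
Artin's combing argument. Let `G_m` be the subgroup generated by the first `m` braid generators,
acting on the strands `0, …, m`. A braid `g ∈ G_{m+1}`, multiplied by a coset representative
`s_j ⋯ s_m`, becomes a product `u * h` with `h ∈ G_m` and `u` in the subgroup generated by the pure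
braids in which the last strand loops around a single earlier one.

Let `y` be the last generator of the free group. It is fixed by `h`, and `u` sends it to
`c⁻¹ * y * c` where, after killing `y`, the element `c` becomes the image under `x_j ↦ x_j ^ (-k)`
of the word `w` expressing `u` in the loops. If `g` acts trivially, then the coset
representative is trivial and `c` centralizes `y`, hence dies when `y` is killed; since
`x_j ↦ x_j ^ (-k)` is injective on free groups, `w = 1`. So `g = h ∈ G_m`, and the theorem follows
by induction on `m`.
-/

namespace Wada

section FreeGroupEmbedding

variable {α β : Type*}

theorem mk_pow_succ_mul_mem_startsWith [DecidableEq α] {w : α × Bool} {g : FreeGroup α}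
    (hg : g ∉ FreeGroup.startsWith (w.1, !w.2)) (n : ℕ) :
    FreeGroup.mk [w] ^ (n + 1) * g ∈ FreeGroup.startsWith w := by
  induction n with
  | zero => simpa using FreeGroup.startsWith_mk_mul g hg
  | succ n ih =>
    rw [pow_succ', mul_assoc]
    refine FreeGroup.startsWith_mk_mul _ fun h => ?_
    have hdisj : Disjoint (FreeGroup.startsWith w) (FreeGroup.startsWith (w.1, !w.2)) :=
      FreeGroup.startsWith.disjoint_iff_ne.2 fun h => by simpa using congrArg Prod.snd h
    exact Set.disjoint_left.1 hdisj ih h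

theorem lift_of_pow_succ_injective [Nontrivial α] (n : ℕ) :
    Function.Injective (FreeGroup.lift fun a : α => FreeGroup.of a ^ (n + 1)) := by
  classical
  have starts_pow (a : α) {g : FreeGroup α} (hg : g ∉ FreeGroup.startsWith (a, false)) :
      FreeGroup.of a ^ (n + 1) * g ∈ FreeGroup.startsWith (a, true) :=
    mk_pow_succ_mul_mem_startsWith (w := (a, true)) hg n
  have starts_inv_pow (a : α) {g : FreeGroup α} (hg : g ∉ FreeGroup.startsWith (a, true)) :
      (FreeGroup.of a ^ (n + 1))⁻¹ * g ∈ FreeGroup.startsWith (a, false) := by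
    rw [← inv_pow]
    exact mk_pow_succ_mul_mem_startsWith (w := (a, false)) hg n
  refine FreeGroup.injective_lift_of_ping_pong _ (fun a => FreeGroup.startsWith (a, true))
    (fun a => FreeGroup.startsWith (a, false)) ?_ ?_ ?_ ?_ ?_ ?_
  · exact fun a => ⟨_, starts_pow a (g := 1) (by simp [FreeGroup.startsWith])⟩
  · exact fun a b hab => by simpa [Function.onFun] using hab
  · exact fun a b hab => by simpa [Function.onFun] using hab
  · exact fun a b => by simp
  · rintro a _ ⟨g, hg, rfl⟩
    exact starts_pow a hg
  · rintro a _ ⟨g, hg, rfl⟩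
    exact starts_inv_pow a hg

theorem lift_of_zpow_injective [Nontrivial α] {k : ℤ} (hk : k ≠ 0) :
    Function.Injective (FreeGroup.lift fun a : α => FreeGroup.of a ^ k) := by
  obtain ⟨n, hn⟩ := Nat.exists_eq_succ_of_ne_zero (Int.natAbs_ne_zero.2 hk)
  have hpow := lift_of_pow_succ_injective (α := α) n
  rcases Int.natAbs_eq k with h | h <;> rw [hn] at h <;> subst h
  · simpa only [zpow_natCast] using hpow
  · have hinv : FreeGroup.lift (fun a : α => FreeGroup.of a ^ (-(n.succ : ℤ))) =
        (FreeGroup.lift fun a => FreeGroup.of a ^ (n + 1)).comp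
          (FreeGroup.lift fun a => (FreeGroup.of a)⁻¹) := by
      ext a
      rw [FreeGroup.lift_apply_of, zpow_neg, zpow_natCast]
      simp
    have hinvol : Function.LeftInverse (FreeGroup.lift fun a : α => (FreeGroup.of a)⁻¹)
        (FreeGroup.lift fun a : α => (FreeGroup.of a)⁻¹) :=
      DFunLike.congr_fun (f := (FreeGroup.lift _).comp (FreeGroup.lift _))
        (g := MonoidHom.id (FreeGroup α)) (by ext a; simp)
    rw [hinv, MonoidHom.coe_comp]
    exact hpow.comp hinvol.injective

theorem lift_of_comp_zpow_injective [Nontrivial α] {f : β → α} (hf : Function.Injective f) {k : ℤ}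
    (hk : k ≠ 0) : Function.Injective (FreeGroup.lift fun b => FreeGroup.of (f b) ^ k) := by
  have hcomp : FreeGroup.lift (fun b => FreeGroup.of (f b) ^ k) =
      (FreeGroup.lift fun a => FreeGroup.of a ^ k).comp (FreeGroup.map f) := by
    ext b
    simp
  rw [hcomp, MonoidHom.coe_comp]
  exact (lift_of_zpow_injective hk).comp (FreeGroup.map_injective hf)

end FreeGroupEmbedding

section KillGenerator

variable {α : Type*} [DecidableEq α]

/-- The endomorphism of a free group that sends the generator `q` to `1` and fixes all the other
generators: on braids it corresponds to forgetting a strand. -/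
def killGenerator (q : α) : FreeGroup α →* FreeGroup α :=
  FreeGroup.lift (Function.update FreeGroup.of q 1)

@[simp]
theorem killGenerator_of_self (q : α) : killGenerator q (FreeGroup.of q) = 1 := by
  simp [killGenerator]

theorem killGenerator_of_of_ne {a q : α} (h : a ≠ q) :
    killGenerator q (FreeGroup.of a) = FreeGroup.of a := by
  simp [killGenerator, h]

open RegularWreathProduct in
theorem killGenerator_eq_one_of_commute {q : α} {g : FreeGroup α}
    (h : Commute g (FreeGroup.of q)) : killGenerator q g = 1 := by
  -- `ψ q` is a function supported at `1`, and conjugation by `ψ g` translates its support by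
  -- `killGenerator q g`.
  let ψ : FreeGroup α →* ℤˣ ≀ᵣ FreeGroup α :=
    FreeGroup.lift (Function.update (fun a => inl (FreeGroup.of a)) q ⟨Pi.mulSingle 1 (-1), 1⟩)
  have hψq : ψ (FreeGroup.of q) = ⟨Pi.mulSingle 1 (-1), 1⟩ := by simp [ψ]
  have hψ_right : (ψ g).right = killGenerator q g := by
    refine DFunLike.congr_fun (f := rightHom.comp ψ) (FreeGroup.ext_hom _ _ fun a => ?_) g
    rcases eq_or_ne a q with rfl | ha
    · simp [ψ, rightHom]
    · simp [ψ, rightHom, killGenerator_of_of_ne ha, ha]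
  have hleft := congrArg (fun z => z.left (killGenerator q g)) (h.map ψ).eq
  simp only [hψq, mul_left, Pi.mul_apply, hψ_right, inv_mul_cancel, Pi.mulSingle_eq_same, inv_one,
    one_mul, mul_comm] at hleft
  by_contra hne
  simp [Pi.mulSingle_eq_of_ne hne] at hleft

end KillGenerator

section PushSubgroup

variable {F Q : Type*} [Group F] [Group Q]

/-- The pairs `(u, p)` of an automorphism `u` over the quotient map `π` and a value `p = π c`, where
`c` is an element such that `u` sends `x` to `c⁻¹ * x * c`. For a braid dragging the last strand
around, `p` records the path of that strand. -/
def pushSubgroup (π : F →* Q) (x : F) : Subgroup (MulAut F × Q) where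
  carrier := {p | (∀ y, π (p.1 y) = π y) ∧ ∃ c, p.1 x = c⁻¹ * x * c ∧ π c = p.2}
  one_mem' := ⟨fun _ => rfl, 1, by simp⟩
  mul_mem' := by
    rintro ⟨u, _⟩ ⟨v, _⟩ ⟨hu, c, hc, rfl⟩ ⟨hv, d, hd, rfl⟩
    refine ⟨fun y => by simp_all, c * u d, ?_, by simp_all⟩
    simp_all [mul_assoc]
  inv_mem' := by
    rintro ⟨u, _⟩ ⟨hu, c, hc, rfl⟩
    have hu' (y : F) : π (u⁻¹ y) = π y := by simpa using (hu (u⁻¹ y)).symm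
    refine ⟨hu', u⁻¹ c⁻¹, u.injective ?_, (hu' _).trans (map_inv π c)⟩
    simp_all [mul_assoc]

variable {π : F →* Q} {x : F}

theorem mem_pushSubgroup {u : MulAut F} {p : Q} :
    (u, p) ∈ pushSubgroup π x ↔
      (∀ y, π (u y) = π y) ∧ ∃ c, u x = c⁻¹ * x * c ∧ π c = p :=
  Iff.rfl

theorem conj_mem_pushSubgroup {u h : MulAut F} {h' : MulAut Q} {p : Q}
    (hup : (u, p) ∈ pushSubgroup π x) (hx : h x = x) (hπ : ∀ y, π (h y) = h' (π y)) :
    (h * u * h⁻¹, h' p) ∈ pushSubgroup π x := by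
  obtain ⟨hu, c, hc, rfl⟩ := hup
  have hx' : h⁻¹ x = x := h.injective (by simp [hx])
  refine ⟨fun y => ?_, h c, by simp [hx', hc, hx], hπ c⟩
  simp only [MulAut.mul_apply]
  rw [hπ, hu, ← hπ, MulAut.apply_inv_self]

end PushSubgroup

section BraidRelations

variable {G : Type*} [Group G]

theorem mem_normalizer_closure_of_conj_mem {S : Set G} {g : G}
    (h : ∀ a ∈ S, g * a * g⁻¹ ∈ Subgroup.closure S)
    (h' : ∀ a ∈ S, g⁻¹ * a * g ∈ Subgroup.closure S) :
    g ∈ Subgroup.normalizer (Subgroup.closure S : Set G) := by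
  rw [Subgroup.mem_normalizer_iff_map_conj_eq]
  refine le_antisymm ?_ ?_
  · rw [Subgroup.map_le_iff_le_comap, Subgroup.closure_le]
    exact fun a ha => by simpa using h a ha
  · rw [Subgroup.closure_le]
    exact fun a ha => ⟨_, h' a ha, by simp [mul_assoc]⟩

theorem semiconjBy_sq_of_braid {a b : G} (h : a * b * a = b * a * b) :
    SemiconjBy a (b ^ 2) (b⁻¹ * a ^ 2 * b) := by
  refine mul_left_cancel (a := b) ?_
  calc b * (a * b ^ 2)
      = b * a * b * b := by simp only [sq, mul_assoc]
    _ = a * b * a * b := by rw [h]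
    _ = a * (b * a * b) := by simp only [mul_assoc]
    _ = a * (a * b * a) := by rw [h]
    _ = b * (b⁻¹ * a ^ 2 * b * a) := by simp only [sq, mul_assoc, mul_inv_cancel_left]

theorem commute_mul_sq_mul_of_braid {a b : G} (h : a * b * a = b * a * b) :
    Commute a (b * a ^ 2 * b) := by
  calc a * (b * a ^ 2 * b)
      = a * b * a * (a * b) := by simp only [sq, mul_assoc]
    _ = b * a * (b * a * b) := by rw [h]; simp only [mul_assoc]
    _ = b * a * (a * b * a) := by rw [h]
    _ = b * a ^ 2 * b * a := by simp only [sq, mul_assoc]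

theorem conj_eq_of_semiconjBy_of_commute {g a b : G} (hab : SemiconjBy g b a)
    (hcomm : Commute g (b * a)) : g * a * g⁻¹ = a⁻¹ * b * a := by
  rw [mul_inv_eq_iff_eq_mul]
  refine mul_left_cancel (a := a) ?_
  calc a * (g * a)
      = g * (b * a) := by rw [← mul_assoc, ← hab.eq, mul_assoc]
    _ = b * a * g := hcomm.eq
    _ = a * (a⁻¹ * b * a * g) := by simp only [mul_assoc, mul_inv_cancel_left]

theorem inv_conj_eq_of_semiconjBy_of_commute {g a b : G} (hab : SemiconjBy g b a)
    (hcomm : Commute g (b * a)) : g⁻¹ * b * g = b * a * b⁻¹ := by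
  rw [eq_mul_inv_iff_mul_eq]
  calc g⁻¹ * b * g * b
      = g⁻¹ * (b * a * g) := by simp only [mul_assoc, hab.eq]
    _ = b * a := by rw [← hcomm.eq, inv_mul_cancel_left]

/-- The relations between the braid generators `s 0, …, s (N - 1)` on `N + 1` strands; the values
`s i` with `N ≤ i` are irrelevant. -/
structure BraidRelations (s : ℕ → G) (N : ℕ) : Prop where
  commute : ∀ ⦃i j⦄, i + 1 < j → j < N → Commute (s i) (s j)
  braid : ∀ ⦃i⦄, i + 1 < N → s i * s (i + 1) * s i = s (i + 1) * s i * s (i + 1)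

/-- The product `s j * s (j + 1) * ⋯ * s (m - 1)`, equal to `1` if `m ≤ j`. As a braid, it moves a
strand between the positions `j` and `m`; these are the representatives of the cosets of the braids
that fix the position `m`. -/
def ascProd (s : ℕ → G) (j m : ℕ) : G := ((List.Ico j m).map s).prod

/-- The pure braid in which strand `m` loops once around strand `j < m`. -/
def strandLoop (s : ℕ → G) (m j : ℕ) : G :=
  (ascProd s (j + 1) m)⁻¹ * s j ^ 2 * ascProd s (j + 1) m

/-- The subgroup of the braids on the strands `0, …, m`. -/
def initialSubgroup (s : ℕ → G) (m : ℕ) : Subgroup G := Subgroup.closure (s '' Set.Iio m)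

/-- The subgroup of the pure braids in which only strand `m` moves, around the strands
`0, …, m - 1`. -/
def loopSubgroup (s : ℕ → G) (m : ℕ) : Subgroup G :=
  Subgroup.closure (Set.range fun j : Fin m => strandLoop s m j)

variable {s : ℕ → G} {N m i j : ℕ}

@[simp]
theorem ascProd_self (s : ℕ → G) (m : ℕ) : ascProd s m m = 1 := by
  simp [ascProd]

theorem ascProd_eq_mul (s : ℕ → G) (h : j < m) : ascProd s j m = s j * ascProd s (j + 1) m := by
  simp [ascProd, List.Ico.eq_cons h]

theorem strandLoop_eq_mul_ascProd (s : ℕ → G) (h : j < m) :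
    strandLoop s m j = (ascProd s (j + 1) m)⁻¹ * s j * ascProd s j m := by
  rw [strandLoop, ascProd_eq_mul s h, sq]
  group

theorem strandLoop_eq_conj (s : ℕ → G) (h : j + 1 < m) :
    strandLoop s m j =
      (ascProd s (j + 2) m)⁻¹ * ((s (j + 1))⁻¹ * s j ^ 2 * s (j + 1)) * ascProd s (j + 2) m := by
  rw [strandLoop, ascProd_eq_mul s h]
  group

theorem apply_mem_initialSubgroup (s : ℕ → G) (h : i < m) : s i ∈ initialSubgroup s m :=
  Subgroup.subset_closure ⟨i, h, rfl⟩

theorem strandLoop_mem_loopSubgroup (s : ℕ → G) (h : j < m) :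
    strandLoop s m j ∈ loopSubgroup s m :=
  Subgroup.subset_closure ⟨⟨j, h⟩, rfl⟩

namespace BraidRelations

variable (hs : BraidRelations s N)
include hs

theorem commute_ascProd (hm : m ≤ N) (hij : i + 1 < j) : Commute (s i) (ascProd s j m) := by
  refine Commute.list_prod_right _ _ fun g hg => ?_
  obtain ⟨l, hl, rfl⟩ := List.mem_map.1 hg
  rw [List.Ico.mem] at hl
  exact hs.commute (by omega) (by omega)

theorem semiconjBy_ascProd (hm : m ≤ N) (hji : j ≤ i) (him : i + 1 < m) :
    SemiconjBy (ascProd s j m) (s i) (s (i + 1)) := by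
  induction hji using Nat.decreasingInduction with
  | self =>
    have hcomm : s i * ascProd s (i + 2) m = ascProd s (i + 2) m * s i :=
      hs.commute_ascProd hm (by omega)
    rw [ascProd_eq_mul s (by omega), ascProd_eq_mul s him, SemiconjBy, mul_assoc, mul_assoc,
      ← hcomm]
    simpa only [mul_assoc] using congrArg (· * ascProd s (i + 2) m) (hs.braid (i := i) (by omega))
  | of_succ l hl ih =>
    rw [ascProd_eq_mul s (by omega)]
    exact SemiconjBy.mul_left (hs.commute (by omega) (by omega)) ih

theorem commute_strandLoop_of_lt (hm : m ≤ N) (hij : i + 1 < j) (hjm : j < m) :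
    Commute (s i) (strandLoop s m j) := by
  have hasc : Commute (s i) (ascProd s (j + 1) m) := hs.commute_ascProd hm (by omega)
  exact (hasc.inv_right.mul_right ((hs.commute hij (by omega)).pow_right 2)).mul_right hasc

theorem commute_strandLoop_of_gt (hm : m ≤ N) (hji : j < i) (him : i + 1 < m) :
    Commute (s i) (strandLoop s m j) := by
  have hasc : SemiconjBy (ascProd s j m) (s i) (s (i + 1)) :=
    hs.semiconjBy_ascProd hm hji.le him
  have hasc_inv : SemiconjBy (ascProd s (j + 1) m)⁻¹ (s (i + 1)) (s i) :=
    (hs.semiconjBy_ascProd hm hji him).inv_symm_left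
  rw [strandLoop_eq_mul_ascProd s (by omega)]
  exact ((hasc_inv.mul_left (hs.commute (by omega) (by omega))).mul_left hasc).symm

theorem semiconjBy_strandLoop (hm : m ≤ N) (hjm : j + 1 < m) :
    SemiconjBy (s j) (strandLoop s m (j + 1)) (strandLoop s m j) := by
  have hasc : Commute (s j) (ascProd s (j + 2) m) := hs.commute_ascProd hm (by omega)
  have hsq := semiconjBy_sq_of_braid (hs.braid (i := j) (by omega))
  rw [strandLoop_eq_conj s hjm]
  exact (SemiconjBy.mul_right hasc.inv_right hsq).mul_right hasc

theorem commute_strandLoop_succ_mul (hm : m ≤ N) (hjm : j + 1 < m) :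
    Commute (s j) (strandLoop s m (j + 1) * strandLoop s m j) := by
  have hasc : Commute (s j) (ascProd s (j + 2) m) := hs.commute_ascProd hm (by omega)
  have hmid := commute_mul_sq_mul_of_braid (hs.braid (i := j) (by omega))
  have hprod : strandLoop s m (j + 1) * strandLoop s m j =
      (ascProd s (j + 2) m)⁻¹ * (s (j + 1) * s j ^ 2 * s (j + 1)) * ascProd s (j + 2) m := by
    rw [strandLoop_eq_conj s hjm, strandLoop]
    group
  rw [hprod]
  exact (hasc.inv_right.mul_right hmid).mul_right hasc

theorem conj_strandLoop_mem (hm : m ≤ N) (him : i + 1 < m) (hjm : j < m) :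
    s i * strandLoop s m j * (s i)⁻¹ ∈ loopSubgroup s m ∧
      (s i)⁻¹ * strandLoop s m j * s i ∈ loopSubgroup s m := by
  have hmem := strandLoop_mem_loopSubgroup s hjm
  have hmem_i := strandLoop_mem_loopSubgroup s (Nat.lt_of_succ_lt him)
  have hmem_succ := strandLoop_mem_loopSubgroup s him
  have hsemi := hs.semiconjBy_strandLoop hm him
  have hcomm := hs.commute_strandLoop_succ_mul hm him
  have of_commute (h : Commute (s i) (strandLoop s m j)) :
      s i * strandLoop s m j * (s i)⁻¹ ∈ loopSubgroup s m ∧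
        (s i)⁻¹ * strandLoop s m j * s i ∈ loopSubgroup s m := by
    rw [h.mul_inv_cancel, h.inv_mul_cancel]
    exact ⟨hmem, hmem⟩
  rcases lt_trichotomy j i with hji | rfl | hij
  · exact of_commute (hs.commute_strandLoop_of_gt hm hji him)
  · rw [conj_eq_of_semiconjBy_of_commute hsemi hcomm, mul_assoc (s j)⁻¹, ← hsemi.eq,
      inv_mul_cancel_left]
    exact ⟨mul_mem (mul_mem (inv_mem hmem) hmem_succ) hmem, hmem_succ⟩
  · rcases (Nat.succ_le_of_lt hij).eq_or_lt with rfl | hij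
    · rw [hsemi.eq, mul_inv_cancel_right, inv_conj_eq_of_semiconjBy_of_commute hsemi hcomm]
      exact ⟨hmem_i, mul_mem (mul_mem hmem hmem_i) (inv_mem hmem)⟩
    · exact of_commute (hs.commute_strandLoop_of_lt hm hij hjm)

theorem initialSubgroup_le_normalizer_loopSubgroup (hm : m < N) :
    initialSubgroup s m ≤ Subgroup.normalizer (loopSubgroup s (m + 1) : Set G) := by
  rw [initialSubgroup, Subgroup.closure_le]
  rintro _ ⟨i, hi : i < m, rfl⟩
  refine mem_normalizer_closure_of_conj_mem ?_ ?_
  · rintro _ ⟨j, rfl⟩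
    exact (hs.conj_strandLoop_mem hm (by omega) j.2).1
  · rintro _ ⟨j, rfl⟩
    exact (hs.conj_strandLoop_mem hm (by omega) j.2).2

theorem inv_ascProd_swap_mul_mem (hm : m < N) (hi : i ≤ m) (hj : j ≤ m + 1) :
    (ascProd s (Equiv.swap i (i + 1) j) (m + 1))⁻¹ * s i * ascProd s j (m + 1) ∈
      loopSubgroup s (m + 1) ⊔ initialSubgroup s m := by
  rcases lt_trichotomy j i with hji | rfl | hij
  · obtain ⟨l, rfl⟩ := Nat.exists_eq_succ_of_ne_zero (Nat.ne_zero_of_lt hji)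
    rw [Equiv.swap_apply_of_ne_of_ne (by omega) (by omega), mul_assoc,
      ← (hs.semiconjBy_ascProd (i := l) hm (by omega) (by omega)).eq, inv_mul_cancel_left]
    exact Subgroup.mem_sup_right (apply_mem_initialSubgroup s (by omega))
  · rw [Equiv.swap_apply_left, ← strandLoop_eq_mul_ascProd s (by omega)]
    exact Subgroup.mem_sup_left (strandLoop_mem_loopSubgroup s (by omega))
  · rcases (Nat.succ_le_of_lt hij).eq_or_lt with rfl | hij
    · rw [Equiv.swap_apply_right, ascProd_eq_mul s (by omega), mul_assoc, inv_mul_cancel]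
      exact one_mem _
    · rw [Equiv.swap_apply_of_ne_of_ne (by omega) (by omega), mul_assoc,
        (hs.commute_ascProd hm hij).eq, inv_mul_cancel_left]
      exact Subgroup.mem_sup_right (apply_mem_initialSubgroup s (by omega))

theorem exists_mul_ascProd_mem_sup (hm : m < N) {g : G} (hg : g ∈ initialSubgroup s (m + 1)) :
    ∃ j ≤ m + 1, g * ascProd s j (m + 1) ∈ loopSubgroup s (m + 1) ⊔ initialSubgroup s m := by
  have swap_le {i j : ℕ} (hi : i ≤ m) (hj : j ≤ m + 1) : Equiv.swap i (i + 1) j ≤ m + 1 := by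
    rw [Equiv.swap_apply_def]
    split_ifs <;> omega
  induction hg using Subgroup.closure_induction_right with
  | one => exact ⟨m + 1, le_rfl, by simp⟩
  | mul_right g _ _ hi ih =>
    obtain ⟨i, hi, rfl⟩ := hi
    have hi : i ≤ m := Nat.lt_succ_iff.1 hi
    obtain ⟨j, hj, hmem⟩ := ih
    refine ⟨Equiv.swap i (i + 1) j, swap_le hi hj, ?_⟩
    have hschreier := hs.inv_ascProd_swap_mul_mem hm hi (swap_le hi hj)
    rw [Equiv.swap_apply_self] at hschreier
    simpa [mul_assoc] using mul_mem hmem hschreier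
  | mul_inv_cancel g _ _ hi ih =>
    obtain ⟨i, hi, rfl⟩ := hi
    have hi : i ≤ m := Nat.lt_succ_iff.1 hi
    obtain ⟨j, hj, hmem⟩ := ih
    refine ⟨Equiv.swap i (i + 1) j, swap_le hi hj, ?_⟩
    simpa [mul_assoc] using mul_mem hmem (inv_mem (hs.inv_ascProd_swap_mul_mem hm hi hj))

theorem exists_mul_ascProd_eq_lift_mul (hm : m < N) {g : G}
    (hg : g ∈ initialSubgroup s (m + 1)) :
    ∃ j ≤ m + 1, ∃ w : FreeGroup (Fin (m + 1)), ∃ h ∈ initialSubgroup s m,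
      g * ascProd s j (m + 1) =
        FreeGroup.lift (fun l : Fin (m + 1) => strandLoop s (m + 1) l) w * h := by
  obtain ⟨j, hj, hmem⟩ := hs.exists_mul_ascProd_mem_sup hm hg
  rw [← SetLike.mem_coe, Subgroup.coe_mul_of_right_le_normalizer_left _ _
    (hs.initialSubgroup_le_normalizer_loopSubgroup hm)] at hmem
  obtain ⟨u, hu, h, hh, heq⟩ := hmem
  rw [loopSubgroup, ← FreeGroup.range_lift_eq_closure] at hu
  obtain ⟨w, rfl⟩ := hu
  exact ⟨j, hj, w, h, hh, heq.symm⟩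

end BraidRelations

end BraidRelations

section WadaAction

variable {G α : Type*} [Group G]

/-- The elements `s 0, …, s (N - 1)` of `G` act on the free group over `α`, through `Φ`, as Wada's
automorphisms of type (1) with parameter `k` on the generators `x 0, …, x N`. -/
structure IsWadaAction (Φ : G →* MulAut (FreeGroup α)) (s : ℕ → G) (x : ℕ → α) (N : ℕ) (k : ℤ) :
    Prop where
  injOn : Set.InjOn x (Set.Iic N)
  apply_left : ∀ ⦃i⦄, i < N → Φ (s i) (FreeGroup.of (x i)) =
    FreeGroup.of (x i) ^ k * FreeGroup.of (x (i + 1)) * FreeGroup.of (x i) ^ (-k)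
  apply_right : ∀ ⦃i⦄, i < N → Φ (s i) (FreeGroup.of (x (i + 1))) = FreeGroup.of (x i)
  apply_of_ne : ∀ ⦃i⦄, i < N → ∀ ⦃a⦄, a ≠ x i → a ≠ x (i + 1) →
    Φ (s i) (FreeGroup.of a) = FreeGroup.of a

namespace IsWadaAction

variable {Φ : G →* MulAut (FreeGroup α)} {s : ℕ → G} {x : ℕ → α} {N m i j : ℕ} {k : ℤ}
variable (hΦ : IsWadaAction Φ s x N k)
include hΦ

theorem ne_of_lt (hij : i < j) (hj : j ≤ N) : x i ≠ x j := fun h =>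
  hij.ne (hΦ.injOn (Set.mem_Iic.2 (hij.le.trans hj)) (Set.mem_Iic.2 hj) h)

theorem apply_of_ge (hm : m ≤ N) (him : i + 1 < m) :
    Φ (s i) (FreeGroup.of (x m)) = FreeGroup.of (x m) :=
  hΦ.apply_of_ne (by omega) (hΦ.ne_of_lt (by omega) hm).symm (hΦ.ne_of_lt him hm).symm

theorem apply_initialSubgroup (hm : m < N) {g : G} (hg : g ∈ initialSubgroup s m) :
    Φ g (FreeGroup.of (x (m + 1))) = FreeGroup.of (x (m + 1)) := by
  suffices initialSubgroup s m ≤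
      (MulAction.stabilizer (MulAut (FreeGroup α)) (FreeGroup.of (x (m + 1)))).comap Φ from this hg
  rw [initialSubgroup, Subgroup.closure_le]
  rintro _ ⟨i, hi : i < m, rfl⟩
  exact hΦ.apply_of_ge hm (by omega)

theorem apply_ascProd (hm : m ≤ N) (hj : j ≤ m) :
    Φ (ascProd s j m) (FreeGroup.of (x m)) = FreeGroup.of (x j) := by
  induction hj using Nat.decreasingInduction with
  | self => simp
  | of_succ j hj ih =>
    rw [ascProd_eq_mul s hj, map_mul, MulAut.mul_apply, ih, hΦ.apply_right (by omega)]

section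

variable [DecidableEq α]

theorem killGenerator_apply (hm : m ≤ N) (him : i + 1 < m) (y : FreeGroup α) :
    killGenerator (x m) (Φ (s i) y) = Φ (s i) (killGenerator (x m) y) := by
  have hi : i < N := by omega
  have hne := hΦ.ne_of_lt (i := i) (by omega) hm
  have hne_succ := hΦ.ne_of_lt him hm
  refine DFunLike.congr_fun (f := (killGenerator (x m)).comp (Φ (s i)).toMonoidHom)
    (g := (Φ (s i)).toMonoidHom.comp (killGenerator (x m))) (FreeGroup.ext_hom _ _ fun a => ?_) y
  change killGenerator (x m) (Φ (s i) _) = Φ (s i) (killGenerator (x m) _)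
  rcases eq_or_ne a (x m) with rfl | ham
  · rw [hΦ.apply_of_ge hm him, killGenerator_of_self, map_one]
  rw [killGenerator_of_of_ne ham]
  rcases eq_or_ne a (x i) with rfl | hai
  · simp only [hΦ.apply_left hi, map_mul, map_zpow, killGenerator_of_of_ne hne,
      killGenerator_of_of_ne hne_succ]
  rcases eq_or_ne a (x (i + 1)) with rfl | hai'
  · rw [hΦ.apply_right hi, killGenerator_of_of_ne hne]
  · rw [hΦ.apply_of_ne hi hai hai', killGenerator_of_of_ne ham]

theorem sq_mem_pushSubgroup (hm : m < N) :
    (Φ (s m ^ 2), FreeGroup.of (x m) ^ (-k)) ∈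
      pushSubgroup (killGenerator (x (m + 1))) (FreeGroup.of (x (m + 1))) := by
  have hne := hΦ.ne_of_lt (Nat.lt_succ_self m) hm
  have hsq (y : FreeGroup α) : Φ (s m ^ 2) y = Φ (s m) (Φ (s m) y) := by
    rw [sq, map_mul, MulAut.mul_apply]
  refine mem_pushSubgroup.2 ⟨fun y => ?_, FreeGroup.of (x m) ^ (-k), ?_, ?_⟩
  · refine DFunLike.congr_fun (f := (killGenerator (x (m + 1))).comp (Φ (s m ^ 2)).toMonoidHom)
      (FreeGroup.ext_hom _ _ fun a => ?_) y
    change killGenerator (x (m + 1)) (Φ (s m ^ 2) _) = _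
    rw [hsq]
    rcases eq_or_ne a (x m) with rfl | ham
    · simp [hΦ.apply_left hm, hΦ.apply_right hm, killGenerator_of_of_ne hne]
    rcases eq_or_ne a (x (m + 1)) with rfl | ham'
    · simp [hΦ.apply_left hm, hΦ.apply_right hm, killGenerator_of_of_ne hne]
    · simp only [hΦ.apply_of_ne hm ham ham']
  · rw [hsq, hΦ.apply_right hm, hΦ.apply_left hm]
    simp
  · rw [map_zpow, killGenerator_of_of_ne hne]

theorem strandLoop_mem_pushSubgroup (hs : BraidRelations s N) (hm : m < N) (hj : j ≤ m) :
    (Φ (strandLoop s (m + 1) j), FreeGroup.of (x j) ^ (-k)) ∈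
      pushSubgroup (killGenerator (x (m + 1))) (FreeGroup.of (x (m + 1))) := by
  induction hj using Nat.decreasingInduction with
  | self =>
    have hloop : strandLoop s (m + 1) m = s m ^ 2 := by simp [strandLoop]
    rw [hloop]
    exact hΦ.sq_mem_pushSubgroup hm
  | of_succ j hj ih =>
    have hloop : strandLoop s (m + 1) j = s j * strandLoop s (m + 1) (j + 1) * (s j)⁻¹ :=
      eq_mul_inv_of_mul_eq (hs.semiconjBy_strandLoop hm (by omega)).eq.symm
    have hconj := conj_mem_pushSubgroup ih (hΦ.apply_of_ge hm (by omega))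
      (hΦ.killGenerator_apply hm (i := j) (by omega))
    simpa only [hloop, map_mul, map_inv, map_zpow, hΦ.apply_right (hj.trans hm)] using hconj

theorem lift_strandLoop_mem_pushSubgroup (hs : BraidRelations s N) (hm : m < N)
    (w : FreeGroup (Fin (m + 1))) :
    (Φ (FreeGroup.lift (fun j : Fin (m + 1) => strandLoop s (m + 1) j) w),
        FreeGroup.lift (fun j : Fin (m + 1) => FreeGroup.of (x j) ^ (-k)) w) ∈
      pushSubgroup (killGenerator (x (m + 1))) (FreeGroup.of (x (m + 1))) := by
  let toPair := (Φ.comp (FreeGroup.lift fun j : Fin (m + 1) => strandLoop s (m + 1) j)).prod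
    (FreeGroup.lift fun j : Fin (m + 1) => FreeGroup.of (x j) ^ (-k))
  suffices ⊤ ≤ (pushSubgroup (killGenerator (x (m + 1))) (FreeGroup.of (x (m + 1)))).comap toPair
    from this (Subgroup.mem_top w)
  rw [← FreeGroup.closure_range_of, Subgroup.closure_le]
  rintro _ ⟨j, rfl⟩
  simpa [toPair] using hΦ.strandLoop_mem_pushSubgroup hs hm (Nat.lt_succ_iff.1 j.2)

end

theorem mem_initialSubgroup_of_apply_eq_one (hs : BraidRelations s N) (hk : k ≠ 0) (hm : m < N)
    {g : G} (hg : g ∈ initialSubgroup s (m + 1)) (hΦg : Φ g = 1) : g ∈ initialSubgroup s m := by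
  classical
  obtain ⟨j, hj, w, h, hh, heq⟩ := hs.exists_mul_ascProd_eq_lift_mul hm hg
  obtain ⟨-, c, hc, hcw⟩ := hΦ.lift_strandLoop_mem_pushSubgroup hs hm w
  have hxj : FreeGroup.of (x j) = c⁻¹ * FreeGroup.of (x (m + 1)) * c := by
    have happly := congrArg (fun g => Φ g (FreeGroup.of (x (m + 1)))) heq
    simp only [map_mul, MulAut.mul_apply, hΦg, MulAut.one_apply] at happly
    rwa [hΦ.apply_ascProd hm hj, hΦ.apply_initialSubgroup hm hh, hc] at happly
  obtain rfl : j = m + 1 := by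
    refine hj.eq_of_not_lt fun hlt => FreeGroup.of_ne_one (x j) ?_
    simpa [killGenerator_of_of_ne (hΦ.ne_of_lt hlt hm)] using
      congrArg (killGenerator (x (m + 1))) hxj
  have hcomm : Commute c (FreeGroup.of (x (m + 1))) := by
    rw [mul_assoc, eq_inv_mul_iff_mul_eq] at hxj
    exact hxj
  have hlift_one : FreeGroup.lift (fun j : Fin (m + 1) => FreeGroup.of (x j) ^ (-k)) w = 1 :=
    hcw.symm.trans (killGenerator_eq_one_of_commute hcomm)
  have : Nontrivial α := ⟨x m, x (m + 1), hΦ.ne_of_lt (Nat.lt_succ_self m) hm⟩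
  have hx_inj : Function.Injective fun j : Fin (m + 1) => x j := fun a b hab =>
    Fin.ext (hΦ.injOn (Set.mem_Iic.2 (by omega)) (Set.mem_Iic.2 (by omega)) hab)
  have hw : w = 1 := (injective_iff_map_eq_one _).1
    (lift_of_comp_zpow_injective hx_inj (neg_ne_zero.2 hk)) w hlift_one
  rw [hw, map_one, one_mul, ascProd_self, mul_one] at heq
  exact heq ▸ hh

theorem eq_one_of_apply_eq_one (hs : BraidRelations s N) (hk : k ≠ 0) (hm : m ≤ N) {g : G}
    (hg : g ∈ initialSubgroup s m) (hΦg : Φ g = 1) : g = 1 := by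
  induction m with
  | zero => simpa [initialSubgroup] using hg
  | succ m ih =>
    exact ih (by omega) (hΦ.mem_initialSubgroup_of_apply_eq_one hs hk hm hg hΦg)

end IsWadaAction

end WadaAction

section PresentedGroup

variable {N : ℕ}

/-- The generator `σ_{i+1}` of the braid group on `N + 2` strands, with `i` taken modulo `N + 1`. -/
def braidGen (N i : ℕ) : PresentedGroup (braidRels (N + 1)) :=
  PresentedGroup.of (Fin.ofNat (N + 1) i)

theorem braidGen_val (i : Fin (N + 1)) : braidGen N i = PresentedGroup.of i := by
  simp [braidGen]

theorem braidRelations_braidGen (N : ℕ) : BraidRelations (braidGen N) (N + 1) where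
  commute i j hij hj := by
    lift j to Fin (N + 1) using hj
    lift i to Fin (N + 1) using by omega
    have hrel := PresentedGroup.one_of_mem (rels := braidRels (N + 1)) (Or.inl ⟨i, j, hij, rfl⟩)
    simp only [map_mul, map_inv] at hrel
    rw [braidGen_val, braidGen_val]
    exact mul_inv_eq_iff_eq_mul.1 (mul_inv_eq_one.1 hrel)
  braid i hi := by
    have hrel := PresentedGroup.one_of_mem (rels := braidRels (N + 1))
      (Or.inr ⟨⟨i, by omega⟩, ⟨i + 1, hi⟩, rfl, rfl⟩)
    simp only [map_mul, map_inv] at hrel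
    have hgen : braidGen N i = PresentedGroup.of ⟨i, by omega⟩ := braidGen_val ⟨i, _⟩
    have hgen_succ : braidGen N (i + 1) = PresentedGroup.of ⟨i + 1, hi⟩ := braidGen_val ⟨i + 1, hi⟩
    rw [hgen, hgen_succ]
    exact mul_inv_eq_one.1 hrel

theorem initialSubgroup_braidGen (N : ℕ) : initialSubgroup (braidGen N) (N + 1) = ⊤ := by
  rw [eq_top_iff, ← PresentedGroup.closure_range_of]
  refine Subgroup.closure_mono ?_
  rintro _ ⟨i, rfl⟩
  exact ⟨i, i.2, braidGen_val i⟩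

end PresentedGroup

end Wada

/-- **Wada's representation of type (1) is faithful.** For every `n ≥ 2` and every
nonzero integer `k`, any group homomorphism `φ : B_n → Aut(F_n)` sending each braid
generator `σ_i` to the automorphism with `x_i ↦ x_i^k x_{i+1} x_i^{-k}`,
`x_{i+1} ↦ x_i`, fixing all other free generators, is injective. -/
theorem wada_type1_faithful (n : ℕ) (hn : 2 ≤ n) (k : ℤ) (hk : k ≠ 0)
    (φ : PresentedGroup (braidRels (n - 1)) →* MulAut (FreeGroup (Fin n)))
    (hφ : ∀ i : Fin (n - 1),
      (φ (PresentedGroup.of i)) (FreeGroup.of (xL n i)) =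
          FreeGroup.of (xL n i) ^ k * FreeGroup.of (xR n i) * FreeGroup.of (xL n i) ^ (-k) ∧
      (φ (PresentedGroup.of i)) (FreeGroup.of (xR n i)) = FreeGroup.of (xL n i) ∧
      ∀ j : Fin n, j ≠ xL n i → j ≠ xR n i →
        (φ (PresentedGroup.of i)) (FreeGroup.of j) = FreeGroup.of j) :
    Function.Injective φ := by
  obtain ⟨N, rfl⟩ := Nat.exists_eq_add_of_le' hn
  have xL_val (i : Fin (N + 1)) : xL (N + 2) i = Fin.ofNat (N + 2) i :=
    (Fin.ofNat_val_eq_self _).symm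
  have xR_val (i : Fin (N + 1)) : xR (N + 2) i = Fin.ofNat (N + 2) (i + 1) :=
    (Fin.ofNat_val_eq_self _).symm
  have hwada : Wada.IsWadaAction φ (Wada.braidGen N) (Fin.ofNat (N + 2)) (N + 1) k := by
    refine ⟨fun a ha b hb hab => ?_, fun i hi => ?_, fun i hi => ?_, fun i hi => ?_⟩
    · simpa [Fin.ext_iff, Nat.mod_eq_of_lt (Nat.lt_succ_of_le ha),
        Nat.mod_eq_of_lt (Nat.lt_succ_of_le hb)] using hab
    all_goals
      lift i to Fin (N + 1) using hi
      rw [Wada.braidGen_val, ← xL_val, ← xR_val]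
    exacts [(hφ i).1, (hφ i).2.1, (hφ i).2.2]
  exact (injective_iff_map_eq_one φ).2 fun g hg =>
    hwada.eq_one_of_apply_eq_one (Wada.braidRelations_braidGen N) hk le_rfl
      (Wada.initialSubgroup_braidGen N ▸ Subgroup.mem_top g) hg
end

section
/- For every n ≥ 2, Wada's representation of type (2) is faithful: the group homomorphism ψ : B_n → Aut(F_n) determined by sending each generator σ_i to the automorphism σ̂_i that maps x_i to x_i x_{i+1}^{−1} x_i, maps x_{i+1} to x_i, and fixes all other free generators, is injective. -/
/-!
Sending `x_i` to `b_i b_n` intertwines Wada's automorphisms with an action of the braid group on the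
free product of involutions `b_0, b_1, …`, in which `σ_i` sends `b_i` to `b_i b_{i+1} b_i` and
`b_{i+1}` to `b_i`. It therefore suffices to show that this action is faithful.

By combing, every braid on the strands `0, …, m` is the product of a chain `σ_l ⋯ σ_{m-1}`, an
element of the group generated by the pure braids in which the strand `m` encircles one of the other
strands, and a braid on the strands `0, …, m - 1`. If the product acts trivially, then killing `b_m`
shows that the chain is empty and that the last factor acts trivially; by induction the last factor
is trivial. Encircling the strand `j` conjugates each `b_k` by a power of `b_j b_m` and raises by
one a suitably signed exponent of `b_j b_m` in the conjugates of `b_m`. With this exponent as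
height, ping-pong shows that the encircling braids act as free generators, so the middle factor is
trivial as well.
-/

theorem map_apply_eq_of_mem_closure {G A B : Type*} [Group G] [Group A] [Group B]
    {α : G →* MulAut A} {β : G →* MulAut B} {φ : A →* B} {S : Set G}
    (hS : ∀ g ∈ S, ∀ a, φ (α g a) = β g (φ a)) {g : G} (hg : g ∈ Subgroup.closure S) (a : A) :
    φ (α g a) = β g (φ a) := by
  induction hg using Subgroup.closure_induction generalizing a with
  | mem g hg => exact hS g hg a
  | one => simp
  | mul g h _ _ ihg ihh => simp only [map_mul, MulAut.mul_apply, ihg, ihh]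
  | inv g _ ih =>
    have h := ih (α g⁻¹ a)
    rw [map_inv, MulAut.apply_inv_self] at h
    rw [map_inv, map_inv, h, MulAut.inv_apply_self]

/-- A relational height for a family `a` acting on `X`: `HasHeight i e x` says that the point `x`
has height `e` with respect to `a i`. The points of nonzero `i`-height form the table of the player
`i` in a ping-pong argument, in which `x₀` is the starting point. -/
structure IsPingPongHeight {ι G X : Type*} [Group G] [MulAction G X] (a : ι → G) (x₀ : X)
    (HasHeight : ι → ℤ → X → Prop) : Prop where
  base (i : ι) : HasHeight i 0 x₀
  smul {i : ι} {e : ℤ} {x : X} : HasHeight i e x → HasHeight i (e + 1) (a i • x)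
  inv_smul {i : ι} {e : ℤ} {x : X} : HasHeight i e x → HasHeight i (e + -1) ((a i)⁻¹ • x)
  eq_zero_of_ne {i j : ι} {e : ℤ} {x : X} : i ≠ j → e ≠ 0 → HasHeight j e x → HasHeight i 0 x
  ne_base {i : ι} {e : ℤ} {x : X} : e ≠ 0 → HasHeight i e x → x ≠ x₀

namespace IsPingPongHeight

variable {ι G X : Type*} [Group G] [MulAction G X] {a : ι → G} {x₀ : X}
  {HasHeight : ι → ℤ → X → Prop}

theorem mk_singleton_smul (ha : IsPingPongHeight a x₀ HasHeight) (p : ι × Bool) {e : ℤ} {x : X}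
    (hx : HasHeight p.1 e x) :
    HasHeight p.1 (e + cond p.2 1 (-1)) (FreeGroup.lift a (FreeGroup.mk [p]) • x) := by
  obtain ⟨i, _ | _⟩ := p
  · simpa using ha.inv_smul hx
  · simpa using ha.smul hx

theorem exists_height_mk_smul (ha : IsPingPongHeight a x₀ HasHeight) (L : List (ι × Bool))
    (p : ι × Bool) (hL : FreeGroup.IsReduced (p :: L)) :
    ∃ n : ℕ, HasHeight p.1 (cond p.2 1 (-1) * (n + 1))
      (FreeGroup.lift a (FreeGroup.mk (p :: L)) • x₀) := by
  induction L generalizing p with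
  | nil => exact ⟨0, by simpa using ha.mk_singleton_smul p (ha.base p.1)⟩
  | cons p' L ih =>
    rw [FreeGroup.isReduced_cons_cons] at hL
    obtain ⟨n, hn⟩ := ih p' hL.2
    have split : FreeGroup.mk (p :: p' :: L) = FreeGroup.mk [p] * FreeGroup.mk (p' :: L) := by
      simp
    rw [split, map_mul, mul_smul]
    by_cases hp : p.1 = p'.1
    · obtain rfl : p = p' := Prod.ext hp (hL.1 hp)
      refine ⟨n + 1, ?_⟩
      convert ha.mk_singleton_smul p hn using 1
      push_cast
      ring
    · have hne : (cond p'.2 1 (-1) * (n + 1) : ℤ) ≠ 0 := by cases p'.2 <;> simp <;> omega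
      exact ⟨0, by simpa using ha.mk_singleton_smul p (ha.eq_zero_of_ne hp hne hn)⟩

theorem lift_injective (ha : IsPingPongHeight a x₀ HasHeight) :
    Function.Injective (FreeGroup.lift a) := by
  classical
  rw [injective_iff_map_eq_one]
  intro g hg
  cases hL : g.toWord with
  | nil => exact FreeGroup.toWord_eq_nil_iff.1 hL
  | cons p L =>
    obtain ⟨n, hn⟩ := ha.exists_height_mk_smul L p (hL ▸ FreeGroup.isReduced_toWord)
    refine absurd ?_ (ha.ne_base ?_ hn)
    · rw [← hL, FreeGroup.mk_toWord, hg, one_smul]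
    · cases p.2 <;> simp <;> omega

end IsPingPongHeight

section BraidRelation

variable {G : Type*} [Group G] {x y a b : G}

theorem inv_mul_mul_mul_eq_of_braid (h : x * y * x = y * x * y) :
    y⁻¹ * x * x * y = x * (y * y) * x⁻¹ := by
  have hconj : y⁻¹ * x * y = x * y * x⁻¹ := by
    rw [eq_mul_inv_iff_mul_eq, mul_assoc, mul_assoc, inv_mul_eq_iff_eq_mul, ← mul_assoc, h,
      mul_assoc]
  calc y⁻¹ * x * x * y = (y⁻¹ * x * y) * (y⁻¹ * x * y) := by group
    _ = x * (y * y) * x⁻¹ := by rw [hconj]; group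

theorem commute_mul_mul_mul_of_braid (h : x * y * x = y * x * y) :
    Commute x (y * x * x * y) :=
  calc x * (y * x * x * y) = x * y * x * (x * y) := by simp only [mul_assoc]
    _ = y * x * (y * x * y) := by simp only [h, mul_assoc]
    _ = y * x * x * y * x := by simp only [← h, mul_assoc]

theorem conj_eq_of_commute_mul (hab : x * b * x⁻¹ = a) (h : Commute x (b * a)) :
    x * a * x⁻¹ = a⁻¹ * b * a := by
  have hba : a * (x * a * x⁻¹) = b * a := by
    rw [← h.mul_inv_cancel, ← hab]
    group
  rw [mul_assoc a⁻¹, ← hba, inv_mul_cancel_left]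

theorem inv_conj_eq_of_commute_mul (hab : x * b * x⁻¹ = a) (h : Commute x (b * a)) :
    x⁻¹ * b * x = b * a * b⁻¹ := by
  rw [eq_mul_inv_iff_mul_eq, ← h.inv_mul_cancel, ← hab]
  group

theorem mem_normalizer_closure {S : Set G} {g : G}
    (conj_mem : ∀ a ∈ S, g * a * g⁻¹ ∈ Subgroup.closure S)
    (inv_conj_mem : ∀ a ∈ S, g⁻¹ * a * g ∈ Subgroup.closure S) :
    g ∈ Subgroup.normalizer (Subgroup.closure S : Set G) := by
  rw [Subgroup.mem_normalizer_iff_map_conj_eq]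
  apply le_antisymm
  · rw [MonoidHom.map_closure, Subgroup.closure_le]
    rintro _ ⟨a, ha, rfl⟩
    exact conj_mem a ha
  · rw [Subgroup.closure_le]
    exact fun a ha => ⟨g⁻¹ * a * g, inv_conj_mem a ha, by simp [mul_assoc]⟩

end BraidRelation

/-- The elements `s 0, …, s (m - 1)` satisfy the relations of the braid group on `m + 1`
strands. -/
structure IsBraidFamily {G : Type*} [Group G] (s : ℕ → G) (m : ℕ) : Prop where
  commute {i j : ℕ} : i + 1 < j → j < m → Commute (s i) (s j)
  braid {i : ℕ} : i + 1 < m → s i * s (i + 1) * s i = s (i + 1) * s i * s (i + 1)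

section Combing

variable {G : Type*} [Group G] (s : ℕ → G)

/-- The braid `s l * s (l + 1) * ⋯ * s (m - 1)`, which moves the strand `m` to the position `l`. -/
def braidChain (m l : ℕ) : G := ((List.Ico l m).map s).prod

/-- The pure braid in which the strand `m` encircles the strand `j`. -/
def pureGen (m j : ℕ) : G := (braidChain s m (j + 1))⁻¹ * s j * braidChain s m j

/-- The subgroup of braids involving only the strands `0, …, m - 1`. -/
def strandSubgroup (m : ℕ) : Subgroup G := Subgroup.closure (s '' {i | i + 1 < m})

/-- The subgroup of pure braids in which only the strand `m` moves, among the strands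
`0, …, m - 1`. -/
def pushSubgroup (m : ℕ) : Subgroup G := Subgroup.closure (pureGen s m '' Set.Iio m)

theorem braidChain_self (m : ℕ) : braidChain s m m = 1 := by simp [braidChain]

theorem braidChain_eq_mul {m l : ℕ} (h : l < m) :
    braidChain s m l = s l * braidChain s m (l + 1) := by
  rw [braidChain, List.Ico.eq_cons h, List.map_cons, List.prod_cons, braidChain]

theorem pureGen_succ_self (m : ℕ) : pureGen s (m + 1) m = s m * s m := by
  simp [pureGen, braidChain_self, braidChain_eq_mul s m.lt_succ_self]

theorem pureGen_eq_conj {m j : ℕ} (h : j + 1 < m) :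
    pureGen s m j =
      (braidChain s m (j + 2))⁻¹ * ((s (j + 1))⁻¹ * s j * s j * s (j + 1)) *
        braidChain s m (j + 2) := by
  rw [pureGen, braidChain_eq_mul s (show j < m by omega), braidChain_eq_mul s h]
  group

theorem pureGen_succ_eq_conj {m j : ℕ} (h : j + 1 < m) :
    pureGen s m (j + 1) =
      (braidChain s m (j + 2))⁻¹ * (s (j + 1) * s (j + 1)) * braidChain s m (j + 2) := by
  rw [pureGen, braidChain_eq_mul s h]
  group

variable {s} {m i j l : ℕ}

theorem mem_strandSubgroup (h : i + 1 < m) : s i ∈ strandSubgroup s m :=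
  Subgroup.subset_closure (Set.mem_image_of_mem s h)

theorem pureGen_mem_pushSubgroup (h : j < m) : pureGen s m j ∈ pushSubgroup s m :=
  Subgroup.subset_closure (Set.mem_image_of_mem _ h)

namespace IsBraidFamily

theorem mono {n : ℕ} (hs : IsBraidFamily s n) (hmn : m ≤ n) : IsBraidFamily s m where
  commute hij hj := hs.commute hij (hj.trans_le hmn)
  braid hi := hs.braid (hi.trans_le hmn)

theorem commute_braidChain (hs : IsBraidFamily s m) (h : i + 1 < l) :
    Commute (s i) (braidChain s m l) := by
  refine Commute.list_prod_right _ _ fun x hx => ?_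
  obtain ⟨j, hj, rfl⟩ := List.mem_map.1 hx
  rw [List.Ico.mem] at hj
  exact hs.commute (by omega) hj.2

theorem semiconjBy_braidChain (hs : IsBraidFamily s m) (hl : l ≤ i) (hi : i + 1 < m) :
    SemiconjBy (braidChain s m l) (s i) (s (i + 1)) := by
  induction hl using Nat.decreasingInduction with
  | self =>
    have hcomm := hs.commute_braidChain (show i + 1 < i + 2 by omega)
    rw [braidChain_eq_mul s (show i < m by omega), braidChain_eq_mul s hi, ← mul_assoc]
    refine SemiconjBy.mul_left ?_ hcomm.symm
    rw [SemiconjBy, hs.braid hi, mul_assoc]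
  | of_succ k hk ih =>
    rw [braidChain_eq_mul s (show k < m by omega)]
    exact SemiconjBy.mul_left (hs.commute (by omega) hi) ih

theorem conj_pureGen_succ (hs : IsBraidFamily s m) (hi : i + 1 < m) :
    s i * pureGen s m (i + 1) * (s i)⁻¹ = pureGen s m i := by
  have hcomm := hs.commute_braidChain (show i + 1 < i + 2 by omega)
  rw [pureGen_eq_conj s hi, pureGen_succ_eq_conj s hi, inv_mul_mul_mul_eq_of_braid (hs.braid hi)]
  calc _ = s i * (braidChain s m (i + 2))⁻¹ * (s (i + 1) * s (i + 1)) *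
        (braidChain s m (i + 2) * (s i)⁻¹) := by simp only [mul_assoc]
    _ = _ := by rw [hcomm.inv_right.eq, ← hcomm.inv_left.eq]; simp only [mul_assoc]

theorem commute_pureGen_succ_mul_pureGen (hs : IsBraidFamily s m) (hi : i + 1 < m) :
    Commute (s i) (pureGen s m (i + 1) * pureGen s m i) := by
  have hcomm := hs.commute_braidChain (show i + 1 < i + 2 by omega)
  have hprod : pureGen s m (i + 1) * pureGen s m i = (braidChain s m (i + 2))⁻¹ *
      (s (i + 1) * s i * s i * s (i + 1)) * braidChain s m (i + 2) := by
    rw [pureGen_eq_conj s hi, pureGen_succ_eq_conj s hi]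
    group
  rw [hprod]
  exact (hcomm.inv_right.mul_right (commute_mul_mul_mul_of_braid (hs.braid hi))).mul_right hcomm

theorem commute_pureGen (hs : IsBraidFamily s m) (hi : i + 1 < m) (hj : j < m) (hij : i ≠ j)
    (hij' : i + 1 ≠ j) : Commute (s i) (pureGen s m j) := by
  rcases hij.lt_or_gt with h | h
  · exact ((hs.commute_braidChain (by omega)).inv_right.mul_right
      (hs.commute (by omega) hj)).mul_right (hs.commute_braidChain (by omega))
  · have hchain := (hs.semiconjBy_braidChain (show j + 1 ≤ i by omega) hi).inv_symm_left
    have hcomm : SemiconjBy (s j) (s (i + 1)) (s (i + 1)) := hs.commute (by omega) hi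
    exact ((hchain.mul_left hcomm).mul_left (hs.semiconjBy_braidChain h.le hi)).symm

theorem mem_normalizer_pushSubgroup (hs : IsBraidFamily s m) (hi : i + 1 < m) :
    s i ∈ Subgroup.normalizer (pushSubgroup s m : Set G) := by
  have hrec := hs.conj_pureGen_succ hi
  have hcomm := hs.commute_pureGen_succ_mul_pureGen hi
  have mem_i : pureGen s m i ∈ pushSubgroup s m := pureGen_mem_pushSubgroup (by omega)
  have mem_succ : pureGen s m (i + 1) ∈ pushSubgroup s m := pureGen_mem_pushSubgroup hi
  apply mem_normalizer_closure <;> rintro _ ⟨j, hj, rfl⟩ <;> rcases eq_or_ne i j with rfl | hij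
  · rw [conj_eq_of_commute_mul hrec hcomm]
    exact mul_mem (mul_mem (inv_mem mem_i) mem_succ) mem_i
  · rcases eq_or_ne (i + 1) j with rfl | hij'
    · rwa [hrec]
    · rw [(hs.commute_pureGen hi hj hij hij').mul_inv_cancel]
      exact pureGen_mem_pushSubgroup hj
  · rw [← hrec, ← mul_assoc, ← mul_assoc, inv_mul_cancel_right, inv_mul_cancel, one_mul]
    exact mem_succ
  · rcases eq_or_ne (i + 1) j with rfl | hij'
    · rw [inv_conj_eq_of_commute_mul hrec hcomm]
      exact mul_mem (mul_mem mem_succ mem_i) (inv_mem mem_succ)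
    · rw [(hs.commute_pureGen hi hj hij hij').inv_mul_cancel]
      exact pureGen_mem_pushSubgroup hj

theorem strandSubgroup_le_normalizer_pushSubgroup (hs : IsBraidFamily s m) :
    strandSubgroup s m ≤ Subgroup.normalizer (pushSubgroup s m : Set G) := by
  refine (Subgroup.closure_le _).2 ?_
  rintro _ ⟨i, hi, rfl⟩
  exact hs.mem_normalizer_pushSubgroup hi

theorem inv_braidChain_swap_mul_mul_braidChain_mem (hs : IsBraidFamily s m) (hi : i < m)
    (hl : l ≤ m) :
    (braidChain s m (Equiv.swap i (i + 1) l))⁻¹ * s i * braidChain s m l ∈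
      pushSubgroup s m ⊔ strandSubgroup s m := by
  rcases eq_or_ne l i with rfl | hli
  · rw [Equiv.swap_apply_left]
    exact Subgroup.mem_sup_left (pureGen_mem_pushSubgroup hi)
  rcases eq_or_ne l (i + 1) with rfl | hli'
  · rw [Equiv.swap_apply_right, mul_assoc, ← braidChain_eq_mul s hi, inv_mul_cancel]
    exact one_mem _
  rw [Equiv.swap_apply_of_ne_of_ne hli hli', mul_assoc]
  refine Subgroup.mem_sup_right ?_
  rcases hli.lt_or_gt with h | h
  · obtain ⟨k, rfl⟩ : ∃ k, i = k + 1 := ⟨i - 1, by omega⟩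
    rw [← (hs.semiconjBy_braidChain (show l ≤ k by omega) hi).eq, inv_mul_cancel_left]
    exact mem_strandSubgroup hi
  · rw [(hs.commute_braidChain (show i + 1 < l by omega)).eq, inv_mul_cancel_left]
    exact mem_strandSubgroup (by omega)

theorem exists_eq_braidChain_mul (hs : IsBraidFamily s m) {x : G}
    (hx : x ∈ strandSubgroup s (m + 1)) :
    ∃ l ≤ m, ∃ u ∈ pushSubgroup s m, ∃ h ∈ strandSubgroup s m,
      x = braidChain s m l * (u * h) := by
  suffices ∃ l ≤ m, (braidChain s m l)⁻¹ * x ∈ pushSubgroup s m ⊔ strandSubgroup s m by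
    obtain ⟨l, hl, hmem⟩ := this
    rw [← SetLike.mem_coe, Subgroup.coe_mul_of_right_le_normalizer_left _ _
      hs.strandSubgroup_le_normalizer_pushSubgroup] at hmem
    obtain ⟨u, hu, h, hh, huh⟩ := hmem
    exact ⟨l, hl, u, hu, h, hh, eq_mul_of_inv_mul_eq huh.symm⟩
  have swap_le {i l : ℕ} (hi : i < m) (hl : l ≤ m) : Equiv.swap i (i + 1) l ≤ m := by
    rw [Equiv.swap_apply_def]
    split_ifs <;> omega
  induction hx using Subgroup.closure_induction_left with
  | one => exact ⟨m, le_rfl, by simp [braidChain_self]⟩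
  | mul_left _ hi y _ ih =>
    obtain ⟨i, hi, rfl⟩ := hi
    obtain ⟨l, hl, hmem⟩ := ih
    have hi : i < m := by simpa using hi
    refine ⟨Equiv.swap i (i + 1) l, swap_le hi hl, ?_⟩
    convert mul_mem (hs.inv_braidChain_swap_mul_mul_braidChain_mem hi hl) hmem using 1
    group
  | inv_mul_cancel _ hi y _ ih =>
    obtain ⟨i, hi, rfl⟩ := hi
    obtain ⟨l, hl, hmem⟩ := ih
    have hi : i < m := by simpa using hi
    have hswap := hs.inv_braidChain_swap_mul_mul_braidChain_mem hi (swap_le hi hl)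
    rw [Equiv.swap_apply_self] at hswap
    refine ⟨Equiv.swap i (i + 1) l, swap_le hi hl, ?_⟩
    convert mul_mem (inv_mem hswap) hmem using 1
    group

end IsBraidFamily

end Combing

/-- The free product of copies of the group of order two indexed by `ι`. The group of order two is
realised as `ℤˣ`. -/
abbrev InvolutionProduct (ι : Type*) : Type _ := Monoid.CoprodI fun _ : ι => ℤˣ

namespace InvolutionProduct

open Monoid

section Basic

variable {ι H : Type*} [Group H]

/-- The involution generating the factor with index `i`. -/
def gen (i : ι) : InvolutionProduct ι := CoprodI.of (i := i) (-1 : ℤˣ)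

@[simp]
theorem gen_mul_self (i : ι) : gen i * gen i = 1 := by
  simp [gen, ← map_mul]

@[simp]
theorem gen_mul_cancel_left (i : ι) (g : InvolutionProduct ι) : gen i * (gen i * g) = g := by
  rw [← mul_assoc, gen_mul_self, one_mul]

@[simp]
theorem inv_gen (i : ι) : (gen i)⁻¹ = gen i := inv_eq_of_mul_eq_one_left (gen_mul_self i)

theorem gen_ne_one (i : ι) : gen i ≠ 1 := by
  classical
  exact (map_ne_one_iff _ (CoprodI.of_injective i)).2 (by decide)

/-- The homomorphism from the group of order two determined by an element of square one. -/
def unitsHom (x : H) (hx : x * x = 1) : ℤˣ →* H where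
  toFun u := if u = 1 then 1 else x
  map_one' := if_pos rfl
  map_mul' u v := by
    rcases Int.units_eq_one_or u with rfl | rfl <;> rcases Int.units_eq_one_or v with rfl | rfl <;>
      simp [hx]

/-- The universal property of the free product: a family of elements of square one extends to a
homomorphism. -/
def lift (f : ι → H) (hf : ∀ i, f i * f i = 1) : InvolutionProduct ι →* H :=
  CoprodI.lift fun i => unitsHom (f i) (hf i)

@[simp]
theorem lift_gen (f : ι → H) (hf : ∀ i, f i * f i = 1) (i : ι) : lift f hf (gen i) = f i := by
  simp [lift, gen, unitsHom]

theorem hom_ext {f g : InvolutionProduct ι →* H} (h : ∀ i, f (gen i) = g (gen i)) : f = g := by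
  refine CoprodI.ext_hom f g fun i => MonoidHom.ext fun u => ?_
  rcases Int.units_eq_one_or u with rfl | rfl
  · simp only [map_one]
  · exact h i

theorem mulAut_ext {f g : MulAut (InvolutionProduct ι)} (h : ∀ i, f (gen i) = g (gen i)) :
    f = g :=
  MulEquiv.toMonoidHom_injective (hom_ext h)

end Basic

section Head

variable {ι : Type*} [DecidableEq ι] {i j k : ι} {g h q : InvolutionProduct ι}

/-- The index of the first letter of the reduced word representing `g`; it is `none` for `g = 1`. -/
def head (g : InvolutionProduct ι) : Option ι := (CoprodI.Word.equiv g).fstIdx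

@[simp]
theorem head_one : head (1 : InvolutionProduct ι) = none := by
  simp [head, CoprodI.Word.equiv, CoprodI.Word.fstIdx, CoprodI.Word.empty]

theorem head_gen_mul (h : head g ≠ some i) : head (gen i * g) = some i := by
  have hfst : (CoprodI.Word.equiv g).fstIdx ≠ some i := h
  have hcons : CoprodI.Word.equiv (gen i * g) =
      CoprodI.Word.cons (M := fun _ => ℤˣ) (-1) (CoprodI.Word.equiv g) hfst (by decide) := by
    rw [CoprodI.Word.cons_eq_smul]
    exact mul_smul (gen i) g (CoprodI.Word.empty (M := fun _ : ι => ℤˣ))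
  rw [head, hcons, CoprodI.Word.fstIdx_cons]

theorem head_gen (i : ι) : head (gen i) = some i := by
  simpa using head_gen_mul (g := 1) (i := i) (by simp)

@[elab_as_elim]
theorem reduced_induction {motive : InvolutionProduct ι → Prop} (g : InvolutionProduct ι)
    (one : motive 1)
    (gen_mul : ∀ i g, head g ≠ some i → motive g → motive (gen i * g)) : motive g := by
  suffices ∀ w : CoprodI.Word fun _ : ι => ℤˣ, motive w.prod by
    simpa [CoprodI.Word.equiv] using this (CoprodI.Word.equiv g)
  intro w
  induction w using CoprodI.Word.consRecOn with
  | empty => simpa using one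
  | cons i u w hw hu ih =>
    obtain rfl : u = -1 := (Int.units_eq_one_or u).resolve_left hu
    rw [CoprodI.Word.prod_cons]
    exact gen_mul i _ (by rwa [← CoprodI.Word.equiv.apply_symm_apply w] at hw) ih

theorem head_mul_gen (g : InvolutionProduct ι) (i : ι) :
    g = 1 ∨ g = gen i ∨ head (g * gen i) = head g := by
  induction g using reduced_induction with
  | one => exact Or.inl rfl
  | gen_mul k g hg ih =>
    right
    rcases ih with rfl | rfl | ih
    · rcases eq_or_ne k i with rfl | hki
      · exact Or.inl (mul_one _)
      · right
        rw [mul_one, head_gen, head_gen_mul (by rw [head_gen]; simpa using hki.symm)]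
    · right
      rw [mul_assoc, gen_mul_self, mul_one, head_gen, head_gen_mul hg]
    · right
      rw [mul_assoc, head_gen_mul hg, head_gen_mul (ih ▸ hg)]

theorem inv_mul_gen_mul_ne (hh : head h = some k) (hki : k ≠ i) :
    h⁻¹ * gen i * h ≠ gen i := by
  intro hcomm
  have hcomm : gen i * h = h * gen i := by
    rwa [mul_assoc, inv_mul_eq_iff_eq_mul] at hcomm
  rcases head_mul_gen h i with rfl | rfl | hhead
  · simp at hh
  · exact hki (by simpa [head_gen] using hh.symm)
  · rw [← hcomm, head_gen_mul (by simpa [hh] using hki), hh] at hhead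
    exact hki (by simpa using hhead.symm)

end Head

section Dihedral

variable {ι : Type*} {i j k m : ι} {d q : InvolutionProduct ι}

/-- The product of two generators; it generates the rotations of the infinite dihedral group
generated by these two. -/
def rot (j m : ι) : InvolutionProduct ι := gen j * gen m

theorem inv_rot (j m : ι) : (rot j m)⁻¹ = rot m j := by simp [rot]

theorem gen_right_mul_rot_zpow (j m : ι) (e : ℤ) :
    gen m * rot j m ^ e = gen j * rot j m ^ (e + 1) := by
  rw [add_comm, zpow_add, zpow_one, rot, mul_assoc, gen_mul_cancel_left]

/-- The infinite dihedral subgroup generated by two of the involutions. -/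
def dihedral (j m : ι) : Subgroup (InvolutionProduct ι) := Subgroup.closure {gen j, gen m}

theorem gen_left_mem_dihedral (j m : ι) : gen j ∈ dihedral j m :=
  Subgroup.subset_closure (by simp)

theorem gen_right_mem_dihedral (j m : ι) : gen m ∈ dihedral j m :=
  Subgroup.subset_closure (by simp)

theorem rot_zpow_mem_dihedral (j m : ι) (e : ℤ) : rot j m ^ e ∈ dihedral j m :=
  zpow_mem (mul_mem (gen_left_mem_dihedral j m) (gen_right_mem_dihedral j m)) e

theorem eq_rot_zpow_or_of_mem_dihedral (hd : d ∈ dihedral j m) :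
    ∃ e : ℤ, d = rot j m ^ e ∨ d = gen m * rot j m ^ e := by
  have left_mul (g : InvolutionProduct ι) (hg : ∃ e : ℤ, g = rot j m ^ e ∨ g = gen m * rot j m ^ e)
      (x : InvolutionProduct ι) (hx : x ∈ ({gen j, gen m} : Set _)) :
      ∃ e : ℤ, x * g = rot j m ^ e ∨ x * g = gen m * rot j m ^ e := by
    obtain ⟨e, rfl | rfl⟩ := hg <;> rcases hx with rfl | rfl
    · exact ⟨e - 1, Or.inr (by rw [gen_right_mul_rot_zpow, sub_add_cancel])⟩
    · exact ⟨e, Or.inr rfl⟩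
    · exact ⟨e + 1, Or.inl (by rw [gen_right_mul_rot_zpow, gen_mul_cancel_left])⟩
    · exact ⟨e, Or.inl (gen_mul_cancel_left m _)⟩
  induction hd using Subgroup.closure_induction_left with
  | one => exact ⟨0, Or.inl (zpow_zero _).symm⟩
  | mul_left x hx g _ ih => exact left_mul g ih x hx
  | inv_mul_cancel x hx g _ ih =>
    have hinv : x⁻¹ = x := by rcases hx with rfl | rfl <;> exact inv_gen _
    rw [hinv]
    exact left_mul g ih x hx

/-- The reduced word of `q` starts with neither `j` nor `m`, so that it is the shortest element of
its coset `dihedral j m * q`. -/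
structure IsCosetMin [DecidableEq ι] (j m : ι) (q : InvolutionProduct ι) : Prop where
  head_ne_left : head q ≠ some j
  head_ne_right : head q ≠ some m

variable [DecidableEq ι]

theorem isCosetMin_one (j m : ι) : IsCosetMin j m 1 := by constructor <;> simp

theorem IsCosetMin.of_head_eq {q' : InvolutionProduct ι} (hq : IsCosetMin j m q)
    (h : head q' = head q) : IsCosetMin j m q' :=
  ⟨h ▸ hq.head_ne_left, h ▸ hq.head_ne_right⟩

theorem isCosetMin_of_head_eq_some (h : head q = some k) (hj : k ≠ j) (hm : k ≠ m) :
    IsCosetMin j m q :=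
  ⟨by simpa [h] using hj, by simpa [h] using hm⟩

theorem head_rot_pow_succ_mul (hjm : j ≠ m) (hq : head q ≠ some m) (n : ℕ) :
    head (rot j m ^ (n + 1) * q) = some j := by
  have rot_mul {g : InvolutionProduct ι} (hg : head g ≠ some m) : head (rot j m * g) = some j := by
    rw [rot, mul_assoc, head_gen_mul (by rw [head_gen_mul hg]; simpa using hjm.symm)]
  induction n with
  | zero => simpa using rot_mul hq
  | succ n ih =>
    rw [pow_succ', mul_assoc]
    exact rot_mul (by simpa [ih] using hjm)

theorem head_rot_zpow_mul_of_pos (hjm : j ≠ m) (hq : head q ≠ some m) {e : ℤ} (he : 0 < e) :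
    head (rot j m ^ e * q) = some j := by
  obtain ⟨n, rfl⟩ : ∃ n : ℕ, e = (n + 1 : ℕ) := ⟨(e - 1).toNat, by omega⟩
  rw [zpow_natCast, head_rot_pow_succ_mul hjm hq]

theorem head_rot_zpow_mul_of_neg (hjm : j ≠ m) (hq : head q ≠ some j) {e : ℤ} (he : e < 0) :
    head (rot j m ^ e * q) = some m := by
  rw [← neg_neg e, zpow_neg, ← inv_zpow, inv_rot, head_rot_zpow_mul_of_pos hjm.symm hq (by omega)]

theorem head_gen_right_mul_rot_zpow_mul_of_neg (hjm : j ≠ m) (hq : head q ≠ some j) {e : ℤ}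
    (he : e < 0) : head (gen m * (rot j m ^ e * q)) = some j := by
  rw [← mul_assoc, gen_right_mul_rot_zpow, mul_assoc]
  refine head_gen_mul ?_
  rcases (show e + 1 ≤ 0 by omega).eq_or_lt with he' | he'
  · simpa [he'] using hq
  · rw [head_rot_zpow_mul_of_neg hjm hq he']
    simpa using hjm.symm

theorem IsCosetMin.head_mul_of_mem_dihedral (hq : IsCosetMin j m q) (hjm : j ≠ m)
    (hd : d ∈ dihedral j m) (hd1 : d ≠ 1) :
    head (d * q) = some j ∨ head (d * q) = some m := by
  obtain ⟨e, rfl | rfl⟩ := eq_rot_zpow_or_of_mem_dihedral hd <;>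
    rcases lt_trichotomy e 0 with he | rfl | he
  · exact Or.inr (head_rot_zpow_mul_of_neg hjm hq.head_ne_left he)
  · exact absurd (zpow_zero _) hd1
  · exact Or.inl (head_rot_zpow_mul_of_pos hjm hq.head_ne_right he)
  · exact Or.inl (mul_assoc (gen m) _ q ▸
      head_gen_right_mul_rot_zpow_mul_of_neg hjm hq.head_ne_left he)
  · simpa using Or.inr (head_gen_mul hq.head_ne_right)
  · refine Or.inr (mul_assoc (gen m) _ q ▸ head_gen_mul ?_)
    simpa [head_rot_zpow_mul_of_pos hjm hq.head_ne_right he] using hjm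

end Dihedral

section PointPush

variable {ι : Type*} {j m : ι} {ε : ι → ℤˣ} {s : ℤ} {f : MulAut (InvolutionProduct ι)}
  {d g q x : InvolutionProduct ι}

/-- The algebraic form of the automorphisms induced by pushing the point `m` `s` times around the
point `j`: every generator is conjugated by a power of `rot j m`, and the power depends only on the
side `ε` of the pushing path on which the generator lies. -/
structure IsPointPush (j m : ι) (ε : ι → ℤˣ) (s : ℤ) (f : MulAut (InvolutionProduct ι)) :
    Prop where
  apply_gen_left : f (gen j) = MulAut.conj (rot j m ^ s) (gen j)
  apply_gen_right : f (gen m) = MulAut.conj (rot j m ^ s) (gen m)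
  apply_gen_of_ne {k : ι} : k ≠ j → k ≠ m →
    f (gen k) = MulAut.conj (rot j m ^ (s * (1 + ε k))) (gen k)

namespace IsPointPush

theorem apply_rot_zpow (hf : IsPointPush j m ε s f) (e : ℤ) : f (rot j m ^ e) = rot j m ^ e := by
  have hrot : f (rot j m) = rot j m := by
    rw [rot, map_mul, hf.apply_gen_left, hf.apply_gen_right, ← map_mul, ← rot, MulAut.conj_apply,
      ← zpow_add_one, add_comm, zpow_one_add, mul_inv_cancel_right]
  rw [map_zpow, hrot]

theorem inv (hf : IsPointPush j m ε s f) : IsPointPush j m ε (-s) f⁻¹ := by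
  have inv_apply {e : ℤ} {y : InvolutionProduct ι} (h : f y = MulAut.conj (rot j m ^ e) y) :
      f⁻¹ y = MulAut.conj (rot j m ^ (-e)) y := by
    rw [MulAut.inv_apply, MulEquiv.symm_apply_eq, MulAut.conj_apply, map_mul, map_mul, map_inv,
      hf.apply_rot_zpow, h, ← MulAut.conj_apply, ← MulAut.mul_apply, ← map_mul, ← zpow_add,
      neg_add_cancel, zpow_zero, map_one, MulAut.one_apply]
  exact ⟨inv_apply hf.apply_gen_left, inv_apply hf.apply_gen_right,
    fun hj hm => neg_mul s _ ▸ inv_apply (hf.apply_gen_of_ne hj hm)⟩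

theorem rot_zpow_neg_mul_apply_mul (hf : IsPointPush j m ε s f) (hd : d ∈ dihedral j m)
    (g : InvolutionProduct ι) :
    rot j m ^ (-s) * f (d * g) = d * (rot j m ^ (-s) * f g) := by
  have hgen : Set.EqOn f.toMonoidHom (MulAut.conj (rot j m ^ s)).toMonoidHom {gen j, gen m} := by
    rintro _ (rfl | rfl)
    · exact hf.apply_gen_left
    · exact hf.apply_gen_right
  have hconj : f d = MulAut.conj (rot j m ^ s) d := MonoidHom.eqOn_closure hgen hd
  rw [map_mul, hconj, MulAut.conj_apply, zpow_neg]
  group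

theorem rot_zpow_neg_mul_apply_gen_mul (hf : IsPointPush j m ε s f) {k : ι} (hj : k ≠ j)
    (hm : k ≠ m) (g : InvolutionProduct ι) :
    rot j m ^ (-s) * f (gen k * g) =
      rot j m ^ (ε k * s) * (gen k * (rot j m ^ (-(ε k * s)) * (rot j m ^ (-s) * f g))) := by
  rw [map_mul, hf.apply_gen_of_ne hj hm, MulAut.conj_apply]
  group

end IsPointPush

variable [DecidableEq ι]

/-- The sign of the first letter of the reduced word of `q`. The value at `q = 1` is `-1` because a
push `f` satisfies `rot j m ^ (-s) * f 1 = rot j m ^ (-s)`; see `IsPointPush.exists_apply_eq`. -/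
def headSign (ε : ι → ℤˣ) (q : InvolutionProduct ι) : ℤˣ := (head q).elim (-1) ε

/-- The point `x` is the conjugate of `gen m` by `rot j m ^ (± e) * q`, where `q` is the shortest
element of its coset and determines the sign. -/
def HasPushHeight (ε : ι → ℤˣ) (j m : ι) (e : ℤ) (x : InvolutionProduct ι) : Prop :=
  ∃ q h, IsCosetMin j m q ∧ h = rot j m ^ (headSign ε q * e) * q ∧ x = h⁻¹ * gen m * h

theorem HasPushHeight.exists_head_eq {e : ℤ} (hx : HasPushHeight ε j m e x) (hjm : j ≠ m)
    (he : e ≠ 0) : ∃ h, head h = some j ∧ x = h⁻¹ * gen m * h := by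
  obtain ⟨q, h, hq, rfl, rfl⟩ := hx
  have hne : (headSign ε q * e : ℤ) ≠ 0 := mul_ne_zero (Units.ne_zero _) he
  rcases hne.lt_or_gt with hneg | hpos
  · refine ⟨_, head_gen_right_mul_rot_zpow_mul_of_neg hjm hq.head_ne_left hneg, ?_⟩
    simp [mul_assoc]
  · exact ⟨_, head_rot_zpow_mul_of_pos hjm hq.head_ne_right hpos, rfl⟩

namespace IsPointPush

theorem exists_apply_eq (hf : IsPointPush j m ε s f) (hjm : j ≠ m) (g : InvolutionProduct ι) :
    ∃ d ∈ dihedral j m, ∃ q q', IsCosetMin j m q ∧ head q' = head q ∧ g = d * q ∧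
      rot j m ^ (-s) * f g = d * (rot j m ^ (headSign ε q * s) * q') := by
  induction g using reduced_induction with
  | one => exact ⟨1, one_mem _, 1, 1, isCosetMin_one j m, rfl, by simp, by simp [headSign]⟩
  | gen_mul k g hg ih =>
    obtain ⟨d, hd, q, q', hq, hq', rfl, hfg⟩ := ih
    by_cases hk : gen k ∈ dihedral j m
    · refine ⟨gen k * d, mul_mem hk hd, q, q', hq, hq', (mul_assoc _ _ _).symm, ?_⟩
      rw [hf.rot_zpow_neg_mul_apply_mul hk, hfg, mul_assoc]
    have hkj : k ≠ j := by rintro rfl; exact hk (gen_left_mem_dihedral _ _)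
    have hkm : k ≠ m := by rintro rfl; exact hk (gen_right_mem_dihedral _ _)
    set d' := rot j m ^ (-(ε k * s)) * (d * rot j m ^ (headSign ε q * s)) with hd'
    have hd'_mem : d' ∈ dihedral j m :=
      mul_mem (rot_zpow_mem_dihedral _ _ _) (mul_mem hd (rot_zpow_mem_dihedral _ _ _))
    have head_ne : head (d' * q') ≠ some k := by
      by_cases hd1 : d' = 1
      · rw [hd1, one_mul, hq']
        intro hqk
        have hsign : headSign ε q = ε k := by rw [headSign, hqk, Option.elim_some]
        rw [hd', zpow_neg, inv_mul_eq_one, hsign, eq_comm, mul_eq_right] at hd1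
        exact hg (by rwa [hd1, one_mul])
      · rcases (hq.of_head_eq hq').head_mul_of_mem_dihedral hjm hd'_mem hd1 with h | h <;>
          simpa [h] using Ne.symm ‹_›
    have head_gen_k : head (gen k * (d * q)) = some k := head_gen_mul hg
    refine ⟨1, one_mem _, gen k * (d * q), gen k * (d' * q'),
      isCosetMin_of_head_eq_some head_gen_k hkj hkm, by rw [head_gen_k, head_gen_mul head_ne],
      (one_mul _).symm, ?_⟩
    have hsign : headSign ε (gen k * (d * q)) = ε k := by
      rw [headSign, head_gen_k, Option.elim_some]
    rw [hf.rot_zpow_neg_mul_apply_gen_mul hkj hkm, hfg, hsign, hd']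
    simp only [one_mul, mul_assoc]

theorem exists_apply_eq_of_isCosetMin (hf : IsPointPush j m ε s f) (hjm : j ≠ m)
    (hq : IsCosetMin j m q) :
    ∃ q', head q' = head q ∧ rot j m ^ (-s) * f q = rot j m ^ (headSign ε q * s) * q' := by
  obtain ⟨d, hd, q₀, q', hq₀, hq', rfl, hfq⟩ := hf.exists_apply_eq hjm q
  obtain rfl : d = 1 := by
    by_contra hd1
    exact (hq₀.head_mul_of_mem_dihedral hjm hd hd1).elim hq.head_ne_left hq.head_ne_right
  exact ⟨q', by simpa using hq', by simpa using hfq⟩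

theorem hasPushHeight_apply (hf : IsPointPush j m ε s f) (hjm : j ≠ m) {e : ℤ}
    (hx : HasPushHeight ε j m e x) : HasPushHeight ε j m (e + s) (f x) := by
  obtain ⟨q, h, hq, rfl, rfl⟩ := hx
  obtain ⟨q', hq', hfq⟩ := hf.exists_apply_eq_of_isCosetMin hjm hq
  have hsign : headSign ε q' = headSign ε q := by rw [headSign, hq', headSign]
  have hfh : rot j m ^ (-s) * f (rot j m ^ (headSign ε q * e) * q) =
      rot j m ^ (headSign ε q' * (e + s)) * q' := by
    rw [hf.rot_zpow_neg_mul_apply_mul (rot_zpow_mem_dihedral _ _ _), hfq, ← mul_assoc, ← zpow_add,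
      ← mul_add, hsign]
  refine ⟨q', _, hq.of_head_eq hq', hfh, ?_⟩
  rw [map_mul, map_mul, map_inv, hf.apply_gen_right, MulAut.conj_apply]
  group

theorem isPingPongHeight {κ : Type*} {p : κ → ι} (hp : Function.Injective p) (hpm : ∀ i, p i ≠ m)
    {ε : κ → ι → ℤˣ} {a : κ → MulAut (InvolutionProduct ι)}
    (ha : ∀ i, IsPointPush (p i) m (ε i) 1 (a i)) :
    IsPingPongHeight a (gen m) fun i => HasPushHeight (ε i) (p i) m where
  base i := ⟨1, 1, isCosetMin_one _ _, by simp, by simp⟩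
  smul {i _ _} hx := (ha i).hasPushHeight_apply (hpm i) hx
  inv_smul {i _ _} hx := (ha i).inv.hasPushHeight_apply (hpm i) hx
  eq_zero_of_ne {i j _ _} hij he hx := by
    obtain ⟨h, hh, rfl⟩ := hx.exists_head_eq (hpm j) he
    exact ⟨h, h, isCosetMin_of_head_eq_some hh (hp.ne hij.symm) (hpm j), by simp, rfl⟩
  ne_base {i _ _} he hx := by
    obtain ⟨h, hh, rfl⟩ := hx.exists_head_eq (hpm i) he
    exact inv_mul_gen_mul_ne hh (hpm i)

end IsPointPush

end PointPush

section Erase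

variable {ι : Type*} [DecidableEq ι] {j k m : ι} {ε : ι → ℤˣ} {s : ℤ}
  {f : MulAut (InvolutionProduct ι)}

/-- The endomorphism that kills the generator with index `m` and fixes the other generators. -/
def erase (m : ι) : InvolutionProduct ι →* InvolutionProduct ι :=
  lift (fun i => if i = m then 1 else gen i) fun i => by split_ifs <;> simp

theorem erase_gen_self (m : ι) : erase m (gen m) = 1 := by simp [erase]

theorem erase_gen_of_ne (h : k ≠ m) : erase m (gen k) = gen k := by simp [erase, h]

theorem IsPointPush.erase_apply (hf : IsPointPush j m ε s f) (hjm : j ≠ m)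
    (g : InvolutionProduct ι) : erase m (f g) = erase m g := by
  have erase_rot : erase m (rot j m) = gen j := by
    rw [rot, map_mul, erase_gen_self, erase_gen_of_ne hjm, mul_one]
  have gen_zpow_even (e : ℤ) (he : Even e) : gen j ^ e = 1 := by
    obtain ⟨c, rfl⟩ := he
    rw [← two_mul, zpow_mul, zpow_ofNat, pow_two, gen_mul_self, one_zpow]
  suffices (erase m).comp f.toMonoidHom = erase m from DFunLike.congr_fun this g
  refine hom_ext fun k => ?_
  change erase m (f (gen k)) = erase m (gen k)
  rcases eq_or_ne k j with rfl | hkj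
  · rw [hf.apply_gen_left, MulAut.conj_apply, map_mul, map_mul, map_inv, map_zpow, erase_rot,
      erase_gen_of_ne hjm, ((Commute.refl _).zpow_left s).mul_inv_cancel]
  rcases eq_or_ne k m with rfl | hkm
  · rw [hf.apply_gen_right, MulAut.conj_apply, map_mul, map_mul, map_inv, erase_gen_self, mul_one,
      mul_inv_cancel]
  · have heven : Even (s * (1 + ε k)) := by
      rcases Int.units_eq_one_or (ε k) with h | h <;> simp [h]
    rw [hf.apply_gen_of_ne hkj hkm, MulAut.conj_apply, map_mul, map_mul, map_inv, map_zpow,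
      erase_rot, gen_zpow_even _ heven, one_mul, inv_one, mul_one]

end Erase

section BraidAut

variable {i j k m : ℕ} {f : MulAut (InvolutionProduct ℕ)}

/-- The automorphism by which the braid generator `σ_i` acts:
`b_i ↦ b_i b_{i+1} b_i` and `b_{i+1} ↦ b_i`. -/
def braidAut (i : ℕ) : MulAut (InvolutionProduct ℕ) :=
  MonoidHom.toMulEquiv
    (lift (fun k => if k = i then gen i * gen (i + 1) * gen i else
        if k = i + 1 then gen i else gen k)
      fun k => by split_ifs <;> simp [mul_assoc])
    (lift (fun k => if k = i then gen (i + 1) else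
        if k = i + 1 then gen (i + 1) * gen i * gen (i + 1) else gen k)
      fun k => by split_ifs <;> simp [mul_assoc])
    (hom_ext fun k => by
      by_cases hk : k = i <;> by_cases hk' : k = i + 1 <;> simp [hk, hk', mul_assoc])
    (hom_ext fun k => by
      by_cases hk : k = i <;> by_cases hk' : k = i + 1 <;> simp [hk, hk', mul_assoc])

theorem braidAut_gen_self (i : ℕ) : braidAut i (gen i) = gen i * gen (i + 1) * gen i := by
  simp [braidAut]

theorem braidAut_gen_succ (i : ℕ) : braidAut i (gen (i + 1)) = gen i := by
  simp [braidAut]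

theorem braidAut_gen_of_ne (hi : k ≠ i) (hi' : k ≠ i + 1) : braidAut i (gen k) = gen k := by
  simp [braidAut, hi, hi']

theorem commute_braidAut (hij : i + 1 < j) : Commute (braidAut i) (braidAut j) := by
  refine mulAut_ext fun k => ?_
  have ji : braidAut j (gen i) = gen i := braidAut_gen_of_ne (by omega) (by omega)
  have ji' : braidAut j (gen (i + 1)) = gen (i + 1) := braidAut_gen_of_ne (by omega) (by omega)
  have ij : braidAut i (gen j) = gen j := braidAut_gen_of_ne (by omega) (by omega)
  have ij' : braidAut i (gen (j + 1)) = gen (j + 1) := braidAut_gen_of_ne (by omega) (by omega)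
  simp only [MulAut.mul_apply]
  by_cases hki : k = i
  · simp only [hki, braidAut_gen_self, ji, ji', map_mul]
  by_cases hki' : k = i + 1
  · simp only [hki', braidAut_gen_succ, ji, ji']
  by_cases hkj : k = j
  · simp only [hkj, braidAut_gen_self, ij, ij', map_mul]
  by_cases hkj' : k = j + 1
  · simp only [hkj', braidAut_gen_succ, ij, ij']
  · simp only [braidAut_gen_of_ne hki hki', braidAut_gen_of_ne hkj hkj']

theorem braidAut_braid (i : ℕ) :
    braidAut i * braidAut (i + 1) * braidAut i =
      braidAut (i + 1) * braidAut i * braidAut (i + 1) := by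
  refine mulAut_ext fun k => ?_
  have succ_fix : braidAut (i + 1) (gen i) = gen i := braidAut_gen_of_ne (by omega) (by omega)
  have fix_succ : braidAut i (gen (i + 1 + 1)) = gen (i + 1 + 1) :=
    braidAut_gen_of_ne (by omega) (by omega)
  simp only [MulAut.mul_apply]
  by_cases hk : k = i
  · simp [hk, braidAut_gen_self, braidAut_gen_succ, succ_fix, fix_succ, mul_assoc]
  by_cases hk' : k = i + 1
  · simp [hk', braidAut_gen_self, braidAut_gen_succ, succ_fix, fix_succ, mul_assoc]
  by_cases hk'' : k = i + 1 + 1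
  · simp [hk'', braidAut_gen_succ, succ_fix, fix_succ]
  · simp only [braidAut_gen_of_ne hk hk', braidAut_gen_of_ne hk' hk'']

theorem erase_braidAut (hi : i + 1 < m) (g : InvolutionProduct ℕ) :
    erase m (braidAut i g) = braidAut i (erase m g) := by
  suffices (erase m).comp (braidAut i).toMonoidHom = (braidAut i).toMonoidHom.comp (erase m) from
    DFunLike.congr_fun this g
  refine hom_ext fun k => ?_
  change erase m (braidAut i (gen k)) = braidAut i (erase m (gen k))
  have erase_i : erase m (gen i) = gen i := erase_gen_of_ne (by omega)
  have erase_succ : erase m (gen (i + 1)) = gen (i + 1) := erase_gen_of_ne (by omega)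
  by_cases hk : k = i
  · simp only [hk, braidAut_gen_self, map_mul, erase_i, erase_succ]
  by_cases hk' : k = i + 1
  · simp only [hk', braidAut_gen_succ, erase_i, erase_succ]
  rw [braidAut_gen_of_ne hk hk']
  rcases eq_or_ne k m with rfl | hkm
  · rw [erase_gen_self, map_one]
  · rw [erase_gen_of_ne hkm, braidAut_gen_of_ne hk hk']

/-- The side of the path from `m` to `j` on which the point `k` lies, when the points are on a line
and the path passes all of those strictly between `j` and `m` on the same side. -/
def pathSide (j m k : ℕ) : ℤˣ := if j < k ∧ k < m then 1 else -1

theorem isPointPush_braidAut_mul_self (j : ℕ) :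
    IsPointPush j (j + 1) (pathSide j (j + 1)) 1 (braidAut j * braidAut j) where
  apply_gen_left := by
    simp [MulAut.mul_apply, braidAut_gen_self, braidAut_gen_succ, rot, mul_assoc]
  apply_gen_right := by
    simp [MulAut.mul_apply, braidAut_gen_self, braidAut_gen_succ, rot, mul_assoc]
  apply_gen_of_ne {k} hkj hkm := by
    have hside : pathSide j (j + 1) k = -1 := if_neg (by omega)
    simp [MulAut.mul_apply, braidAut_gen_of_ne hkj hkm, hside]

theorem IsPointPush.braidAut_conj (hf : IsPointPush (j + 1) m (pathSide (j + 1) m) 1 f)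
    (hjm : j + 1 < m) :
    IsPointPush j m (pathSide j m) 1 (braidAut j * f * (braidAut j)⁻¹) := by
  have gen_m : braidAut j (gen m) = gen m := braidAut_gen_of_ne (by omega) (by omega)
  have map_rot : braidAut j (rot (j + 1) m) = rot j m := by
    rw [rot, map_mul, braidAut_gen_succ, gen_m, rot]
  have conj_apply {x y : InvolutionProduct ℕ} (hy : braidAut j y = x) :
      (braidAut j * f * (braidAut j)⁻¹) x = braidAut j (f y) := by
    rw [← hy, MulAut.mul_apply, MulAut.inv_apply_self, MulAut.mul_apply]
  have conj_apply_of_eq {x y : InvolutionProduct ℕ} {e : ℤ} (hy : braidAut j y = x)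
      (hfy : f y = MulAut.conj (rot (j + 1) m ^ e) y) :
      (braidAut j * f * (braidAut j)⁻¹) x = MulAut.conj (rot j m ^ e) x := by
    rw [conj_apply hy, hfy, MulAut.conj_apply, map_mul, map_mul, map_inv, map_zpow, map_rot, hy,
      MulAut.conj_apply]
  refine ⟨conj_apply_of_eq (braidAut_gen_succ j) hf.apply_gen_left,
    conj_apply_of_eq gen_m hf.apply_gen_right, fun {k} hkj hkm => ?_⟩
  by_cases hk : k = j + 1
  · have hside : pathSide j m (j + 1) = 1 := if_pos (by omega)
    have hside' : pathSide (j + 1) m j = -1 := if_neg (by omega)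
    have hfj : f (gen j) = gen j := by
      simp [hf.apply_gen_of_ne (show j ≠ j + 1 by omega) (show j ≠ m by omega), hside']
    have hpre : braidAut j (gen (j + 1) * gen j * gen (j + 1)) = gen (j + 1) := by
      simp [braidAut_gen_self, braidAut_gen_succ, mul_assoc]
    rw [hk, conj_apply hpre, map_mul f, map_mul f, hf.apply_gen_left, hfj, hside]
    simp [gen_m, braidAut_gen_succ, braidAut_gen_self, rot, mul_assoc, pow_two]
  · have hside : pathSide j m k = pathSide (j + 1) m k := by
      unfold pathSide
      congr 1
      simp only [eq_iff_iff]
      omega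
    rw [hside]
    exact conj_apply_of_eq (braidAut_gen_of_ne hkj hk) (hf.apply_gen_of_ne hk hkm)

end BraidAut

section Faithful

variable {G : Type*} [Group G] {s : ℕ → G} {m : ℕ} {ρ : G →* MulAut (InvolutionProduct ℕ)}

theorem apply_braidChain_gen (hρ : ∀ i < m, ρ (s i) = braidAut i) {l : ℕ} (hl : l ≤ m) :
    ρ (braidChain s m l) (gen m) = gen l := by
  induction hl using Nat.decreasingInduction with
  | self => rw [braidChain_self, map_one, MulAut.one_apply]
  | of_succ k hk ih =>
    rw [braidChain_eq_mul s hk, map_mul, MulAut.mul_apply, ih, hρ k hk, braidAut_gen_succ]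

theorem isPointPush_pureGen (hs : IsBraidFamily s m) (hρ : ∀ i < m, ρ (s i) = braidAut i) {j : ℕ}
    (hj : j < m) : IsPointPush j m (pathSide j m) 1 (ρ (pureGen s m j)) := by
  obtain ⟨n, rfl⟩ : ∃ n, m = n + 1 := ⟨m - 1, by omega⟩
  induction Nat.le_of_lt_succ hj using Nat.decreasingInduction with
  | self =>
    rw [pureGen_succ_self, map_mul, hρ n hj]
    exact isPointPush_braidAut_mul_self n
  | of_succ k hk ih =>
    rw [← hs.conj_pureGen_succ (show k + 1 < n + 1 by omega), map_mul, map_mul, map_inv,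
      hρ k (by omega)]
    exact (ih (by omega)).braidAut_conj (by omega)

theorem apply_gen_of_mem_strandSubgroup (hρ : ∀ i, i + 1 < m → ρ (s i) = braidAut i) {h : G}
    (hh : h ∈ strandSubgroup s m) {k : ℕ} (hk : m ≤ k) : ρ h (gen k) = gen k := by
  suffices strandSubgroup s m ≤ (MulAction.stabilizer (MulAut _) (gen k)).comap ρ from this hh
  refine (Subgroup.closure_le _).2 ?_
  rintro _ ⟨i, hi, rfl⟩
  have hi : i + 1 < m := hi
  change ρ (s i) (gen k) = gen k
  rw [hρ i hi, braidAut_gen_of_ne (by omega) (by omega)]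

theorem erase_apply_of_mem_strandSubgroup (hρ : ∀ i < m, ρ (s i) = braidAut i) {h : G}
    (hh : h ∈ strandSubgroup s m) (g : InvolutionProduct ℕ) :
    erase m (ρ h g) = ρ h (erase m g) := by
  refine map_apply_eq_of_mem_closure ?_ hh g
  rintro _ ⟨i, hi, rfl⟩
  have hi : i + 1 < m := hi
  rw [hρ i (by omega)]
  exact erase_braidAut hi

theorem erase_apply_of_mem_pushSubgroup (hs : IsBraidFamily s m)
    (hρ : ∀ i < m, ρ (s i) = braidAut i) {u : G} (hu : u ∈ pushSubgroup s m)
    (g : InvolutionProduct ℕ) : erase m (ρ u g) = erase m g := by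
  refine map_apply_eq_of_mem_closure (β := 1) ?_ hu g
  rintro _ ⟨j, hj, rfl⟩
  exact (isPointPush_pureGen hs hρ hj).erase_apply hj.ne

theorem eq_one_of_mem_pushSubgroup (hs : IsBraidFamily s m) (hρ : ∀ i < m, ρ (s i) = braidAut i)
    {u : G} (hu : u ∈ pushSubgroup s m) (hu1 : ρ u = 1) : u = 1 := by
  let a : Fin m → G := fun j => pureGen s m j
  have hinj : Function.Injective (FreeGroup.lift fun j => ρ (a j)) :=
    (IsPointPush.isPingPongHeight Fin.val_injective (fun j => j.isLt.ne)
      fun j => isPointPush_pureGen hs hρ j.isLt).lift_injective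
  have hrange : pushSubgroup s m ≤ (FreeGroup.lift a).range := by
    rw [FreeGroup.range_lift_eq_closure]
    refine Subgroup.closure_mono ?_
    rintro _ ⟨j, hj, rfl⟩
    exact ⟨⟨j, hj⟩, rfl⟩
  have hcomp : ρ.comp (FreeGroup.lift a) = FreeGroup.lift fun j => ρ (a j) :=
    FreeGroup.ext_hom _ _ fun j => by simp
  obtain ⟨w, rfl⟩ := hrange hu
  have hw : w = 1 := (injective_iff_map_eq_one _).1 hinj w (by rw [← hcomp]; exact hu1)
  rw [hw, map_one]

theorem eq_of_apply_braidChain_mul_eq_one (hs : IsBraidFamily s m)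
    (hρ : ∀ i < m, ρ (s i) = braidAut i) {l : ℕ} (hl : l ≤ m) {u h : G}
    (hu : u ∈ pushSubgroup s m) (hh : h ∈ strandSubgroup s m)
    (h1 : ρ (braidChain s m l * (u * h)) = 1) : l = m := by
  by_contra hlm
  have huh : ρ u (ρ h (gen l)) = gen m := by
    apply (ρ (braidChain s m l)).injective
    rw [apply_braidChain_gen hρ hl, ← MulAut.mul_apply, ← MulAut.mul_apply, ← map_mul, ← map_mul,
      mul_assoc, h1, MulAut.one_apply]
  have hhl : ρ h (gen l) = 1 := by
    rw [← erase_gen_of_ne hlm, ← erase_apply_of_mem_strandSubgroup hρ hh,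
      ← erase_apply_of_mem_pushSubgroup hs hρ hu, huh, erase_gen_self]
  exact gen_ne_one l ((map_eq_one_iff _ (ρ h).injective).1 hhl)

theorem apply_eq_one_of_apply_mul_eq_one (hs : IsBraidFamily s m)
    (hρ : ∀ i < m, ρ (s i) = braidAut i) {u h : G}
    (hu : u ∈ pushSubgroup s m) (hh : h ∈ strandSubgroup s m) (h1 : ρ (u * h) = 1) :
    ρ h = 1 := by
  refine mulAut_ext fun k => ?_
  rcases eq_or_ne k m with rfl | hkm
  · exact apply_gen_of_mem_strandSubgroup (fun i hi => hρ i (by omega)) hh le_rfl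
  · rw [MulAut.one_apply]
    calc ρ h (gen k) = erase m (ρ u (ρ h (gen k))) := by
          rw [erase_apply_of_mem_pushSubgroup hs hρ hu, erase_apply_of_mem_strandSubgroup hρ hh,
            erase_gen_of_ne hkm]
      _ = gen k := by
          rw [← MulAut.mul_apply, ← map_mul, h1, MulAut.one_apply, erase_gen_of_ne hkm]

theorem eq_one_of_mem_strandSubgroup_succ (hs : IsBraidFamily s m)
    (hρ : ∀ i < m, ρ (s i) = braidAut i) {x : G} (hx : x ∈ strandSubgroup s (m + 1))
    (hx1 : ρ x = 1) : x = 1 := by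
  induction m generalizing x with
  | zero => simpa [strandSubgroup] using hx
  | succ m ih =>
    obtain ⟨l, hl, u, hu, h, hh, rfl⟩ := hs.exists_eq_braidChain_mul hx
    obtain rfl := eq_of_apply_braidChain_mul_eq_one hs hρ hl hu hh hx1
    rw [braidChain_self, one_mul] at hx1 ⊢
    have hρh : ρ h = 1 := apply_eq_one_of_apply_mul_eq_one hs hρ hu hh hx1
    obtain rfl : h = 1 := ih (hs.mono m.le_succ) (fun i hi => hρ i (by omega)) hh hρh
    rw [mul_one] at hx1 ⊢
    exact eq_one_of_mem_pushSubgroup hs hρ hu hx1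

end Faithful

end InvolutionProduct

section BraidGroup

open InvolutionProduct

variable {N : ℕ}

/-- The generators of the braid group as a sequence, extended by `1` beyond the last of them. -/
def braidGen (N i : ℕ) : PresentedGroup (braidRels N) :=
  if h : i < N then PresentedGroup.of ⟨i, h⟩ else 1

theorem braidGen_val (i : Fin N) : braidGen N i = PresentedGroup.of i := dif_pos i.isLt

theorem isBraidFamily_braidGen (N : ℕ) : IsBraidFamily (braidGen N) N where
  commute {i j} hij hj := by
    have hrel := PresentedGroup.one_of_mem (rels := braidRels N)
      (Or.inl ⟨⟨i, by omega⟩, ⟨j, hj⟩, hij, rfl⟩)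
    simp only [map_mul, map_inv, mul_inv_eq_iff_eq_mul, one_mul] at hrel
    rw [braidGen, dif_pos (by omega), braidGen, dif_pos hj]
    exact hrel
  braid {i} hi := by
    have hrel := PresentedGroup.one_of_mem (rels := braidRels N)
      (Or.inr ⟨⟨i, by omega⟩, ⟨i + 1, hi⟩, rfl, rfl⟩)
    simp only [map_mul, map_inv, mul_inv_eq_one] at hrel
    rw [braidGen, dif_pos (by omega), braidGen, dif_pos hi]
    exact hrel

theorem mem_strandSubgroup_braidGen (x : PresentedGroup (braidRels N)) :
    x ∈ strandSubgroup (braidGen N) (N + 1) := by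
  have hx : x ∈ Subgroup.closure (Set.range PresentedGroup.of) := by
    rw [PresentedGroup.closure_range_of]
    exact Subgroup.mem_top x
  refine Subgroup.closure_mono ?_ hx
  rintro _ ⟨i, rfl⟩
  exact ⟨i, by simp, braidGen_val i⟩

/-- The action of the braid group on the free product of involutions. -/
def braidAction (N : ℕ) : PresentedGroup (braidRels N) →* MulAut (InvolutionProduct ℕ) :=
  PresentedGroup.toGroup (f := fun i : Fin N => braidAut i) <| by
    rintro r (⟨i, j, hij, rfl⟩ | ⟨i, j, hij, rfl⟩)
    · simp [(commute_braidAut hij).eq]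
    · simp [← hij, braidAut_braid]

theorem braidAction_of (i : Fin N) : braidAction N (PresentedGroup.of i) = braidAut i :=
  PresentedGroup.toGroup.of _

theorem braidAction_braidGen {i : ℕ} (hi : i < N) : braidAction N (braidGen N i) = braidAut i := by
  rw [← braidAction_of ⟨i, hi⟩, ← braidGen_val]

theorem braidAction_injective (N : ℕ) : Function.Injective (braidAction N) :=
  (injective_iff_map_eq_one _).2 fun x =>
    eq_one_of_mem_strandSubgroup_succ (isBraidFamily_braidGen N) (fun _ => braidAction_braidGen)
      (mem_strandSubgroup_braidGen x)

theorem braidAction_gen_of_lt (x : PresentedGroup (braidRels N)) {k : ℕ} (hk : N < k) :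
    braidAction N x (gen k) = gen k :=
  apply_gen_of_mem_strandSubgroup (fun _ hi => braidAction_braidGen (Nat.lt_of_succ_lt_succ hi))
    (mem_strandSubgroup_braidGen x) hk

/-- The homomorphism from the free group to the free product of involutions sending `x_i` to
`b_i b_n`. It intertwines Wada's representation with `braidAction`. -/
def toInvolutionProduct (n : ℕ) : FreeGroup (Fin n) →* InvolutionProduct ℕ :=
  FreeGroup.lift fun i => gen (i : ℕ) * gen n

theorem toInvolutionProduct_of {n : ℕ} (i : Fin n) :
    toInvolutionProduct n (FreeGroup.of i) = gen (i : ℕ) * gen n :=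
  FreeGroup.lift_apply_of

/-- The automorphism assigned to `σ_i` by Wada's representation of type (2). -/
structure IsWadaTypeTwo {n : ℕ} (i : Fin (n - 1)) (f : MulAut (FreeGroup (Fin n))) : Prop where
  apply_xL : f (FreeGroup.of (xL n i)) =
    FreeGroup.of (xL n i) * (FreeGroup.of (xR n i))⁻¹ * FreeGroup.of (xL n i)
  apply_xR : f (FreeGroup.of (xR n i)) = FreeGroup.of (xL n i)
  apply_of_ne (j : Fin n) : j ≠ xL n i → j ≠ xR n i → f (FreeGroup.of j) = FreeGroup.of j

theorem IsWadaTypeTwo.toInvolutionProduct_apply {n : ℕ} {i : Fin (n - 1)}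
    {f : MulAut (FreeGroup (Fin n))} (hf : IsWadaTypeTwo i f) (x : FreeGroup (Fin n)) :
    toInvolutionProduct n (f x) = braidAut i (toInvolutionProduct n x) := by
  suffices (toInvolutionProduct n).comp f.toMonoidHom =
      (braidAut i).toMonoidHom.comp (toInvolutionProduct n) from DFunLike.congr_fun this x
  refine FreeGroup.ext_hom _ _ fun j => ?_
  change toInvolutionProduct n (f (FreeGroup.of j)) =
    braidAut i (toInvolutionProduct n (FreeGroup.of j))
  have hn : braidAut i (gen n) = gen n := braidAut_gen_of_ne (by omega) (by omega)
  rw [toInvolutionProduct_of, map_mul, hn]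
  by_cases hL : j = xL n i
  · have hj : (j : ℕ) = i := congrArg Fin.val hL
    rw [hj, hL, hf.apply_xL, braidAut_gen_self]
    simp [toInvolutionProduct_of, xL, xR, mul_assoc]
  by_cases hR : j = xR n i
  · have hj : (j : ℕ) = i + 1 := congrArg Fin.val hR
    rw [hj, hR, hf.apply_xR, braidAut_gen_succ, toInvolutionProduct_of, xL]
  have hji : (j : ℕ) ≠ i := fun h => hL (Fin.ext h)
  have hji' : (j : ℕ) ≠ i + 1 := fun h => hR (Fin.ext h)
  rw [hf.apply_of_ne j hL hR, toInvolutionProduct_of, braidAut_gen_of_ne hji hji']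

theorem toInvolutionProduct_apply {n : ℕ}
    {ψ : PresentedGroup (braidRels (n - 1)) →* MulAut (FreeGroup (Fin n))}
    (hψ : ∀ i, IsWadaTypeTwo i (ψ (PresentedGroup.of i))) (β : PresentedGroup (braidRels (n - 1)))
    (x : FreeGroup (Fin n)) :
    toInvolutionProduct n (ψ β x) = braidAction (n - 1) β (toInvolutionProduct n x) := by
  have hβ : β ∈ Subgroup.closure (Set.range PresentedGroup.of) := by
    rw [PresentedGroup.closure_range_of]
    exact Subgroup.mem_top β
  refine map_apply_eq_of_mem_closure ?_ hβ x
  rintro _ ⟨i, rfl⟩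
  rw [braidAction_of]
  exact (hψ i).toInvolutionProduct_apply

end BraidGroup

/-- **Wada's representation of type (2) is faithful.** For every `n ≥ 2`, any group
homomorphism `ψ : B_n → Aut(F_n)` sending each braid generator `σ_i` to the
automorphism with `x_i ↦ x_i x_{i+1}⁻¹ x_i`, `x_{i+1} ↦ x_i`, fixing all other free
generators, is injective. -/
theorem wada_type2_faithful (n : ℕ) (hn : 2 ≤ n)
    (ψ : PresentedGroup (braidRels (n - 1)) →* MulAut (FreeGroup (Fin n)))
    (hψ : ∀ i : Fin (n - 1),
      (ψ (PresentedGroup.of i)) (FreeGroup.of (xL n i)) =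
          FreeGroup.of (xL n i) * (FreeGroup.of (xR n i))⁻¹ * FreeGroup.of (xL n i) ∧
      (ψ (PresentedGroup.of i)) (FreeGroup.of (xR n i)) = FreeGroup.of (xL n i) ∧
      ∀ j : Fin n, j ≠ xL n i → j ≠ xR n i →
        (ψ (PresentedGroup.of i)) (FreeGroup.of j) = FreeGroup.of j) :
    Function.Injective ψ := by
  refine (injective_iff_map_eq_one ψ).2 fun β hβ => ?_
  suffices braidAction (n - 1) β = 1 from
    (injective_iff_map_eq_one _).1 (braidAction_injective _) β this
  have fix_gen {k : ℕ} (hk : n ≤ k) :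
      braidAction (n - 1) β (InvolutionProduct.gen k) = InvolutionProduct.gen k :=
    braidAction_gen_of_lt β (by omega)
  refine InvolutionProduct.mulAut_ext fun k => ?_
  rw [MulAut.one_apply]
  rcases le_or_gt n k with hk | hk
  · exact fix_gen hk
  · have hψβ := toInvolutionProduct_apply
      (fun i => ⟨(hψ i).1, (hψ i).2.1, (hψ i).2.2⟩) β (FreeGroup.of ⟨k, hk⟩)
    rw [hβ, MulAut.one_apply, toInvolutionProduct_of, map_mul, fix_gen le_rfl] at hψβ
    exact (mul_right_cancel hψβ).symm
end

section
/- For every n ≥ 2, Wada's representation of type (3) is faithful: the group homomorphism ψ : B_n → Aut(F_n) determined by sending each generator σ_i to the automorphism σ̂_i that maps x_i to x_i^2 x_{i+1}, maps x_{i+1} to x_{i+1}^{−1} x_i^{−1} x_{i+1}, and fixes all other free generators, is injective. -/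
/-!
Kill the squares of the free generators: `F_n` maps onto the free product `W` of `n` copies of
`ℤ/2`, where `x_i² x_{i+1}` becomes `x_{i+1}` and `x_{i+1}⁻¹ x_i⁻¹ x_{i+1}` becomes
`x_{i+1} x_i x_{i+1}⁻¹`. So Wada's representation induces the Hurwitz action of the braid group on
tuples of reflections (conjugates of the generators) of `W`, and it suffices that a braid fixing
the tuple of generators is trivial.

Measure a braid by the total word length of its tuple. A reflection inverts an edge of the Cayley
tree of `W`, and conjugating by it shortens exactly those reflections whose edges lie beyond its
own, so every generator changes the total length. If two generators both lower it, they are joined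
by the corresponding commutation or braid relation through braids of smaller total length, with
one exception: among three consecutive reflections the middle one could shorten both of its
neighbours. This is excluded by planarity. Placing the vertices of the tree on the rational line so
that `W` preserves their cyclic order, the trajectory of the root under the successive reflections
of the tuple descends; this property is invariant under Hurwitz moves and forbids the exception.
Peak reduction in the Cayley graph of the braid group then joins any two braids of minimal total
length by a path of length zero.
-/

namespace Wada

section ReducedWords

variable {ι : Type*}

/-- Reduced words in the letters `ι`: the elements of the free product of copies of `ℤ/2`
indexed by `ι`, equivalently the vertices of its Cayley tree. -/
abbrev ReducedWord (ι : Type*) := {l : List ι // l.IsChain (· ≠ ·)}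

/-- The root of the Cayley tree. -/
def emptyWord : ReducedWord ι := ⟨[], .nil⟩

variable [DecidableEq ι]

/-- Left multiplication of a word by the involution `i`, followed by free cancellation. -/
def consCancel (i : ι) (l : List ι) : List ι :=
  if l.head? = some i then l.tail else i :: l

theorem isChain_consCancel (i : ι) {l : List ι} (hl : l.IsChain (· ≠ ·)) :
    (consCancel i l).IsChain (· ≠ ·) := by
  unfold consCancel
  split_ifs with h
  · exact hl.tail
  · exact List.isChain_cons.2 ⟨fun j hj hij => h (hij ▸ hj), hl⟩

theorem head?_consCancel_eq_some_iff (i : ι) {l : List ι} (hl : l.IsChain (· ≠ ·)) :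
    (consCancel i l).head? = some i ↔ l.head? ≠ some i := by
  unfold consCancel
  split_ifs with h
  · obtain ⟨t, rfl⟩ := List.head?_eq_some_iff.1 h
    have := (List.isChain_cons.1 hl).1 i
    simp_all
  · simp [h]

theorem consCancel_consCancel (i : ι) {l : List ι} (hl : l.IsChain (· ≠ ·)) :
    consCancel i (consCancel i l) = l := by
  have hhead := head?_consCancel_eq_some_iff i hl
  by_cases h : l.head? = some i
  · obtain ⟨t, rfl⟩ := List.head?_eq_some_iff.1 h
    simp_all [consCancel]
  · simp [consCancel, h]

/-- The involution `i` of the free product, acting on the Cayley tree by left multiplication. -/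
def simpleReflection (i : ι) : Equiv.Perm (ReducedWord ι) :=
  Function.Involutive.toPerm (fun v => ⟨consCancel i v.1, isChain_consCancel i v.2⟩)
    fun v => Subtype.ext (consCancel_consCancel i v.2)

theorem coe_simpleReflection_apply (i : ι) (v : ReducedWord ι) :
    (simpleReflection i v).1 = consCancel i v.1 := rfl

theorem simpleReflection_mul_self (i : ι) : simpleReflection i * simpleReflection i = 1 :=
  Equiv.ext fun v => Subtype.ext (consCancel_consCancel i v.2)

theorem simpleReflection_inv (i : ι) : (simpleReflection i)⁻¹ = simpleReflection i :=
  inv_eq_of_mul_eq_one_left (simpleReflection_mul_self i)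

theorem simpleReflection_mul_cancel_left (i : ι) (w : Equiv.Perm (ReducedWord ι)) :
    simpleReflection i * (simpleReflection i * w) = w := by
  rw [← mul_assoc, simpleReflection_mul_self, one_mul]

/-- The element of the free product spelled by a (not necessarily reduced) word, acting on the
Cayley tree. -/
def wordPerm (l : List ι) : Equiv.Perm (ReducedWord ι) := (l.map simpleReflection).prod

@[simp] theorem wordPerm_nil : wordPerm ([] : List ι) = 1 := rfl

@[simp] theorem wordPerm_cons (i : ι) (l : List ι) :
    wordPerm (i :: l) = simpleReflection i * wordPerm l := by
  simp [wordPerm]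

@[simp] theorem wordPerm_append (l l' : List ι) :
    wordPerm (l ++ l') = wordPerm l * wordPerm l' := by
  simp [wordPerm]

theorem wordPerm_inv (l : List ι) : (wordPerm l)⁻¹ = wordPerm l.reverse := by
  induction l with
  | nil => simp
  | cons i l ih => simp [ih, simpleReflection_inv]

theorem coe_wordPerm_emptyWord {l : List ι} (hl : l.IsChain (· ≠ ·)) :
    (wordPerm l emptyWord).1 = l := by
  induction l with
  | nil => rfl
  | cons i l ih =>
    have hhead : l.head? ≠ some i := fun h => (List.isChain_cons.1 hl).1 i h rfl
    rw [wordPerm_cons, Equiv.Perm.mul_apply, coe_simpleReflection_apply, ih hl.tail, consCancel,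
      if_neg hhead]

theorem wordPerm_coe_simpleReflection_apply (i : ι) (v : ReducedWord ι) :
    wordPerm (simpleReflection i v).1 = simpleReflection i * wordPerm v.1 := by
  rw [coe_simpleReflection_apply, consCancel]
  split_ifs with h
  · obtain ⟨t, ht⟩ := List.head?_eq_some_iff.1 h
    rw [ht, List.tail_cons, wordPerm_cons, simpleReflection_mul_cancel_left]
  · exact wordPerm_cons i v.1

theorem wordPerm_coe_wordPerm_apply (l : List ι) (v : ReducedWord ι) :
    wordPerm (wordPerm l v).1 = wordPerm l * wordPerm v.1 := by
  induction l with
  | nil => simp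
  | cons i l ih =>
    rw [wordPerm_cons, Equiv.Perm.mul_apply, wordPerm_coe_simpleReflection_apply, ih, mul_assoc]

theorem length_wordPerm_emptyWord_le (l : List ι) :
    (wordPerm l emptyWord).1.length ≤ l.length := by
  induction l with
  | nil => rfl
  | cons i l ih =>
    rw [wordPerm_cons, Equiv.Perm.mul_apply, coe_simpleReflection_apply, consCancel]
    split_ifs <;> simp only [List.length_tail, List.length_cons] <;> omega

end ReducedWords

section Reflections

variable {ι : Type*}

/-- The reduced words `g` and `g ++ [i]` span an edge of the Cayley tree, with `g` on the side of
the root. -/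
def IsEdge (g : List ι) (i : ι) : Prop := (g ++ [i]).IsChain (· ≠ ·)

theorem IsEdge.isChain {g : List ι} {i : ι} (h : IsEdge g i) : g.IsChain (· ≠ ·) :=
  List.IsChain.left_of_append h

theorem isEdge_or_exists_eq_append {g : List ι} (hg : g.IsChain (· ≠ ·)) (i : ι) :
    IsEdge g i ∨ ∃ g', g = g' ++ [i] := by
  rcases List.eq_nil_or_concat' g with rfl | ⟨g', j, rfl⟩
  · exact .inl (.singleton i)
  · by_cases hji : j = i
    · exact .inr ⟨g', by rw [hji]⟩
    · exact .inl (List.isChain_append.2 ⟨hg, .singleton i, by simp [hji]⟩)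

theorem IsEdge.isChain_palindrome {g : List ι} {i : ι} (h : IsEdge g i) :
    (g ++ i :: g.reverse).IsChain (· ≠ ·) := by
  have hrev : (i :: g.reverse).IsChain (· ≠ ·) := by
    rw [← List.reverse_concat', List.isChain_reverse]
    exact h.imp fun _ _ => Ne.symm
  rw [IsEdge, List.isChain_append] at h
  exact List.isChain_append.2 ⟨h.1, hrev, h.2.2⟩

variable [DecidableEq ι]

/-- The involution of the Cayley tree that inverts the edge from `g` to `g ++ [i]`. -/
def reflection (g : List ι) (i : ι) : Equiv.Perm (ReducedWord ι) :=
  wordPerm g * simpleReflection i * (wordPerm g)⁻¹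

theorem reflection_nil (i : ι) : reflection [] i = simpleReflection i := by simp [reflection]

theorem reflection_mul_self (g : List ι) (i : ι) : reflection g i * reflection g i = 1 := by
  simp [reflection, mul_assoc, simpleReflection_mul_cancel_left]

theorem reflection_inv (g : List ι) (i : ι) : (reflection g i)⁻¹ = reflection g i :=
  inv_eq_of_mul_eq_one_left (reflection_mul_self g i)

theorem reflection_eq_wordPerm (g : List ι) (i : ι) :
    reflection g i = wordPerm (g ++ i :: g.reverse) := by
  rw [reflection, wordPerm_append, wordPerm_cons, wordPerm_inv, mul_assoc]

theorem reflection_append_self (g : List ι) (i : ι) :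
    reflection (g ++ [i]) i = reflection g i := by
  simp [reflection, mul_assoc, simpleReflection_mul_cancel_left, simpleReflection_inv]

theorem wordPerm_conj_reflection (l : List ι) (v : ReducedWord ι) (i : ι) :
    wordPerm l * reflection v.1 i * (wordPerm l)⁻¹ = reflection (wordPerm l v).1 i := by
  rw [reflection, reflection, wordPerm_coe_wordPerm_apply]
  group

theorem reflection_conj_reflection (g : List ι) (i : ι) (v : ReducedWord ι) (j : ι) :
    reflection g i * reflection v.1 j * reflection g i =
      reflection (reflection g i v).1 j := by
  have h := wordPerm_conj_reflection (g ++ i :: g.reverse) v j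
  rwa [← reflection_eq_wordPerm, reflection_inv] at h

theorem reflection_conj_reflection_append (g : List ι) (i : ι) (l : List ι) (j : ι) :
    reflection g i * reflection (g ++ [i] ++ l) j * reflection g i = reflection (g ++ l) j := by
  have h : reflection g i * wordPerm (g ++ [i] ++ l) = wordPerm (g ++ l) := by
    simp [reflection, mul_assoc, simpleReflection_mul_cancel_left]
  have hinv : (wordPerm (g ++ [i] ++ l))⁻¹ * reflection g i = (wordPerm (g ++ l))⁻¹ := by
    rw [← h, mul_inv_rev, reflection_inv]
  calc reflection g i * reflection (g ++ [i] ++ l) j * reflection g i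
      = reflection g i * wordPerm (g ++ [i] ++ l) * simpleReflection j *
          ((wordPerm (g ++ [i] ++ l))⁻¹ * reflection g i) := by
        simp only [reflection, mul_assoc]
    _ = reflection (g ++ l) j := by rw [h, hinv]; rfl

/-- The inversions of edges of the Cayley tree, i.e. the conjugates of the simple reflections. -/
def IsReflection (a : Equiv.Perm (ReducedWord ι)) : Prop :=
  ∃ g i, IsEdge g i ∧ a = reflection g i

theorem isReflection_reflection {g : List ι} (hg : g.IsChain (· ≠ ·)) (i : ι) :
    IsReflection (reflection g i) := by
  rcases isEdge_or_exists_eq_append hg i with h | ⟨g', rfl⟩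
  · exact ⟨g, i, h, rfl⟩
  · exact ⟨g', i, hg, reflection_append_self g' i⟩

theorem isReflection_simpleReflection (i : ι) : IsReflection (simpleReflection i) :=
  reflection_nil i ▸ isReflection_reflection .nil i

namespace IsReflection

variable {a b : Equiv.Perm (ReducedWord ι)}

theorem mul_self (ha : IsReflection a) : a * a = 1 := by
  obtain ⟨g, i, -, rfl⟩ := ha
  exact reflection_mul_self g i

theorem mul_cancel_left (ha : IsReflection a) (w : Equiv.Perm (ReducedWord ι)) :
    a * (a * w) = w := by
  rw [← mul_assoc, ha.mul_self, one_mul]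

theorem inv_eq (ha : IsReflection a) : a⁻¹ = a := inv_eq_of_mul_eq_one_left ha.mul_self

theorem apply_apply (ha : IsReflection a) (v : ReducedWord ι) : a (a v) = v := by
  rw [← Equiv.Perm.mul_apply, ha.mul_self, Equiv.Perm.one_apply]

theorem conj (ha : IsReflection a) (hb : IsReflection b) : IsReflection (a * b * a) := by
  obtain ⟨g, i, -, rfl⟩ := ha
  obtain ⟨h, j, hE, rfl⟩ := hb
  rw [reflection_conj_reflection g i ⟨h, hE.isChain⟩ j]
  exact isReflection_reflection (Subtype.property _) j

end IsReflection

theorem cons_prefix_coe_iff {i : ι} {e : List ι} (he : (i :: e).IsChain (· ≠ ·)) (hne : e ≠ [])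
    (v : ReducedWord ι) : i :: e <+: v.1 ↔ e <+: (simpleReflection i v).1 := by
  obtain ⟨j, t, rfl⟩ := List.exists_cons_of_ne_nil hne
  have hij : i ≠ j := (List.isChain_cons_cons.1 he).1
  rw [coe_simpleReflection_apply, consCancel]
  split_ifs with h
  · obtain ⟨u, hu⟩ := List.head?_eq_some_iff.1 h
    simp [hu]
  · rw [List.cons_prefix_cons (a := j)]
    refine iff_of_false (fun hp => h ?_) fun hp => hij hp.1.symm
    obtain ⟨u, hu⟩ := hp
    simp [← hu]

theorem append_singleton_prefix_coe_iff {g : List ι} {i : ι} (h : IsEdge g i)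
    (v : ReducedWord ι) : g ++ [i] <+: v.1 ↔ ((wordPerm g)⁻¹ v).1.head? = some i := by
  induction g generalizing v with
  | nil =>
    rw [List.nil_append, wordPerm_nil, inv_one, Equiv.Perm.one_apply, List.head?_eq_some_iff]
    exact exists_congr fun t => eq_comm
  | cons j g ih =>
    have hchain : (j :: (g ++ [i])).IsChain (· ≠ ·) := h
    rw [List.cons_append, cons_prefix_coe_iff hchain (by simp), ih h.tail, wordPerm_cons,
      mul_inv_rev, simpleReflection_inv, Equiv.Perm.mul_apply]

theorem prefix_reflection_apply_iff {g : List ι} {i : ι} (h : IsEdge g i) (v : ReducedWord ι) :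
    g ++ [i] <+: (reflection g i v).1 ↔ ¬ g ++ [i] <+: v.1 := by
  have hconj : (wordPerm g)⁻¹ * reflection g i = simpleReflection i * (wordPerm g)⁻¹ := by
    simp [reflection, mul_assoc]
  rw [append_singleton_prefix_coe_iff h, append_singleton_prefix_coe_iff h,
    ← Equiv.Perm.mul_apply, hconj, Equiv.Perm.mul_apply, coe_simpleReflection_apply]
  exact head?_consCancel_eq_some_iff i (Subtype.property _)

/-- The word length of an element of the free product, read off from its action on the root. -/
def wordLength (w : Equiv.Perm (ReducedWord ι)) : ℕ := (w emptyWord).1.length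

theorem wordLength_reflection_le (g : List ι) (i : ι) :
    wordLength (reflection g i) ≤ 2 * g.length + 1 := by
  rw [reflection_eq_wordPerm]
  refine (length_wordPerm_emptyWord_le _).trans_eq ?_
  simp only [List.length_append, List.length_cons, List.length_reverse]
  omega

theorem wordLength_reflection {g : List ι} {i : ι} (h : IsEdge g i) :
    wordLength (reflection g i) = 2 * g.length + 1 := by
  rw [reflection_eq_wordPerm, wordLength, coe_wordPerm_emptyWord h.isChain_palindrome]
  simp only [List.length_append, List.length_cons, List.length_reverse]
  omega

theorem wordLength_simpleReflection (i : ι) : wordLength (simpleReflection i) = 1 :=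
  reflection_nil i ▸ wordLength_reflection (.singleton i)

theorem IsReflection.one_le_wordLength {a : Equiv.Perm (ReducedWord ι)} (ha : IsReflection a) :
    1 ≤ wordLength a := by
  obtain ⟨g, i, h, rfl⟩ := ha
  rw [wordLength_reflection h]
  omega

end Reflections

section Shortens

variable {ι : Type*} [DecidableEq ι]

/-- Conjugation by `a` shortens `b`. For reflections this means that the edge inverted by `a`
separates the root from the edge inverted by `b`. -/
def Shortens (a b : Equiv.Perm (ReducedWord ι)) : Prop := wordLength (a * b * a) < wordLength b

theorem eq_or_prefix_of_append_singleton_prefix {g h : List ι} {i j : ι}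
    (hp : g ++ [i] <+: h ++ [j]) : reflection g i = reflection h j ∨ g ++ [i] <+: h := by
  rcases List.prefix_concat_iff.1 hp with heq | hp
  · obtain ⟨rfl, hij⟩ := List.append_inj' heq rfl
    exact .inl (by rw [(List.cons.inj hij).1])
  · exact .inr hp

theorem shortens_reflection_of_prefix {g h : List ι} {i j : ι} (hh : IsEdge h j)
    (hp : g ++ [i] <+: h) : Shortens (reflection g i) (reflection h j) := by
  obtain ⟨l, rfl⟩ := hp
  rw [Shortens, reflection_conj_reflection_append, wordLength_reflection hh]
  refine (wordLength_reflection_le _ _).trans_lt ?_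
  simp only [List.length_append, List.length_singleton]
  omega

theorem wordLength_lt_conj_of_not_prefix {g h : List ι} {i j : ι} (hg : IsEdge g i)
    (hh : IsEdge h j) (hne : reflection g i ≠ reflection h j) (hp : ¬ g ++ [i] <+: h) :
    wordLength (reflection h j) <
      wordLength (reflection g i * reflection h j * reflection g i) := by
  set a := reflection g i
  set b := reflection h j
  have haa : a * a = 1 := reflection_mul_self g i
  have hconj : a * (a * b * a) * a = b := by
    rw [mul_assoc a b a, ← mul_assoc a a, haa, one_mul, mul_assoc, haa, mul_one]
  suffices Shortens a (a * b * a) by rwa [Shortens, hconj] at this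
  have hside := (prefix_reflection_apply_iff hg ⟨h, hh.isChain⟩).2 hp
  rw [reflection_conj_reflection g i ⟨h, hh.isChain⟩ j]
  rcases isEdge_or_exists_eq_append (reflection g i ⟨h, hh.isChain⟩).2 j with hedge | ⟨h', hh'⟩
  · exact shortens_reflection_of_prefix hedge hside
  · rw [hh', reflection_append_self]
    have hedge : IsEdge h' j := (congrArg (List.IsChain (· ≠ ·)) hh').mp (Subtype.property _)
    rw [hh'] at hside
    refine shortens_reflection_of_prefix hedge
      ((eq_or_prefix_of_append_singleton_prefix hside).resolve_left fun heq => hne ?_)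
    have hab : a * b * a = a := by
      rw [reflection_conj_reflection g i ⟨h, hh.isChain⟩ j, hh', reflection_append_self, ← heq]
    rw [← hconj, hab, haa, one_mul]

theorem shortens_reflection_iff {g h : List ι} {i j : ι} (hg : IsEdge g i) (hh : IsEdge h j) :
    Shortens (reflection g i) (reflection h j) ↔ g ++ [i] <+: h := by
  refine ⟨fun hs => ?_, shortens_reflection_of_prefix hh⟩
  by_contra hp
  have hne : reflection g i ≠ reflection h j := fun heq => by
    rw [Shortens, heq, reflection_mul_self, one_mul] at hs
    exact hs.false
  exact hs.asymm (wordLength_lt_conj_of_not_prefix hg hh hne hp)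

variable {a b c : Equiv.Perm (ReducedWord ι)}

theorem IsReflection.wordLength_conj_ne (ha : IsReflection a) (hb : IsReflection b)
    (hne : a ≠ b) : wordLength (a * b * a) ≠ wordLength b := by
  obtain ⟨g, i, hg, rfl⟩ := ha
  obtain ⟨h, j, hh, rfl⟩ := hb
  by_cases hp : g ++ [i] <+: h
  · exact (shortens_reflection_of_prefix hh hp).ne
  · exact (wordLength_lt_conj_of_not_prefix hg hh hne hp).ne'

namespace Shortens

theorem asymm (ha : IsReflection a) (hb : IsReflection b) (hab : Shortens a b) :
    ¬ Shortens b a := by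
  obtain ⟨g, i, hg, rfl⟩ := ha
  obtain ⟨h, j, hh, rfl⟩ := hb
  rw [shortens_reflection_iff hg hh] at hab
  rw [shortens_reflection_iff hh hg]
  intro hba
  have hle := hab.length_le
  have hle' := hba.length_le
  simp only [List.length_append, List.length_singleton] at hle hle'
  omega

theorem trans (ha : IsReflection a) (hb : IsReflection b) (hc : IsReflection c)
    (hab : Shortens a b) (hbc : Shortens b c) : Shortens a c := by
  obtain ⟨g, i, hg, rfl⟩ := ha
  obtain ⟨h, j, hh, rfl⟩ := hb
  obtain ⟨k, l, hk, rfl⟩ := hc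
  rw [shortens_reflection_iff hg hh] at hab
  rw [shortens_reflection_iff hh hk] at hbc
  exact (shortens_reflection_iff hg hk).2 ((hab.trans (List.prefix_append h [j])).trans hbc)

theorem wordLength_conj_conj_lt (ha : IsReflection a) (hb : IsReflection b) (hc : IsReflection c)
    (hab : Shortens a b) (hbc : Shortens b c) :
    wordLength (a * (b * c * b) * a) < wordLength c := by
  obtain ⟨g, i, hg, rfl⟩ := ha
  obtain ⟨h, j, hh, rfl⟩ := hb
  obtain ⟨k, l, hk, rfl⟩ := hc
  obtain ⟨u, rfl⟩ := (shortens_reflection_iff hg hh).1 hab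
  obtain ⟨v, rfl⟩ := (shortens_reflection_iff hh hk).1 hbc
  rw [reflection_conj_reflection_append, List.append_assoc _ u v,
    reflection_conj_reflection_append, wordLength_reflection hk]
  refine (wordLength_reflection_le _ _).trans_lt ?_
  simp only [List.length_append, List.length_singleton]
  omega

theorem total (ha : IsReflection a) (hb : IsReflection b) (hc : IsReflection c) (hne : a ≠ b)
    (hac : Shortens a c) (hbc : Shortens b c) : Shortens a b ∨ Shortens b a := by
  obtain ⟨g, i, hg, rfl⟩ := ha
  obtain ⟨h, j, hh, rfl⟩ := hb
  obtain ⟨k, l, hk, rfl⟩ := hc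
  rw [shortens_reflection_iff hg hk] at hac
  rw [shortens_reflection_iff hh hk] at hbc
  rw [shortens_reflection_iff hg hh, shortens_reflection_iff hh hg]
  exact (List.prefix_or_prefix_of_prefix hac hbc).imp
    (fun hp => (eq_or_prefix_of_append_singleton_prefix hp).resolve_left hne)
    fun hp => (eq_or_prefix_of_append_singleton_prefix hp).resolve_left hne.symm

end Shortens

end Shortens

section CyclicOrder

variable {K : Type*} [Field K]

/-- The Möbius transformation of order two that exchanges `c` and `∞` and has no fixed point on
the real projective line. Since `0⁻¹ = 0`, the value at `c` is `c` instead of `∞`. -/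
def halfTurn (c x : K) : K := c - (x - c)⁻¹

theorem halfTurn_halfTurn (c x : K) : halfTurn c (halfTurn c x) = x := by simp [halfTurn]

variable [LinearOrder K] [IsStrictOrderedRing K] {c r x y z : K}

/-- The cyclic order of the projective line: going up from `x` and through `∞`, one meets `y`
strictly before `z`. -/
def CyclicallyOrdered (x y z : K) : Prop := 0 < (x - y) * (y - z) * (z - x)

theorem cyclicallyOrdered_of_lt (hxy : x < y) (hyz : y < z) : CyclicallyOrdered x y z :=
  mul_pos (mul_pos_of_neg_of_neg (sub_neg.2 hxy) (sub_neg.2 hyz)) (sub_pos.2 (hxy.trans hyz))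

theorem CyclicallyOrdered.rotate (h : CyclicallyOrdered x y z) : CyclicallyOrdered y z x := by
  unfold CyclicallyOrdered at h ⊢
  linarith

theorem CyclicallyOrdered.mem_Ioo (h : CyclicallyOrdered x y z) (hyx : y < x) :
    z ∈ Set.Ioo y x := by
  rw [CyclicallyOrdered, mul_assoc, mul_pos_iff_of_pos_left (sub_pos.2 hyx)] at h
  rcases mul_pos_iff.1 h with ⟨h₁, h₂⟩ | ⟨h₁, h₂⟩ <;> constructor <;> linarith

theorem CyclicallyOrdered.lt_of_abs_sub_lt (h : CyclicallyOrdered x y z) (hx : |x - c| < r)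
    (hy : r ≤ |y - c|) (hz : |z - c| < r) : z < x := by
  rw [abs_lt] at hx hz
  have hside : (x - y) * (y - z) < 0 := by
    rcases le_abs.1 hy with hy | hy
    · exact mul_neg_of_neg_of_pos (by linarith) (by linarith)
    · exact mul_neg_of_pos_of_neg (by linarith) (by linarith)
  exact sub_neg.1 ((neg_iff_neg_of_mul_pos h).1 hside)

theorem cyclicallyOrdered_halfTurn_iff (hx : x ≠ c) (hy : y ≠ c) (hz : z ≠ c) :
    CyclicallyOrdered (halfTurn c x) (halfTurn c y) (halfTurn c z) ↔ CyclicallyOrdered x y z := by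
  have hx := sub_ne_zero.2 hx
  have hy := sub_ne_zero.2 hy
  have hz := sub_ne_zero.2 hz
  have key : (x - y) * (y - z) * (z - x) = ((x - c) * (y - c) * (z - c)) ^ 2 *
      ((halfTurn c x - halfTurn c y) * (halfTurn c y - halfTurn c z) *
        (halfTurn c z - halfTurn c x)) := by
    unfold halfTurn
    field_simp
    ring
  have hsq : 0 < ((x - c) * (y - c) * (z - c)) ^ 2 := by positivity
  unfold CyclicallyOrdered
  rw [key, mul_pos_iff_of_pos_left hsq]

end CyclicOrder

section Positions

/-- The pole of the half-turn by which the letter `i` acts on the rational line. Consecutive poles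
are far enough apart for the half-turns to play ping-pong on the unit intervals around them. -/
def pole (i : ℕ) : ℚ := -3 * i

theorem pole_nonpos (i : ℕ) : pole i ≤ 0 := by
  unfold pole
  linarith [Nat.cast_nonneg (α := ℚ) i]

theorem three_le_abs_pole_sub_pole {i j : ℕ} (hij : i ≠ j) : 3 ≤ |pole i - pole j| := by
  have hint : (1 : ℤ) ≤ |(i : ℤ) - j| := Int.one_le_abs (sub_ne_zero.2 (Nat.cast_injective.ne hij))
  have hrat : (1 : ℚ) ≤ |(i : ℚ) - j| := by exact_mod_cast hint
  rw [pole, pole, ← mul_sub, abs_mul, abs_neg, abs_of_pos three_pos]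
  linarith

/-- The position of a word on the rational line: the image of the base point `2` under the product
of half-turns that the word spells. This fixes a planar embedding of the Cayley tree. -/
def position : List ℕ → ℚ
  | [] => 2
  | i :: l => halfTurn (pole i) (position l)

theorem abs_position_cons_sub_pole (i : ℕ) (l : List ℕ) :
    |position (i :: l) - pole i| = |position l - pole i|⁻¹ := by
  rw [position, halfTurn, sub_sub_cancel_left, abs_neg, abs_inv]

theorem one_lt_abs_position_sub_pole {l : List ℕ} (hl : l.IsChain (· ≠ ·)) {i : ℕ}
    (hi : l.head? ≠ some i) : 1 < |position l - pole i| := by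
  induction l generalizing i with
  | nil =>
    rw [position, lt_abs]
    exact .inl (by linarith [pole_nonpos i])
  | cons j l ih =>
    have hnear : |position (j :: l) - pole j| < 1 := by
      rw [abs_position_cons_sub_pole]
      exact inv_lt_one_of_one_lt₀ (ih hl.tail fun h => (List.isChain_cons.1 hl).1 j h rfl)
    have hfar : 3 ≤ |pole j - pole i| := three_le_abs_pole_sub_pole fun h => hi (by simp [h])
    have htri := abs_sub_le (pole j) (position (j :: l)) (pole i)
    rw [abs_sub_comm (pole j) (position _)] at htri
    linarith

theorem position_ne_pole (v : ReducedWord ℕ) (i : ℕ) : position v.1 ≠ pole i := by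
  by_cases h : v.1.head? = some i
  · obtain ⟨t, ht⟩ := List.head?_eq_some_iff.1 h
    have hne : position t ≠ pole i := fun heq => by
      have hchain := List.isChain_cons.1 (ht ▸ v.2)
      have := one_lt_abs_position_sub_pole hchain.2 fun hi => hchain.1 i hi rfl
      norm_num [heq] at this
    rw [ht, ← sub_ne_zero, ← abs_ne_zero, abs_position_cons_sub_pole]
    exact inv_ne_zero (abs_ne_zero.2 (sub_ne_zero.2 hne))
  · intro heq
    have := one_lt_abs_position_sub_pole v.2 h
    norm_num [heq] at this

theorem position_simpleReflection (i : ℕ) (v : ReducedWord ℕ) :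
    position (simpleReflection i v).1 = halfTurn (pole i) (position v.1) := by
  rw [coe_simpleReflection_apply, consCancel]
  split_ifs with h
  · obtain ⟨t, ht⟩ := List.head?_eq_some_iff.1 h
    rw [ht, List.tail_cons, position, halfTurn_halfTurn]
  · rfl

theorem abs_position_sub_pole_lt_one_iff (v : ReducedWord ℕ) (i : ℕ) :
    |position v.1 - pole i| < 1 ↔ v.1.head? = some i := by
  refine ⟨fun h => by_contra fun hi => h.not_gt (one_lt_abs_position_sub_pole v.2 hi), fun h => ?_⟩
  obtain ⟨t, ht⟩ := List.head?_eq_some_iff.1 h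
  have hchain := List.isChain_cons.1 (ht ▸ v.2)
  rw [ht, abs_position_cons_sub_pole]
  exact inv_lt_one_of_one_lt₀
    (one_lt_abs_position_sub_pole hchain.2 fun hi => hchain.1 i hi rfl)

theorem position_lt_position_emptyWord {v : ReducedWord ℕ} (hv : v.1 ≠ []) :
    position v.1 < position (emptyWord : ReducedWord ℕ).1 := by
  obtain ⟨i, hi⟩ := Option.ne_none_iff_exists'.1 (mt List.head?_eq_none_iff.1 hv)
  have hnear := abs_lt.1 ((abs_position_sub_pole_lt_one_iff v i).2 hi)
  have hroot : position (emptyWord : ReducedWord ℕ).1 = 2 := rfl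
  linarith [pole_nonpos i]

variable {u v w : ReducedWord ℕ}

theorem cyclicallyOrdered_wordPerm_iff (l : List ℕ) :
    CyclicallyOrdered (position (wordPerm l u).1) (position (wordPerm l v).1)
      (position (wordPerm l w).1) ↔
    CyclicallyOrdered (position u.1) (position v.1) (position w.1) := by
  induction l with
  | nil => rfl
  | cons i l ih =>
    simp only [wordPerm_cons, Equiv.Perm.mul_apply, position_simpleReflection]
    rw [cyclicallyOrdered_halfTurn_iff (position_ne_pole _ i) (position_ne_pole _ i)
      (position_ne_pole _ i), ih]

theorem IsReflection.cyclicallyOrdered {a : Equiv.Perm (ReducedWord ℕ)} (ha : IsReflection a)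
    (h : CyclicallyOrdered (position u.1) (position v.1) (position w.1)) :
    CyclicallyOrdered (position (a u).1) (position (a v).1) (position (a w).1) := by
  obtain ⟨g, i, -, rfl⟩ := ha
  rw [reflection_eq_wordPerm]
  exact (cyclicallyOrdered_wordPerm_iff _).2 h

theorem prefix_of_position_lt {g : List ℕ} {i : ℕ} (hg : IsEdge g i) (hu : g ++ [i] <+: u.1)
    (hw : g ++ [i] <+: w.1) (huv : position u.1 < position v.1)
    (hvw : position v.1 < position w.1) : g ++ [i] <+: v.1 := by
  have hnear (x : ReducedWord ℕ) :
      g ++ [i] <+: x.1 ↔ |position (wordPerm g.reverse x).1 - pole i| < 1 := by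
    rw [append_singleton_prefix_coe_iff hg, abs_position_sub_pole_lt_one_iff, wordPerm_inv]
  have hroot : ¬ g ++ [i] <+: (emptyWord : ReducedWord ℕ).1 := by simp [emptyWord]
  have hwroot := position_lt_position_emptyWord (v := w) fun h => hroot (by rwa [h] at hw)
  have huvw := (cyclicallyOrdered_wordPerm_iff g.reverse).2 (cyclicallyOrdered_of_lt huv hvw)
  have hwru := (cyclicallyOrdered_wordPerm_iff g.reverse).2
    (cyclicallyOrdered_of_lt (huv.trans hvw) hwroot).rotate
  rw [hnear] at hu hw hroot ⊢
  by_contra hv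
  exact lt_asymm (huvw.lt_of_abs_sub_lt hu (not_lt.1 hv) hw)
    (hwru.lt_of_abs_sub_lt hw (not_lt.1 hroot) hu)

end Positions

section Descent

variable {a b c : Equiv.Perm (ReducedWord ℕ)} {v : ReducedWord ℕ}

theorem position_apply_mem_Ioo_of_descent (hb : IsReflection b)
    (hav : position (a v).1 < position v.1) (hbav : position (b (a v)).1 < position (a v).1) :
    position (b v).1 ∈ Set.Ioo (position (b (a v)).1) (position (a v).1) := by
  have h := hb.cyclicallyOrdered (cyclicallyOrdered_of_lt hbav hav)
  rw [hb.apply_apply] at h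
  exact h.mem_Ioo hbav

theorem position_conj_apply_mem_Ioo_of_descent (ha : IsReflection a)
    (hav : position (a v).1 < position v.1) (hbav : position (b (a v)).1 < position (a v).1) :
    position (a (b (a v))).1 ∈ Set.Ioo (position (a v).1) (position v.1) := by
  have h := ha.cyclicallyOrdered (cyclicallyOrdered_of_lt hbav hav)
  rw [ha.apply_apply] at h
  exact h.rotate.mem_Ioo hav

theorem IsReflection.ne_of_descent (ha : IsReflection a) (hav : position (a v).1 < position v.1)
    (hbav : position (b (a v)).1 < position (a v).1) : a ≠ b := by
  rintro rfl
  rw [ha.apply_apply] at hbav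
  exact hav.asymm hbav

theorem IsReflection.ne_of_descent_descent (ha : IsReflection a)
    (hav : position (a v).1 < position v.1) (hbav : position (b (a v)).1 < position (a v).1)
    (hcbav : position (c (b (a v))).1 < position (b (a v)).1) : a ≠ c := by
  rintro rfl
  exact ((position_conj_apply_mem_Ioo_of_descent ha hav hbav).1.trans hcbav).asymm hbav

theorem not_shortens_both_of_descent (ha : IsReflection a) (hb : IsReflection b)
    (hc : IsReflection c) (hav : position (a v).1 < position v.1)
    (hbav : position (b (a v)).1 < position (a v).1)
    (hcbav : position (c (b (a v))).1 < position (b (a v)).1) :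
    ¬ (Shortens b a ∧ Shortens b c) := by
  rintro ⟨hba, hbc⟩
  obtain ⟨g, i, hg, rfl⟩ := ha
  obtain ⟨h, j, hh, rfl⟩ := hb
  obtain ⟨k, l, hk, rfl⟩ := hc
  have hga : h ++ [j] <+: g ++ [i] :=
    ((shortens_reflection_iff hh hg).1 hba).trans (List.prefix_append _ _)
  have hkc : h ++ [j] <+: k ++ [l] :=
    ((shortens_reflection_iff hh hk).1 hbc).trans (List.prefix_append _ _)
  have hswap := prefix_reflection_apply_iff hh (reflection g i v)
  by_cases hav' : h ++ [j] <+: (reflection g i v).1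
  · have hbav' : ¬ h ++ [j] <+: (reflection h j (reflection g i v)).1 := by rwa [hswap, not_not]
    have hcbav' := (prefix_reflection_apply_iff hk _).2 fun hp => hbav' (hkc.trans hp)
    exact hbav' (prefix_of_position_lt hh (hkc.trans hcbav') hav' hcbav hbav)
  · have hv : g ++ [i] <+: v.1 := by
      by_contra hv
      exact hav' (hga.trans ((prefix_reflection_apply_iff hg v).2 hv))
    exact hav' (prefix_of_position_lt hh (hswap.2 hav') (hga.trans hv) hbav hav)

end Descent

section BraidGroup

/-- The braid group on `m + 1` strands. -/
abbrev BraidGroup (m : ℕ) := PresentedGroup (braidRels m)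

/-- The `i`-th standard generator of the braid group. -/
abbrev sigma {m : ℕ} (i : Fin m) : BraidGroup m := PresentedGroup.of i

variable {m : ℕ}

theorem commute_sigma {i j : Fin m} (hij : (i : ℕ) + 1 < j) : Commute (sigma i) (sigma j) := by
  have h := PresentedGroup.one_of_mem (rels := braidRels m) (.inl ⟨i, j, hij, rfl⟩)
  simp only [map_mul, map_inv] at h
  exact eq_mul_of_mul_inv_eq (eq_of_mul_inv_eq_one h)

theorem sigma_mul_sigma_mul_sigma {i j : Fin m} (hij : (i : ℕ) + 1 = j) :
    sigma i * sigma j * sigma i = sigma j * sigma i * sigma j := by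
  have h := PresentedGroup.one_of_mem (rels := braidRels m) (.inr ⟨i, j, hij, rfl⟩)
  simp only [map_mul, map_inv] at h
  exact eq_of_mul_inv_eq_one h

theorem sigma_induction {p : BraidGroup m → Prop} (one : p 1)
    (mul_sigma : ∀ x i, p x → p (x * sigma i))
    (mul_sigma_inv : ∀ x i, p x → p (x * (sigma i)⁻¹)) (x : BraidGroup m) : p x := by
  have hx : x ∈ Subgroup.closure (Set.range sigma) :=
    PresentedGroup.closure_range_of (braidRels m) ▸ Subgroup.mem_top x
  induction hx using Subgroup.closure_induction_right with
  | one => exact one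
  | mul_right x _ y hy ih =>
    obtain ⟨i, rfl⟩ := hy
    exact mul_sigma x i ih
  | mul_inv_cancel x _ y hy ih =>
    obtain ⟨i, rfl⟩ := hy
    exact mul_sigma_inv x i ih

variable {G : Type*} [Group G]

/-- The homomorphism from the braid group determined by a sequence satisfying the braid
relations. -/
def braidLift (m : ℕ) (f : ℕ → G) (hcomm : ∀ i j, i + 1 < j → Commute (f i) (f j))
    (hbraid : ∀ i, f i * f (i + 1) * f i = f (i + 1) * f i * f (i + 1)) : BraidGroup m →* G :=
  PresentedGroup.toGroup (f := fun i : Fin m => f i) <| by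
    rintro r (⟨i, j, hij, rfl⟩ | ⟨i, j, hij, rfl⟩)
    · simp only [map_mul, map_inv, FreeGroup.lift_apply_of]
      rw [(hcomm i j hij).eq, mul_inv_cancel_right, mul_inv_cancel]
    · simp only [map_mul, map_inv, FreeGroup.lift_apply_of, ← hij]
      rw [hbraid, mul_inv_cancel]

theorem braidLift_sigma (f : ℕ → G) (hcomm hbraid) (i : Fin m) :
    braidLift m f hcomm hbraid (sigma i) = f i :=
  PresentedGroup.toGroup.of _

end BraidGroup

section Hurwitz

variable {G : Type*} [Group G]

/-- The Hurwitz move at the entries `i` and `i + 1` of a sequence in a group. -/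
def hurwitz (i : ℕ) : Equiv.Perm (ℕ → G) where
  toFun T k :=
    if k = i then T (i + 1) else if k = i + 1 then T (i + 1) * T i * (T (i + 1))⁻¹ else T k
  invFun T k := if k = i then (T i)⁻¹ * T (i + 1) * T i else if k = i + 1 then T i else T k
  left_inv T := by
    ext k
    by_cases hk : k = i
    · simp [hk, mul_assoc]
    · by_cases hk' : k = i + 1 <;> simp [hk, hk']
  right_inv T := by
    ext k
    by_cases hk : k = i
    · simp [hk]
    · by_cases hk' : k = i + 1 <;> simp [hk, hk', mul_assoc]

variable (T : ℕ → G) (i : ℕ)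

theorem hurwitz_apply_self : hurwitz i T i = T (i + 1) := if_pos rfl

theorem hurwitz_apply_succ : hurwitz i T (i + 1) = T (i + 1) * T i * (T (i + 1))⁻¹ := by
  simp [hurwitz]

theorem hurwitz_symm_apply_self : (hurwitz i).symm T i = (T i)⁻¹ * T (i + 1) * T i := if_pos rfl

theorem hurwitz_symm_apply_succ : (hurwitz i).symm T (i + 1) = T i := by simp [hurwitz]

variable {T i} {k : ℕ}

theorem hurwitz_apply_of_ne (hk : k ≠ i) (hk' : k ≠ i + 1) : hurwitz i T k = T k := by
  simp [hurwitz, hk, hk']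

theorem hurwitz_symm_apply_of_ne (hk : k ≠ i) (hk' : k ≠ i + 1) :
    (hurwitz i).symm T k = T k := by
  simp [hurwitz, hk, hk']

theorem commute_hurwitz {j : ℕ} (hij : i + 1 < j) :
    Commute (hurwitz i : Equiv.Perm (ℕ → G)) (hurwitz j) := by
  refine Equiv.ext fun T => funext fun k => ?_
  simp only [Equiv.Perm.mul_apply, hurwitz, Equiv.coe_fn_mk]
  grind

theorem hurwitz_mul_hurwitz_mul_hurwitz (i : ℕ) :
    (hurwitz i * hurwitz (i + 1) * hurwitz i : Equiv.Perm (ℕ → G)) =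
      hurwitz (i + 1) * hurwitz i * hurwitz (i + 1) := by
  refine Equiv.ext fun T => funext fun k => ?_
  have hne : i + 1 + 1 ≠ i := by omega
  simp only [Equiv.Perm.mul_apply]
  rcases eq_or_ne k i with rfl | hi
  · simp [hurwitz, hne, hne.symm]
  rcases eq_or_ne k (i + 1) with rfl | hi'
  · simp [hurwitz, hne, hne.symm]
  rcases eq_or_ne k (i + 1 + 1) with rfl | hi''
  · simp [hurwitz, hne, hne.symm, mul_assoc]
  · simp [hurwitz, hi, hi', hi'']

/-- The right action of the braid group by Hurwitz moves on the sequences in a group. -/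
def hurwitzHom (m : ℕ) (G : Type*) [Group G] : BraidGroup m →* (Equiv.Perm (ℕ → G))ᵐᵒᵖ :=
  braidLift m (fun i => .op (hurwitz i)) (fun _ _ hij => (commute_hurwitz hij).op) fun i =>
    MulOpposite.unop_injective (by
      simp only [MulOpposite.unop_mul, MulOpposite.unop_op, ← mul_assoc,
        hurwitz_mul_hurwitz_mul_hurwitz])

variable {m : ℕ} (T)

/-- The image of the sequence `T` under the right action of the braid `x` by Hurwitz moves. -/
def hurwitzAct (T : ℕ → G) (x : BraidGroup m) : ℕ → G := (hurwitzHom m G x).unop T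

@[simp] theorem hurwitzAct_one : hurwitzAct T (1 : BraidGroup m) = T := by simp [hurwitzAct]

@[simp] theorem hurwitzAct_mul_sigma (x : BraidGroup m) (i : Fin m) :
    hurwitzAct T (x * sigma i) = hurwitz i (hurwitzAct T x) := by
  simp [hurwitzAct, hurwitzHom, braidLift_sigma]

@[simp] theorem hurwitzAct_mul_sigma_inv (x : BraidGroup m) (i : Fin m) :
    hurwitzAct T (x * (sigma i)⁻¹) = (hurwitz i).symm (hurwitzAct T x) := by
  rw [Equiv.eq_symm_apply, ← hurwitzAct_mul_sigma, inv_mul_cancel_right]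

end Hurwitz

section PartialOrbit

variable {α : Type*}

/-- The trajectory of the point `p` under the successive permutations `T 0`, `T 1`, …. -/
def partialOrbit (T : ℕ → Equiv.Perm α) (p : α) : ℕ → α
  | 0 => p
  | k + 1 => T k (partialOrbit T p k)

theorem partialOrbit_hurwitz (T : ℕ → Equiv.Perm α) (p : α) (i : ℕ) :
    partialOrbit (hurwitz i T) p =
      Function.update (partialOrbit T p) (i + 1) (T (i + 1) (partialOrbit T p i)) := by
  ext k
  induction k with
  | zero => rfl
  | succ k ih =>
    rw [partialOrbit, ih]
    rcases eq_or_ne k i with rfl | hi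
    · simp [hurwitz_apply_self]
    rcases eq_or_ne k (i + 1) with rfl | hi'
    · simp [hurwitz_apply_succ, partialOrbit]
    · simp [hurwitz_apply_of_ne hi hi', hi, hi', partialOrbit]

theorem partialOrbit_hurwitz_symm (T : ℕ → Equiv.Perm α) (p : α) (i : ℕ) :
    partialOrbit ((hurwitz i).symm T) p =
      Function.update (partialOrbit T p) (i + 1)
        ((T i)⁻¹ (T (i + 1) (T i (partialOrbit T p i)))) := by
  ext k
  induction k with
  | zero => rfl
  | succ k ih =>
    rw [partialOrbit, ih]
    rcases eq_or_ne k i with rfl | hi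
    · simp [hurwitz_symm_apply_self]
    rcases eq_or_ne k (i + 1) with rfl | hi'
    · simp [hurwitz_symm_apply_succ, partialOrbit]
    · simp [hurwitz_symm_apply_of_ne hi hi', hi, hi', partialOrbit]

end PartialOrbit

section Descending

theorem strictAnti_update_succ {β : Type*} [Preorder β] {f : ℕ → β} (hf : StrictAnti f) {i : ℕ}
    {y : β} (hy : y ∈ Set.Ioo (f (i + 2)) (f i)) : StrictAnti (Function.update f (i + 1) y) := by
  refine strictAnti_nat_of_succ_lt fun k => ?_
  rcases eq_or_ne k i with rfl | hi
  · simpa using hy.2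
  rcases eq_or_ne k (i + 1) with rfl | hi'
  · simpa using hy.1
  · simpa [hi, hi'] using hf k.lt_succ_self

/-- A sequence of reflections under which the trajectory of the root of the Cayley tree moves
strictly downwards on the rational line. -/
structure IsDescending (T : ℕ → Equiv.Perm (ReducedWord ℕ)) : Prop where
  isReflection : ∀ k, IsReflection (T k)
  strictAnti : StrictAnti fun k => position (partialOrbit T emptyWord k).1

theorem coe_partialOrbit_simpleReflection (k : ℕ) :
    (partialOrbit simpleReflection emptyWord k).1 = (List.range k).reverse := by
  induction k with
  | zero => rfl
  | succ k ih =>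
    have hhead : (List.range k).reverse.head? ≠ some k := fun h => by
      simpa using List.mem_of_mem_head? h
    rw [partialOrbit, coe_simpleReflection_apply, ih, consCancel, if_neg hhead, List.range_succ,
      List.reverse_concat']

theorem abs_position_partialOrbit_simpleReflection_sub_pole_lt_one (k : ℕ) :
    |position (partialOrbit simpleReflection emptyWord (k + 1)).1 - pole k| < 1 := by
  rw [abs_position_sub_pole_lt_one_iff, coe_partialOrbit_simpleReflection, List.range_succ,
    List.reverse_concat', List.head?_cons]

theorem isDescending_simpleReflection : IsDescending simpleReflection where
  isReflection := isReflection_simpleReflection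
  strictAnti := by
    have hnear (k) := abs_lt.1 (abs_position_partialOrbit_simpleReflection_sub_pole_lt_one k)
    refine strictAnti_nat_of_succ_lt fun k => (sub_lt_iff_lt_add.1 (hnear k).2).trans ?_
    cases k with
    | zero => norm_num [pole, partialOrbit, emptyWord, position]
    | succ k =>
      have hpole : pole (k + 1) = pole k - 3 := by
        simp only [pole, Nat.cast_succ]
        ring
      linarith [(hnear k).1]

namespace IsDescending

variable {T : ℕ → Equiv.Perm (ReducedWord ℕ)}

theorem position_lt (hT : IsDescending T) (k : ℕ) :
    position (T k (partialOrbit T emptyWord k)).1 < position (partialOrbit T emptyWord k).1 :=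
  hT.strictAnti k.lt_succ_self

theorem hurwitz_apply_succ (hT : IsDescending T) (i : ℕ) :
    hurwitz i T (i + 1) = T (i + 1) * T i * T (i + 1) := by
  rw [Wada.hurwitz_apply_succ, (hT.isReflection _).inv_eq]

theorem hurwitz_symm_apply_self (hT : IsDescending T) (i : ℕ) :
    (hurwitz i).symm T i = T i * T (i + 1) * T i := by
  rw [Wada.hurwitz_symm_apply_self, (hT.isReflection _).inv_eq]

theorem hurwitz (hT : IsDescending T) (i : ℕ) : IsDescending (hurwitz i T) where
  isReflection k := by
    rcases eq_or_ne k i with rfl | hi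
    · rw [hurwitz_apply_self]
      exact hT.isReflection _
    rcases eq_or_ne k (i + 1) with rfl | hi'
    · rw [hT.hurwitz_apply_succ]
      exact (hT.isReflection _).conj (hT.isReflection _)
    · rw [hurwitz_apply_of_ne hi hi']
      exact hT.isReflection k
  strictAnti := by
    have hmem := position_apply_mem_Ioo_of_descent (hT.isReflection (i + 1)) (hT.position_lt i)
      (hT.position_lt (i + 1))
    rw [partialOrbit_hurwitz]
    convert strictAnti_update_succ hT.strictAnti ⟨hmem.1, hmem.2.trans (hT.position_lt i)⟩ using 1
    exact Function.comp_update (fun v : ReducedWord ℕ => position v.1) _ _ _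

theorem hurwitz_symm (hT : IsDescending T) (i : ℕ) : IsDescending ((Wada.hurwitz i).symm T) where
  isReflection k := by
    rcases eq_or_ne k i with rfl | hi
    · rw [hT.hurwitz_symm_apply_self]
      exact (hT.isReflection _).conj (hT.isReflection _)
    rcases eq_or_ne k (i + 1) with rfl | hi'
    · rw [hurwitz_symm_apply_succ]
      exact hT.isReflection _
    · rw [hurwitz_symm_apply_of_ne hi hi']
      exact hT.isReflection k
  strictAnti := by
    have hmem := position_conj_apply_mem_Ioo_of_descent (hT.isReflection i) (hT.position_lt i)
      (hT.position_lt (i + 1))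
    rw [partialOrbit_hurwitz_symm, (hT.isReflection i).inv_eq]
    convert strictAnti_update_succ hT.strictAnti
      ⟨(hT.position_lt (i + 1)).trans hmem.1, hmem.2⟩ using 1
    exact Function.comp_update (fun v : ReducedWord ℕ => position v.1) _ _ _

theorem ne_succ (hT : IsDescending T) (i : ℕ) : T i ≠ T (i + 1) :=
  (hT.isReflection i).ne_of_descent (hT.position_lt i) (hT.position_lt (i + 1))

theorem ne_succ_succ (hT : IsDescending T) (i : ℕ) : T i ≠ T (i + 2) :=
  (hT.isReflection i).ne_of_descent_descent (hT.position_lt i) (hT.position_lt (i + 1))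
    (hT.position_lt (i + 2))

theorem not_shortens_both (hT : IsDescending T) (i : ℕ) :
    ¬ (Shortens (T (i + 1)) (T i) ∧ Shortens (T (i + 1)) (T (i + 2))) :=
  not_shortens_both_of_descent (hT.isReflection i) (hT.isReflection (i + 1))
    (hT.isReflection (i + 2)) (hT.position_lt i) (hT.position_lt (i + 1)) (hT.position_lt (i + 2))

theorem hurwitzAct {m : ℕ} (hT : IsDescending T) (x : BraidGroup m) :
    IsDescending (hurwitzAct T x) := by
  induction x using sigma_induction with
  | one => rwa [hurwitzAct_one]
  | mul_sigma x i hx =>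
    rw [hurwitzAct_mul_sigma]
    exact hx.hurwitz i
  | mul_sigma_inv x i hx =>
    rw [hurwitzAct_mul_sigma_inv]
    exact hx.hurwitz_symm i

end IsDescending

end Descending

section PeakReduction

variable {B : Type*}

/-- Reachability along `adj`-paths all of whose vertices have level less than `m`. -/
def ReachableBelow (adj : B → B → Prop) (lev : B → ℕ) (m : ℕ) : B → B → Prop :=
  Relation.ReflTransGen fun x y => adj x y ∧ lev x < m ∧ lev y < m

/-- A graph with a level function that changes along every edge, in which the two lower
neighbours of every local peak of a path can be joined by a detour below the peak. -/
structure IsPeakReducible (adj : B → B → Prop) (lev : B → ℕ) : Prop where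
  symm : ∀ ⦃x y⦄, adj x y → adj y x
  lev_ne : ∀ ⦃x y⦄, adj x y → lev x ≠ lev y
  detour : ∀ ⦃x y z⦄, adj x y → adj x z → lev y < lev x → lev z < lev x →
    ReachableBelow adj lev (lev x) y z

variable {adj : B → B → Prop} {lev : B → ℕ} {m : ℕ} {x y : B}

theorem ReachableBelow.symm (hadj : ∀ ⦃x y⦄, adj x y → adj y x)
    (h : ReachableBelow adj lev m x y) : ReachableBelow adj lev m y x := by
  induction h with
  | refl => exact .refl
  | tail _ hyz ih => exact .head ⟨hadj hyz.1, hyz.2.2, hyz.2.1⟩ ih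

theorem reachableBelow_of_isChain {l : List B} (hadj : (x :: l).IsChain adj)
    (hlev : ∀ w ∈ x :: l, lev w < m) (hlast : (x :: l).getLast (by simp) = y) :
    ReachableBelow adj lev m x y := by
  subst hlast
  refine List.relationReflTransGen_of_exists_isChain_cons l ?_ rfl
  exact hadj.imp_of_mem_imp fun u v hu hv huv => ⟨huv, hlev _ hu, hlev _ hv⟩

theorem exists_reachableBelow (h : Relation.ReflTransGen adj x y) :
    ∃ m, ReachableBelow adj lev m x y := by
  induction h with
  | refl => exact ⟨0, .refl⟩
  | @tail y z _ hyz ih =>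
    obtain ⟨m, hm⟩ := ih
    refine ⟨max m (max (lev y) (lev z) + 1),
      .tail (Relation.ReflTransGen.mono (fun u v huv => ?_) _ _ hm) ?_⟩
    · exact ⟨huv.1, huv.2.1.trans_le (le_max_left _ _), huv.2.2.trans_le (le_max_left _ _)⟩
    · exact ⟨hyz, by omega, by omega⟩

namespace IsPeakReducible

/-- Since a path bounded by `m` visits level `m` only at isolated peaks, these can be cut off one
after another; the second clause carries the induction past such a peak. -/
theorem reachableBelow_of_succ (h : IsPeakReducible adj lev) (hx : lev x < m)
    (hxy : ReachableBelow adj lev (m + 1) x y) :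
    (lev y < m → ReachableBelow adj lev m x y) ∧
      (lev y = m → ∀ z, adj y z → lev z < m → ReachableBelow adj lev m x z) := by
  induction hxy with
  | refl => exact ⟨fun _ => .refl, fun hxm => absurd hxm hx.ne⟩
  | @tail y z _ hyz ih =>
    obtain ⟨hyz, hy, -⟩ := hyz
    have hne := h.lev_ne hyz
    refine ⟨fun hzm => ?_, fun hzm w hzw hwm => ?_⟩
    · rcases Nat.lt_succ_iff_lt_or_eq.1 hy with hym | hym
      · exact (ih.1 hym).tail ⟨hyz, hym, hzm⟩
      · exact ih.2 hym z hyz hzm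
    · have hym : lev y < m := by omega
      exact (ih.1 hym).trans (hzm ▸ h.detour (h.symm hyz) hzw (hzm ▸ hym) (hzm ▸ hwm))

theorem eq_of_forall_le (h : IsPeakReducible adj lev) (hx : ∀ z, lev x ≤ lev z)
    (hy : ∀ z, lev y ≤ lev z) (hxy : Relation.ReflTransGen adj x y) : x = y := by
  have hlev : lev x = lev y := (hx y).antisymm (hy x)
  obtain ⟨m, hm⟩ := exists_reachableBelow (lev := lev) hxy
  induction m with
  | zero =>
    rcases Relation.ReflTransGen.cases_head hm with rfl | ⟨z, hxz, -⟩
    · rfl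
    · exact absurd hxz.2.1 (Nat.not_lt_zero _)
  | succ m ih =>
    rcases Relation.ReflTransGen.cases_head hm with rfl | ⟨z, ⟨hxz, -, hzm⟩, -⟩
    · rfl
    · have hlt := (hx z).lt_of_ne (h.lev_ne hxz)
      have hxm : lev x < m := by omega
      exact ih ((h.reachableBelow_of_succ hxm hm).1 (hlev ▸ hxm))

end IsPeakReducible

end PeakReduction

section Level

theorem sum_range_add_pair_comm {f f' : ℕ → ℕ} {n i : ℕ} (hi : i + 1 < n)
    (h : ∀ k, k ≠ i → k ≠ i + 1 → f' k = f k) :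
    ∑ k ∈ Finset.range n, f' k + (f i + f (i + 1)) =
      ∑ k ∈ Finset.range n, f k + (f' i + f' (i + 1)) := by
  have hsub : {i, i + 1} ⊆ Finset.range n := by
    simp only [Finset.insert_subset_iff, Finset.singleton_subset_iff, Finset.mem_range]
    omega
  have hoff : ∑ k ∈ Finset.range n \ {i, i + 1}, f' k = ∑ k ∈ Finset.range n \ {i, i + 1}, f k :=
    Finset.sum_congr rfl fun k hk => by
      simp only [Finset.mem_sdiff, Finset.mem_insert, Finset.mem_singleton, not_or] at hk
      exact h k hk.2.1 hk.2.2
  rw [← Finset.sum_sdiff hsub, ← Finset.sum_sdiff hsub (f := f), hoff,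
    Finset.sum_pair i.lt_succ_self.ne, Finset.sum_pair i.lt_succ_self.ne]
  ring

variable {m : ℕ}

/-- The tuple of reflections into which the braid `x` carries the tuple of simple reflections. -/
def braidTuple (x : BraidGroup m) : ℕ → Equiv.Perm (ReducedWord ℕ) :=
  hurwitzAct simpleReflection x

theorem isDescending_braidTuple (x : BraidGroup m) : IsDescending (braidTuple x) :=
  isDescending_simpleReflection.hurwitzAct x

theorem isReflection_braidTuple (x : BraidGroup m) (k : ℕ) : IsReflection (braidTuple x k) :=
  (isDescending_braidTuple x).isReflection k

theorem braidTuple_mul_sigma (x : BraidGroup m) (i : Fin m) :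
    braidTuple (x * sigma i) = hurwitz i (braidTuple x) :=
  hurwitzAct_mul_sigma _ x i

theorem braidTuple_mul_sigma_inv (x : BraidGroup m) (i : Fin m) :
    braidTuple (x * (sigma i)⁻¹) = (hurwitz i).symm (braidTuple x) :=
  hurwitzAct_mul_sigma_inv _ x i

/-- The total length of the first `m + 1` entries of the tuple of a braid on `m + 1` strands. -/
def level (x : BraidGroup m) : ℕ := ∑ k ∈ Finset.range (m + 1), wordLength (braidTuple x k)

theorem level_mul_sigma (x : BraidGroup m) (i : Fin m) :
    level (x * sigma i) + wordLength (braidTuple x i) =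
      level x + wordLength (braidTuple x (i + 1) * braidTuple x i * braidTuple x (i + 1)) := by
  have hsum := sum_range_add_pair_comm (f := fun k => wordLength (braidTuple x k))
    (f' := fun k => wordLength (hurwitz i (braidTuple x) k)) (Nat.add_lt_add_right i.isLt 1)
    fun k hk hk' => by rw [hurwitz_apply_of_ne hk hk']
  simp only [hurwitz_apply_self, (isDescending_braidTuple x).hurwitz_apply_succ] at hsum
  rw [level, level, braidTuple_mul_sigma]
  omega

theorem level_mul_sigma_inv (x : BraidGroup m) (i : Fin m) :
    level (x * (sigma i)⁻¹) + wordLength (braidTuple x (i + 1)) =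
      level x + wordLength (braidTuple x i * braidTuple x (i + 1) * braidTuple x i) := by
  have hsum := sum_range_add_pair_comm (f := fun k => wordLength (braidTuple x k))
    (f' := fun k => wordLength ((hurwitz i).symm (braidTuple x) k))
    (Nat.add_lt_add_right i.isLt 1)
    fun k hk hk' => by rw [hurwitz_symm_apply_of_ne hk hk']
  simp only [hurwitz_symm_apply_succ, (isDescending_braidTuple x).hurwitz_symm_apply_self] at hsum
  rw [level, level, braidTuple_mul_sigma_inv]
  omega

theorem level_mul_sigma_lt_iff (x : BraidGroup m) (i : Fin m) :
    level (x * sigma i) < level x ↔ Shortens (braidTuple x (i + 1)) (braidTuple x i) := by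
  have h := level_mul_sigma x i
  unfold Shortens
  omega

theorem level_mul_sigma_inv_lt_iff (x : BraidGroup m) (i : Fin m) :
    level (x * (sigma i)⁻¹) < level x ↔ Shortens (braidTuple x i) (braidTuple x (i + 1)) := by
  have h := level_mul_sigma_inv x i
  unfold Shortens
  omega

theorem succ_le_level (x : BraidGroup m) : m + 1 ≤ level x := by
  simpa [level] using (Finset.range (m + 1)).card_nsmul_le_sum
    (fun k => wordLength (braidTuple x k)) 1 fun k _ =>
      (isReflection_braidTuple x k).one_le_wordLength

theorem level_eq_of_braidTuple_eq {x : BraidGroup m}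
    (hx : ∀ k ≤ m, braidTuple x k = simpleReflection k) : level x = m + 1 := by
  have hone : ∀ k ∈ Finset.range (m + 1), wordLength (braidTuple x k) = 1 := fun k hk => by
    rw [hx k (Nat.le_of_lt_succ (Finset.mem_range.1 hk)), wordLength_simpleReflection]
  rw [level, Finset.sum_congr rfl hone]
  simp

end Level

section CayleyGraph

variable {m : ℕ}

/-- Adjacency in the Cayley graph of the braid group. -/
def CayleyAdj (x y : BraidGroup m) : Prop := ∃ i, y = x * sigma i ∨ y = x * (sigma i)⁻¹

theorem cayleyAdj_mul_sigma (x : BraidGroup m) (i : Fin m) : CayleyAdj x (x * sigma i) :=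
  ⟨i, .inl rfl⟩

theorem cayleyAdj_mul_sigma_inv (x : BraidGroup m) (i : Fin m) : CayleyAdj x (x * (sigma i)⁻¹) :=
  ⟨i, .inr rfl⟩

theorem CayleyAdj.symm ⦃x y : BraidGroup m⦄ (h : CayleyAdj x y) : CayleyAdj y x := by
  obtain ⟨i, rfl | rfl⟩ := h
  · exact ⟨i, .inr (mul_inv_cancel_right x _).symm⟩
  · exact ⟨i, .inl (inv_mul_cancel_right x _).symm⟩

theorem reflTransGen_cayleyAdj_one (x : BraidGroup m) : Relation.ReflTransGen CayleyAdj 1 x := by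
  induction x using sigma_induction with
  | one => exact .refl
  | mul_sigma x i hx => exact hx.tail (cayleyAdj_mul_sigma x i)
  | mul_sigma_inv x i hx => exact hx.tail (cayleyAdj_mul_sigma_inv x i)

theorem CayleyAdj.level_ne ⦃x y : BraidGroup m⦄ (h : CayleyAdj x y) : level x ≠ level y := by
  obtain ⟨i, rfl | rfl⟩ := h
  · have hne := (isReflection_braidTuple x (i + 1)).wordLength_conj_ne (isReflection_braidTuple x i)
      ((isDescending_braidTuple x).ne_succ i).symm
    have hlev := level_mul_sigma x i
    omega
  · have hne := (isReflection_braidTuple x i).wordLength_conj_ne (isReflection_braidTuple x (i + 1))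
      ((isDescending_braidTuple x).ne_succ i)
    have hlev := level_mul_sigma_inv x i
    omega

end CayleyGraph

section Window

variable {m : ℕ}

/-- The braid `x` has the entries `a`, `b`, `c` at three consecutive places of its tuple, and `K`
is the contribution of all other places to its level. The generators `i` and `j` are the ones
acting inside these places. -/
structure Window (K : ℤ) (i j : Fin m) (a b c : Equiv.Perm (ReducedWord ℕ))
    (x : BraidGroup m) : Prop where
  succ_eq : (i : ℕ) + 1 = j
  left : braidTuple x i = a
  middle : braidTuple x (i + 1) = b
  right : braidTuple x (i + 2) = c
  level_eq : (level x : ℤ) = K + wordLength a + wordLength b + wordLength c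

theorem exists_window (x : BraidGroup m) {i j : Fin m} (hij : (i : ℕ) + 1 = j) :
    ∃ K, Window K i j (braidTuple x i) (braidTuple x (i + 1)) (braidTuple x (i + 2)) x :=
  ⟨level x - wordLength (braidTuple x i) - wordLength (braidTuple x (i + 1)) -
    wordLength (braidTuple x (i + 2)), hij, rfl, rfl, rfl, by ring⟩

namespace Window

variable {K : ℤ} {i j : Fin m} {a b c : Equiv.Perm (ReducedWord ℕ)} {x : BraidGroup m}

theorem isReflection_left (h : Window K i j a b c x) : IsReflection a :=
  h.left ▸ isReflection_braidTuple x i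

theorem isReflection_middle (h : Window K i j a b c x) : IsReflection b :=
  h.middle ▸ isReflection_braidTuple x (i + 1)

theorem isReflection_right (h : Window K i j a b c x) : IsReflection c :=
  h.right ▸ isReflection_braidTuple x (i + 2)

theorem left_ne_right (h : Window K i j a b c x) : a ≠ c := by
  rw [← h.left, ← h.right]
  exact (isDescending_braidTuple x).ne_succ_succ i

theorem mul_sigma_left (h : Window K i j a b c x) :
    Window K i j b (b * a * b) c (x * sigma i) := by
  have hlev := level_mul_sigma x i
  obtain ⟨hij, rfl, rfl, rfl, hx⟩ := h
  refine ⟨hij, ?_, ?_, ?_, by omega⟩ <;> rw [braidTuple_mul_sigma]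
  · exact hurwitz_apply_self _ _
  · exact (isDescending_braidTuple x).hurwitz_apply_succ _
  · exact hurwitz_apply_of_ne (by omega) (by omega)

theorem mul_sigma_inv_left (h : Window K i j a b c x) :
    Window K i j (a * b * a) a c (x * (sigma i)⁻¹) := by
  have hlev := level_mul_sigma_inv x i
  obtain ⟨hij, rfl, rfl, rfl, hx⟩ := h
  refine ⟨hij, ?_, ?_, ?_, by omega⟩ <;> rw [braidTuple_mul_sigma_inv]
  · exact (isDescending_braidTuple x).hurwitz_symm_apply_self _
  · exact hurwitz_symm_apply_succ _ _
  · exact hurwitz_symm_apply_of_ne (by omega) (by omega)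

theorem mul_sigma_right (h : Window K i j a b c x) :
    Window K i j a c (c * b * c) (x * sigma j) := by
  have hlev := level_mul_sigma x j
  obtain ⟨hij, rfl, rfl, rfl, hx⟩ := h
  simp only [← hij, add_assoc, Nat.reduceAdd] at hlev
  refine ⟨hij, ?_, ?_, ?_, by omega⟩ <;> rw [braidTuple_mul_sigma, ← hij]
  · exact hurwitz_apply_of_ne (by omega) (by omega)
  · exact hurwitz_apply_self _ _
  · exact (isDescending_braidTuple x).hurwitz_apply_succ _

theorem mul_sigma_inv_right (h : Window K i j a b c x) :
    Window K i j a (b * c * b) b (x * (sigma j)⁻¹) := by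
  have hlev := level_mul_sigma_inv x j
  obtain ⟨hij, rfl, rfl, rfl, hx⟩ := h
  simp only [← hij, add_assoc, Nat.reduceAdd] at hlev
  refine ⟨hij, ?_, ?_, ?_, by omega⟩ <;> rw [braidTuple_mul_sigma_inv, ← hij]
  · exact hurwitz_symm_apply_of_ne (by omega) (by omega)
  · exact (isDescending_braidTuple x).hurwitz_symm_apply_self _
  · exact hurwitz_symm_apply_succ _ _

theorem braid_eq (h : Window K i j a b c x) :
    x * sigma i * sigma j * sigma i = x * sigma j * sigma i * sigma j := by
  simpa only [mul_assoc] using congrArg (x * ·) (sigma_mul_sigma_mul_sigma h.succ_eq)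

theorem detour_sigma_sigma (h : Window K i j a b c x) (hba : Shortens b a) (hcb : Shortens c b) :
    ReachableBelow CayleyAdj level (level x) (x * sigma i) (x * sigma j) := by
  have hca := hcb.trans h.isReflection_right h.isReflection_middle h.isReflection_left hba
  have hcba := hcb.wordLength_conj_conj_lt h.isReflection_right h.isReflection_middle
    h.isReflection_left hba
  refine reachableBelow_of_isChain (l := [x * sigma i * sigma j, x * sigma i * sigma j * sigma i,
    x * sigma j * sigma i, x * sigma j]) ?_ ?_ rfl
  · simp only [List.isChain_cons_cons, List.isChain_singleton, and_true]
    exact ⟨cayleyAdj_mul_sigma _ j, cayleyAdj_mul_sigma _ i,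
      h.braid_eq ▸ (cayleyAdj_mul_sigma _ j).symm, (cayleyAdj_mul_sigma _ i).symm⟩
  · have h₀ := h.level_eq
    have h₁ := h.mul_sigma_left.level_eq
    have h₂ := h.mul_sigma_left.mul_sigma_right.level_eq
    have h₃ := h.mul_sigma_left.mul_sigma_right.mul_sigma_left.level_eq
    have h₄ := h.mul_sigma_right.mul_sigma_left.level_eq
    have h₅ := h.mul_sigma_right.level_eq
    unfold Shortens at hba hcb hca
    simp only [List.forall_mem_cons, List.not_mem_nil, false_imp_iff, implies_true, and_true]
    omega

theorem detour_sigma_inv_sigma_inv (h : Window K i j a b c x) (hab : Shortens a b)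
    (hbc : Shortens b c) :
    ReachableBelow CayleyAdj level (level x) (x * (sigma i)⁻¹) (x * (sigma j)⁻¹) := by
  have hac := hab.trans h.isReflection_left h.isReflection_middle h.isReflection_right hbc
  have habc := hab.wordLength_conj_conj_lt h.isReflection_left h.isReflection_middle
    h.isReflection_right hbc
  have hbraid : x * (sigma i)⁻¹ * (sigma j)⁻¹ * (sigma i)⁻¹ =
      x * (sigma j)⁻¹ * (sigma i)⁻¹ * (sigma j)⁻¹ := by
    simpa only [mul_assoc, mul_inv_rev] using
      congrArg (x * ·⁻¹) (sigma_mul_sigma_mul_sigma h.succ_eq)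
  refine reachableBelow_of_isChain (l := [x * (sigma i)⁻¹ * (sigma j)⁻¹,
    x * (sigma j)⁻¹ * (sigma i)⁻¹ * (sigma j)⁻¹, x * (sigma j)⁻¹ * (sigma i)⁻¹,
    x * (sigma j)⁻¹]) ?_ ?_ rfl
  · simp only [List.isChain_cons_cons, List.isChain_singleton, and_true]
    exact ⟨cayleyAdj_mul_sigma_inv _ j, hbraid ▸ cayleyAdj_mul_sigma_inv _ i,
      (cayleyAdj_mul_sigma_inv _ j).symm, (cayleyAdj_mul_sigma_inv _ i).symm⟩
  · have h₀ := h.level_eq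
    have h₁ := h.mul_sigma_inv_left.level_eq
    have h₂ := h.mul_sigma_inv_left.mul_sigma_inv_right.level_eq
    have h₃ := h.mul_sigma_inv_right.mul_sigma_inv_left.mul_sigma_inv_right.level_eq
    have h₄ := h.mul_sigma_inv_right.mul_sigma_inv_left.level_eq
    have h₅ := h.mul_sigma_inv_right.level_eq
    unfold Shortens at hab hbc hac
    simp only [List.forall_mem_cons, List.not_mem_nil, false_imp_iff, implies_true, and_true]
    omega

theorem detour_sigma_inv_sigma_of_shortens_left_right (h : Window K i j a b c x)
    (hac : Shortens a c) (hcb : Shortens c b) :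
    ReachableBelow CayleyAdj level (level x) (x * (sigma i)⁻¹) (x * sigma j) := by
  have ha := h.isReflection_left
  have hab := hac.trans ha h.isReflection_right h.isReflection_middle hcb
  have hacb := hac.wordLength_conj_conj_lt ha h.isReflection_right h.isReflection_middle hcb
  have hend : x * (sigma i)⁻¹ * (sigma j)⁻¹ * sigma i * sigma j * sigma i = x * sigma j := by
    rw [mul_assoc _ (sigma i), mul_assoc _ _ (sigma i), sigma_mul_sigma_mul_sigma h.succ_eq]
    group
  refine reachableBelow_of_isChain (l := [x * (sigma i)⁻¹ * (sigma j)⁻¹,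
    x * (sigma i)⁻¹ * (sigma j)⁻¹ * sigma i, x * (sigma i)⁻¹ * (sigma j)⁻¹ * sigma i * sigma j,
    x * sigma j]) ?_ ?_ rfl
  · simp only [List.isChain_cons_cons, List.isChain_singleton, and_true]
    exact ⟨cayleyAdj_mul_sigma_inv _ j, cayleyAdj_mul_sigma _ i, cayleyAdj_mul_sigma _ j,
      hend ▸ cayleyAdj_mul_sigma _ i⟩
  · have h₀ := h.level_eq
    have h₁ := h.mul_sigma_inv_left.level_eq
    have h₂ := h.mul_sigma_inv_left.mul_sigma_inv_right.level_eq
    have h₃ := h.mul_sigma_inv_left.mul_sigma_inv_right.mul_sigma_left.level_eq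
    have h₄ := h.mul_sigma_inv_left.mul_sigma_inv_right.mul_sigma_left.mul_sigma_right.level_eq
    have h₅ := h.mul_sigma_right.level_eq
    simp only [mul_assoc, ha.mul_cancel_left, ha.mul_self, mul_one] at h₃ h₄
    simp only [Shortens, mul_assoc] at hab hcb hac hacb h₁ h₂ h₅
    simp only [List.forall_mem_cons, List.not_mem_nil, false_imp_iff, implies_true, and_true,
      mul_assoc]
    omega

theorem detour_sigma_sigma_inv_of_shortens_right_left (h : Window K i j a b c x)
    (hca : Shortens c a) (hab : Shortens a b) :
    ReachableBelow CayleyAdj level (level x) (x * sigma j) (x * (sigma i)⁻¹) := by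
  have hc := h.isReflection_right
  have hcb := hca.trans hc h.isReflection_left h.isReflection_middle hab
  have hcab := hca.wordLength_conj_conj_lt hc h.isReflection_left h.isReflection_middle hab
  have hend : x * sigma j * sigma i * (sigma j)⁻¹ * (sigma i)⁻¹ * (sigma j)⁻¹ =
      x * (sigma i)⁻¹ := by
    have hbraid : sigma j * sigma i = (sigma i)⁻¹ * (sigma j * sigma i * sigma j) := by
      rw [← sigma_mul_sigma_mul_sigma h.succ_eq]
      group
    rw [mul_assoc x, hbraid]
    group
  refine reachableBelow_of_isChain (l := [x * sigma j * sigma i,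
    x * sigma j * sigma i * (sigma j)⁻¹, x * sigma j * sigma i * (sigma j)⁻¹ * (sigma i)⁻¹,
    x * (sigma i)⁻¹]) ?_ ?_ rfl
  · simp only [List.isChain_cons_cons, List.isChain_singleton, and_true]
    exact ⟨cayleyAdj_mul_sigma _ i, cayleyAdj_mul_sigma_inv _ j, cayleyAdj_mul_sigma_inv _ i,
      hend ▸ cayleyAdj_mul_sigma_inv _ j⟩
  · have h₀ := h.level_eq
    have h₁ := h.mul_sigma_right.level_eq
    have h₂ := h.mul_sigma_right.mul_sigma_left.level_eq
    have h₃ := h.mul_sigma_right.mul_sigma_left.mul_sigma_inv_right.level_eq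
    have h₄ := h.mul_sigma_right.mul_sigma_left.mul_sigma_inv_right.mul_sigma_inv_left.level_eq
    have h₅ := h.mul_sigma_inv_left.level_eq
    simp only [mul_assoc, hc.mul_cancel_left, hc.mul_self, mul_one] at h₃ h₄
    simp only [Shortens, mul_assoc] at hab hcb hca hcab h₁ h₂ h₅
    simp only [List.forall_mem_cons, List.not_mem_nil, false_imp_iff, implies_true, and_true,
      mul_assoc]
    omega

end Window

end Window

section Faithful

variable {m : ℕ} {x s t : BraidGroup m} {i j : Fin m}

theorem braidTuple_mul_of_ne (hs : s = sigma i ∨ s = (sigma i)⁻¹) {k : ℕ} (hk : k ≠ i)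
    (hk' : k ≠ i + 1) : braidTuple (x * s) k = braidTuple x k := by
  rcases hs with rfl | rfl
  · rw [braidTuple_mul_sigma, hurwitz_apply_of_ne hk hk']
  · rw [braidTuple_mul_sigma_inv, hurwitz_symm_apply_of_ne hk hk']

theorem level_mul_mul_lt_of_far (hij : (i : ℕ) + 1 < j) (hs : s = sigma i ∨ s = (sigma i)⁻¹)
    (ht : t = sigma j ∨ t = (sigma j)⁻¹) (hlt : level (x * t) < level x) :
    level (x * s * t) < level (x * s) := by
  have hj : braidTuple (x * s) j = braidTuple x j :=
    braidTuple_mul_of_ne hs (by omega) (by omega)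
  have hj' : braidTuple (x * s) (j + 1) = braidTuple x (j + 1) :=
    braidTuple_mul_of_ne hs (by omega) (by omega)
  rcases ht with rfl | rfl
  · rwa [level_mul_sigma_lt_iff, hj, hj', ← level_mul_sigma_lt_iff]
  · rwa [level_mul_sigma_inv_lt_iff, hj, hj', ← level_mul_sigma_inv_lt_iff]

theorem commute_of_far (hij : (i : ℕ) + 1 < j) (hs : s = sigma i ∨ s = (sigma i)⁻¹)
    (ht : t = sigma j ∨ t = (sigma j)⁻¹) : Commute s t := by
  rcases hs with rfl | rfl <;> rcases ht with rfl | rfl <;>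
    simpa only [Commute.inv_left_iff, Commute.inv_right_iff] using commute_sigma hij

theorem detour_of_far (hij : (i : ℕ) + 1 < j) (hs : s = sigma i ∨ s = (sigma i)⁻¹)
    (ht : t = sigma j ∨ t = (sigma j)⁻¹) (hxs : level (x * s) < level x)
    (hxt : level (x * t) < level x) :
    ReachableBelow CayleyAdj level (level x) (x * s) (x * t) := by
  have hadj : CayleyAdj (x * s) (x * s * t) := ⟨j, ht.imp (congrArg _) (congrArg _)⟩
  have hadj' : CayleyAdj (x * t) (x * t * s) := ⟨i, hs.imp (congrArg _) (congrArg _)⟩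
  have hcomm : x * t * s = x * s * t := by
    rw [mul_assoc, ← (commute_of_far hij hs ht).eq, mul_assoc]
  have hxst := (level_mul_mul_lt_of_far hij hs ht hxt).trans hxs
  exact .head ⟨hadj, hxs, hxst⟩ (.single ⟨(hcomm ▸ hadj').symm, hxst, hxt⟩)

theorem detour_of_succ_eq (hij : (i : ℕ) + 1 = j) (hs : s = sigma i ∨ s = (sigma i)⁻¹)
    (ht : t = sigma j ∨ t = (sigma j)⁻¹) (hxs : level (x * s) < level x)
    (hxt : level (x * t) < level x) :
    ReachableBelow CayleyAdj level (level x) (x * s) (x * t) := by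
  obtain ⟨K, h⟩ := exists_window x hij
  rcases hs with rfl | rfl <;> rcases ht with rfl | rfl <;>
    simp only [level_mul_sigma_lt_iff, level_mul_sigma_inv_lt_iff, ← hij, add_assoc,
      Nat.reduceAdd] at hxs hxt
  · exact h.detour_sigma_sigma hxs hxt
  · exact absurd ⟨hxs, hxt⟩ ((isDescending_braidTuple x).not_shortens_both i)
  · rcases Shortens.total h.isReflection_left h.isReflection_right h.isReflection_middle
      h.left_ne_right hxs hxt with hac | hca
    · exact h.detour_sigma_inv_sigma_of_shortens_left_right hac hxt
    · exact (h.detour_sigma_sigma_inv_of_shortens_right_left hca hxs).symm CayleyAdj.symm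
  · exact h.detour_sigma_inv_sigma_inv hxs hxt

theorem eq_of_level_lt (hs : s = sigma i ∨ s = (sigma i)⁻¹) (ht : t = sigma i ∨ t = (sigma i)⁻¹)
    (hxs : level (x * s) < level x) (hxt : level (x * t) < level x) : s = t := by
  have hasymm : ¬ (level (x * sigma i) < level x ∧ level (x * (sigma i)⁻¹) < level x) := by
    rw [level_mul_sigma_lt_iff, level_mul_sigma_inv_lt_iff]
    exact fun h => h.1.asymm (isReflection_braidTuple x _) (isReflection_braidTuple x _) h.2
  rcases hs with rfl | rfl <;> rcases ht with rfl | rfl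
  · rfl
  · exact absurd ⟨hxs, hxt⟩ hasymm
  · exact absurd ⟨hxt, hxs⟩ hasymm
  · rfl

theorem detour_of_le (hij : i ≤ j) (hs : s = sigma i ∨ s = (sigma i)⁻¹)
    (ht : t = sigma j ∨ t = (sigma j)⁻¹) (hxs : level (x * s) < level x)
    (hxt : level (x * t) < level x) :
    ReachableBelow CayleyAdj level (level x) (x * s) (x * t) := by
  rcases hij.eq_or_lt with rfl | hlt
  · rw [eq_of_level_lt hs ht hxs hxt]
    exact .refl
  · rcases (Nat.succ_le_of_lt hlt).eq_or_lt with hsucc | hfar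
    · exact detour_of_succ_eq hsucc hs ht hxs hxt
    · exact detour_of_far hfar hs ht hxs hxt

theorem isPeakReducible_cayleyAdj : IsPeakReducible (CayleyAdj (m := m)) level where
  symm := CayleyAdj.symm
  lev_ne := CayleyAdj.level_ne
  detour x y z hxy hxz hy hz := by
    obtain ⟨i, hi⟩ := hxy
    obtain ⟨j, hj⟩ := hxz
    obtain ⟨s, rfl⟩ : ∃ s, y = x * s := ⟨_, (mul_inv_cancel_left x y).symm⟩
    obtain ⟨t, rfl⟩ : ∃ t, z = x * t := ⟨_, (mul_inv_cancel_left x z).symm⟩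
    simp only [mul_right_inj] at hi hj
    rcases le_total i j with hij | hji
    · exact detour_of_le hij hi hj hy hz
    · exact (detour_of_le hji hj hi hz hy).symm CayleyAdj.symm

theorem eq_one_of_braidTuple_eq (hx : ∀ k ≤ m, braidTuple x k = simpleReflection k) : x = 1 := by
  have hmin {y : BraidGroup m} (hy : ∀ k ≤ m, braidTuple y k = simpleReflection k) (z) :
      level y ≤ level z := (level_eq_of_braidTuple_eq hy).trans_le (succ_le_level z)
  have hone : ∀ k ≤ m, braidTuple (1 : BraidGroup m) k = simpleReflection k := fun k _ => by
    rw [braidTuple, hurwitzAct_one]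
  exact (isPeakReducible_cayleyAdj.eq_of_forall_le (hmin hone) (hmin hx)
    (reflTransGen_cayleyAdj_one x)).symm

end Faithful

section WadaRepresentation

/-- The automorphism assigned to the `i`-th braid generator by Wada's representation of type
(3). -/
def IsWadaAutomorphism (n : ℕ) (i : Fin (n - 1)) (φ : MulAut (FreeGroup (Fin n))) : Prop :=
  φ (.of (xL n i)) = .of (xL n i) ^ 2 * .of (xR n i) ∧
  φ (.of (xR n i)) = (.of (xR n i))⁻¹ * (.of (xL n i))⁻¹ * .of (xR n i) ∧
  ∀ j, j ≠ xL n i → j ≠ xR n i → φ (.of j) = .of j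

variable {n : ℕ} {G : Type*} [Group G]

/-- The homomorphism from the free group of rank `n` given by the first `n` entries of a
sequence. -/
def evalSeq (n : ℕ) (T : ℕ → G) : FreeGroup (Fin n) →* G := FreeGroup.lift fun k => T k

theorem evalSeq_of (T : ℕ → G) (k : Fin n) : evalSeq n T (.of k) = T k := FreeGroup.lift_apply_of ..

theorem IsWadaAutomorphism.evalSeq_apply {i : Fin (n - 1)} {φ : MulAut (FreeGroup (Fin n))}
    (h : IsWadaAutomorphism n i φ) {T : ℕ → G} (hT : ∀ k, T k * T k = 1)
    (w : FreeGroup (Fin n)) : evalSeq n T (φ w) = evalSeq n (hurwitz i T) w := by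
  have hinv (k) : (T k)⁻¹ = T k := inv_eq_of_mul_eq_one_left (hT k)
  suffices (evalSeq n T).comp φ.toMonoidHom = evalSeq n (hurwitz i T) from DFunLike.congr_fun this w
  ext k
  simp only [MonoidHom.comp_apply, MulEquiv.toMonoidHom_eq_coe, MonoidHom.coe_coe]
  by_cases hL : k = xL n i
  · subst hL
    rw [h.1, map_mul, map_pow, pow_two]
    simp only [evalSeq_of, xL, xR, hurwitz_apply_self, hT, one_mul]
  by_cases hR : k = xR n i
  · subst hR
    rw [h.2.1, map_mul, map_mul, map_inv, map_inv]
    simp only [evalSeq_of, xL, xR, hurwitz_apply_succ, hinv]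
  · have hk : (k : ℕ) ≠ i := fun hk => hL (Fin.ext hk)
    have hk' : (k : ℕ) ≠ i + 1 := fun hk => hR (Fin.ext hk)
    rw [h.2.2 k hL hR, evalSeq_of, evalSeq_of, hurwitz_apply_of_ne hk hk']

theorem evalSeq_simpleReflection_apply {ψ : BraidGroup (n - 1) →* MulAut (FreeGroup (Fin n))}
    (hψ : ∀ i, IsWadaAutomorphism n i (ψ (sigma i))) (x : BraidGroup (n - 1))
    (w : FreeGroup (Fin n)) : evalSeq n simpleReflection (ψ x w) = evalSeq n (braidTuple x) w := by
  have hsq (x : BraidGroup (n - 1)) (k) := (isReflection_braidTuple x k).mul_self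
  induction x using sigma_induction generalizing w with
  | one => rw [map_one, MulAut.one_apply, braidTuple, hurwitzAct_one]
  | mul_sigma x i ih =>
    rw [map_mul, MulAut.mul_apply, ih, (hψ i).evalSeq_apply (hsq x), braidTuple_mul_sigma]
  | mul_sigma_inv x i ih =>
    obtain ⟨v, rfl⟩ := (ψ (sigma i)).surjective w
    rw [← MulAut.mul_apply, ← map_mul, inv_mul_cancel_right, ih, (hψ i).evalSeq_apply (hsq _),
      ← braidTuple_mul_sigma, inv_mul_cancel_right]

end WadaRepresentation

end Wada

/-- **Wada's representation of type (3) is faithful.** For every `n ≥ 2`, any group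
homomorphism `ψ : B_n → Aut(F_n)` sending each braid generator `σ_i` to the
automorphism with `x_i ↦ x_i^2 x_{i+1}`, `x_{i+1} ↦ x_{i+1}⁻¹ x_i⁻¹ x_{i+1}`, fixing
all other free generators, is injective. -/
theorem wada_type3_faithful (n : ℕ) (hn : 2 ≤ n)
    (ψ : PresentedGroup (braidRels (n - 1)) →* MulAut (FreeGroup (Fin n)))
    (hψ : ∀ i : Fin (n - 1),
      (ψ (PresentedGroup.of i)) (FreeGroup.of (xL n i)) =
          FreeGroup.of (xL n i) ^ 2 * FreeGroup.of (xR n i) ∧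
      (ψ (PresentedGroup.of i)) (FreeGroup.of (xR n i)) =
          (FreeGroup.of (xR n i))⁻¹ * (FreeGroup.of (xL n i))⁻¹ * FreeGroup.of (xR n i) ∧
      ∀ j : Fin n, j ≠ xL n i → j ≠ xR n i →
        (ψ (PresentedGroup.of i)) (FreeGroup.of j) = FreeGroup.of j) :
    Function.Injective ψ := by
  rw [injective_iff_map_eq_one]
  refine fun x hx => Wada.eq_one_of_braidTuple_eq fun k hk => ?_
  have heval := Wada.evalSeq_simpleReflection_apply hψ x (.of ⟨k, by omega⟩)
  rw [hx, MulAut.one_apply, Wada.evalSeq_of, Wada.evalSeq_of] at heval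
  exact heval.symm
end
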